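/- arXiv:1512.02670 — 4 statements merged into one kernel-verified Lean document; each statement's English description precedes it below -/
import Mathlib

section
/- There exists an absolute constant c > 0 such that for every finite set A ⊆ ℝ \ {0} with |A| ≥ 2, one has |AA − AA| ≥ c·|A|^(26/17) / (log|A|)^(2/17). -/
open Finset
open scoped Pointwise

/-!
Cutting a grid `X × Y` into equal cells by rank bounds its incidences with lines: a line meets few
cells, and two points in a common cell determine the line. This is used twice.

* For `c ∈ A`, a difference `x = a - b` puts the point `(a / c, b)` on the line of slope `c` and
  intercept `-x`. So popular differences in `A - B` yield rich lines for the grid `(A / A) × B`,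
  which bounds the energies `E₃(A)` and `E(A, A - A)` in terms of `|A / A|`. Together with
  `|A|⁸ ≤ |A - A| E(A, A - A) E₃(A)` this gives `|A|¹⁴ ≪ |A - A|⁵ |A / A|⁶ log² |A|`.
* For each slope `q = u / v ∈ A / A`, the grid `A × A` is covered by `|A - q A| ≤ |AA - AA|` lines
  of slope `q`, hence `|A|² |A / A| ≪ |AA - AA|²`.

As `|A - A| ≤ |AA - AA|`, eliminating `|A / A|` gives `|A|²⁶ ≪ |AA - AA|¹⁷ log² |A|`.
-/

section LinearOrder

variable {α : Type*} [LinearOrder α]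

lemma monotone_card_filter_lt (X : Finset α) : Monotone fun x ↦ #{y ∈ X | y < x} :=
  fun _ _ hxy ↦ card_le_card <| monotone_filter_right X fun _ _ hz ↦ hz.trans_le hxy

lemma strictMonoOn_card_filter_lt (X : Finset α) :
    StrictMonoOn (fun x ↦ #{y ∈ X | y < x}) X := by
  intro x hx y _ hxy
  refine card_lt_card <| ssubset_iff_of_subset
    (monotone_filter_right X fun _ _ hz ↦ hz.trans hxy) |>.2 ⟨x, ?_, ?_⟩
  · exact mem_filter.2 ⟨hx, hxy⟩
  · simp

lemma exists_monotone_card_fiber_le (X : Finset α) {r : ℕ} (hr : 0 < r) :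
    ∃ f : α → ℕ, Monotone f ∧ (∀ x, f x < r) ∧ ∀ i, #{x ∈ X | f x = i} ≤ #X / r + 1 := by
  set s := #X / r + 1
  set rank : α → ℕ := fun x ↦ #{y ∈ X | y < x}
  have hs0 : 0 < s := Nat.succ_pos _
  refine ⟨fun x ↦ rank x / s, fun x y hxy ↦ ?_, fun x ↦ ?_, fun i ↦ ?_⟩
  · exact Nat.div_le_div_right (monotone_card_filter_lt X hxy)
  · rw [Nat.div_lt_iff_lt_mul hs0]
    calc rank x ≤ #X := card_filter_le _ _
      _ < r * s := Nat.lt_mul_div_succ _ hr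
  · calc #{x ∈ X | rank x / s = i} ≤ #(Ico (i * s) (i * s + s)) := by
          refine card_le_card_of_injOn rank (fun x hx ↦ ?_) ?_
          · obtain ⟨_, rfl⟩ := mem_filter.1 (mem_coe.1 hx)
            rw [mem_coe, mem_Ico]
            exact ⟨Nat.div_mul_le_self _ _, Nat.lt_div_mul_add hs0⟩
          · exact (strictMonoOn_card_filter_lt X).injOn.mono (coe_subset.2 (filter_subset _ _))
      _ = s := by simp

variable {f g : α → ℕ} {r s : ℕ}

lemma card_image_prodMk_le_of_monotoneOn {T : Finset α} (hf : MonotoneOn f T)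
    (hg : MonotoneOn g T) (hfr : ∀ x ∈ T, f x < r) (hgs : ∀ x ∈ T, g x ≤ s) :
    #(T.image fun x ↦ (f x, g x)) ≤ r + s := by
  rw [← card_range (r + s)]
  refine card_le_card_of_injOn (fun p ↦ p.1 + p.2) ?_ ?_
  · rintro _ hp
    obtain ⟨x, hx, rfl⟩ := mem_image.1 (mem_coe.1 hp)
    exact mem_coe.2 (mem_range.2 (add_lt_add_of_lt_of_le (hfr x hx) (hgs x hx)))
  · rintro _ hp _ hq hpq
    obtain ⟨x, hx, rfl⟩ := mem_image.1 (mem_coe.1 hp)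
    obtain ⟨y, hy, rfl⟩ := mem_image.1 (mem_coe.1 hq)
    wlog hxy : x ≤ y generalizing x y
    · exact (this y hy hq x hx hp hpq.symm (le_of_not_ge hxy)).symm
    have hf_le := hf hx hy hxy
    have hg_le := hg hx hy hxy
    ext <;> grind

lemma card_image_prodMk_le_of_antitoneOn {T : Finset α} (hf : MonotoneOn f T)
    (hg : AntitoneOn g T) (hfr : ∀ x ∈ T, f x < r) (hgs : ∀ x ∈ T, g x ≤ s) :
    #(T.image fun x ↦ (f x, g x)) ≤ r + s := by
  have hreflect : MonotoneOn (fun x ↦ s - g x) T := fun x hx y hy hxy ↦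
    Nat.sub_le_sub_left (hg hx hy hxy) s
  refine le_trans ?_ <| card_image_prodMk_le_of_monotoneOn hf hreflect hfr fun _ _ ↦ Nat.sub_le _ _
  refine card_le_card_of_injOn (fun p ↦ (p.1, s - p.2)) ?_ ?_
  · rintro _ hp
    obtain ⟨x, hx, rfl⟩ := mem_image.1 (mem_coe.1 hp)
    exact mem_coe.2 (mem_image_of_mem _ hx)
  · rintro _ hp _ hq hpq
    obtain ⟨x, hx, rfl⟩ := mem_image.1 (mem_coe.1 hp)
    obtain ⟨y, hy, rfl⟩ := mem_image.1 (mem_coe.1 hq)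
    have := hgs x hx
    have := hgs y hy
    grind

end LinearOrder

section Fibers

variable {α β : Type*} [DecidableEq β]

lemma card_le_card_image_add_card_offDiag_filter (T : Finset α) (φ : α → β) :
    #T ≤ #(T.image φ) + #{p ∈ T.offDiag | φ p.1 = φ p.2} := by
  classical
  rcases isEmpty_or_nonempty α with _ | _
  · simp [eq_empty_of_isEmpty T]
  set rep : α → α := fun x ↦ Function.invFunOn φ T (φ x)
  have hrep_mem : ∀ x ∈ T, rep x ∈ T := fun x hx ↦ Function.invFunOn_mem ⟨x, hx, rfl⟩
  have hrep_eq : ∀ x ∈ T, φ (rep x) = φ x := fun x hx ↦ Function.invFunOn_eq ⟨x, hx, rfl⟩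
  rw [← card_filter_add_card_filter_not (s := T) (fun x ↦ rep x = x)]
  refine add_le_add (card_le_card_of_injOn φ ?_ ?_)
    (card_le_card_of_injOn (fun x ↦ (x, rep x)) ?_ ?_)
  · grind [Set.MapsTo]
  · grind [Set.InjOn]
  · grind [Set.MapsTo]
  · grind [Set.InjOn]

lemma card_filter_apply_eq_le (T : Finset α) (φ : α → β) {k : ℕ}
    (hk : ∀ i, #{x ∈ T | φ x = i} ≤ k) : #{p ∈ T ×ˢ T | φ p.1 = φ p.2} ≤ #T * k := by
  rw [card_filter, sum_product_right]
  simp_rw [← card_filter]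
  exact sum_le_card_nsmul _ _ _ fun x _ ↦ hk (φ x)

end Fibers

section LineIncidences

section Semiring

variable {R : Type*} [Semiring R] [DecidableEq R]

/-- The incidences of the line `y = l.1 * x + l.2` with the grid `X × Y`, recorded by their
abscissas. Non-vertical lines are encoded as pairs (slope, intercept). -/
def lineInc (X Y : Finset R) (l : R × R) : Finset R :=
  {x ∈ X | l.1 * x + l.2 ∈ Y}

lemma mem_lineInc {X Y : Finset R} {l : R × R} {x : R} :
    x ∈ lineInc X Y l ↔ x ∈ X ∧ l.1 * x + l.2 ∈ Y := by
  simp [lineInc]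

lemma card_lineInc_le_left (X Y : Finset R) (l : R × R) : #(lineInc X Y l) ≤ #X :=
  card_filter_le _ _

end Semiring

section Field

variable {K : Type*} [Field K] [DecidableEq K]

lemma card_lineInc_le_right (X Y : Finset K) {l : K × K} (hl : l.1 ≠ 0) :
    #(lineInc X Y l) ≤ #Y :=
  card_le_card_of_injOn (fun x ↦ l.1 * x + l.2) (fun _ hx ↦ (mem_lineInc.1 hx).2)
    fun _ _ _ _ h ↦ mul_left_cancel₀ hl (add_right_cancel h)

lemma sum_card_lineInc_slope (X Y : Finset K) (q : K) :
    ∑ b ∈ Y - q • X, #(lineInc X Y (q, b)) = #X * #Y := by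
  rw [← card_sigma, ← card_product]
  refine card_nbij' (fun z ↦ (z.2, q * z.2 + z.1)) (fun p ↦ ⟨p.2 - q * p.1, p.1⟩) ?_ ?_ ?_ ?_
  · rintro ⟨b, x⟩ h
    simp only [coe_sigma, Set.mem_sigma_iff, mem_coe, mem_lineInc] at h
    simpa using h.2
  · rintro ⟨x, y⟩ h
    obtain ⟨hx, hy⟩ := mem_product.1 (mem_coe.1 h)
    simp only [coe_sigma, Set.mem_sigma_iff, mem_coe, mem_lineInc, add_sub_cancel]
    exact ⟨sub_mem_sub hy (smul_mem_smul_finset hx), hx, hy⟩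
  · rintro ⟨b, x⟩ -
    simp
  · rintro ⟨x, y⟩ -
    simp

-- Two points with distinct abscissas determine the line through them.
lemma sum_card_offDiag_filter_line_le (X : Finset K) (L : Finset (K × K))
    (S : Finset ((K × K) × K × K)) :
    ∑ l ∈ L, #{p ∈ X.offDiag | ((p.1, l.1 * p.1 + l.2), p.2, l.1 * p.2 + l.2) ∈ S} ≤ #S := by
  rw [← card_sigma]
  refine card_le_card_of_injOn
    (fun z ↦ ((z.2.1, z.1.1 * z.2.1 + z.1.2), z.2.2, z.1.1 * z.2.2 + z.1.2)) ?_ ?_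
  · rintro ⟨l, p⟩ h
    exact (mem_filter.1 (mem_sigma.1 h).2).2
  · rintro ⟨⟨m, b⟩, x, y⟩ h ⟨⟨m', b'⟩, x', y'⟩ - heq
    have hxy : x - y ≠ 0 := sub_ne_zero.2 <| by
      simpa using (mem_offDiag.1 (mem_filter.1 (mem_sigma.1 h).2).1).2.2
    simp only [Prod.mk.injEq] at heq
    obtain ⟨⟨rfl, hx⟩, rfl, hy⟩ := heq
    obtain rfl : m = m' := mul_right_cancel₀ hxy (by linear_combination hx - hy)
    obtain rfl : b = b' := add_left_cancel hx
    rfl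

end Field

variable {K : Type*} [Field K] [LinearOrder K] [IsStrictOrderedRing K]

lemma card_image_cells_lineInc_le (X Y : Finset K) (l : K × K) {f g : K → ℕ} {r s : ℕ}
    (hf : Monotone f) (hg : Monotone g) (hfr : ∀ x, f x < r) (hgs : ∀ y, g y < s) :
    #((lineInc X Y l).image fun x ↦ (f x, g (l.1 * x + l.2))) ≤ r + s := by
  rcases le_total 0 l.1 with hslope | hslope
  · have hline : Monotone fun x ↦ l.1 * x + l.2 := fun x y hxy ↦ by
      dsimp only
      gcongr
    exact card_image_prodMk_le_of_monotoneOn (hf.monotoneOn _) ((hg.comp hline).monotoneOn _)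
      (fun x _ ↦ hfr x) fun x _ ↦ (hgs _).le
  · have hline : Antitone fun x ↦ l.1 * x + l.2 := fun x y hxy ↦ by
      have := mul_le_mul_of_nonpos_left hxy hslope
      dsimp only
      gcongr
    exact card_image_prodMk_le_of_antitoneOn (hf.monotoneOn _)
      ((hg.comp_antitone hline).antitoneOn _) (fun x _ ↦ hfr x) fun x _ ↦ (hgs _).le

-- Cut the grid into `r × r` cells of about equal size: a line meets at most `2 * r` cells, and any
-- further incidence on it shares a cell with another one.
lemma sq_mul_sum_card_lineInc_le (X Y : Finset K) (L : Finset (K × K)) {r : ℕ} (hr : 0 < r)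
    (hX : r ≤ #X) (hY : r ≤ #Y) :
    r ^ 2 * ∑ l ∈ L, #(lineInc X Y l) ≤ 2 * r ^ 3 * #L + 4 * #X ^ 2 * #Y ^ 2 := by
  obtain ⟨f, hf, hfr, hfX⟩ := exists_monotone_card_fiber_le X hr
  obtain ⟨g, hg, hgr, hgY⟩ := exists_monotone_card_fiber_le Y hr
  set cell : K × K → ℕ × ℕ := Prod.map f g
  set S := {p ∈ (X ×ˢ Y) ×ˢ X ×ˢ Y | cell p.1 = cell p.2} with hS
  set P : K × K → Finset (K × K) := fun l ↦
    {p ∈ X.offDiag | ((p.1, l.1 * p.1 + l.2), p.2, l.1 * p.2 + l.2) ∈ S} with hP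
  have hline (l : K × K) : #(lineInc X Y l) ≤ (r + r) + #(P l) := by
    refine (card_le_card_image_add_card_offDiag_filter _ fun x ↦ cell (x, l.1 * x + l.2)).trans ?_
    refine add_le_add (card_image_cells_lineInc_le X Y l hf hg hfr hgr) (card_le_card ?_)
    intro p
    simp only [hP, hS, mem_filter, mem_offDiag, mem_lineInc, mem_product]
    tauto
  have hcell (i : ℕ × ℕ) : #{p ∈ X ×ˢ Y | cell p = i} ≤ (#X / r + 1) * (#Y / r + 1) := by
    simp only [cell, Prod.ext_iff, Prod.map_fst, Prod.map_snd]
    rw [filter_product (fun x ↦ f x = i.1) (fun y ↦ g y = i.2), card_product]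
    exact Nat.mul_le_mul (hfX _) (hgY _)
  have hblock {n : ℕ} (hn : r ≤ n) : r * (n / r + 1) ≤ 2 * n := by
    linarith [Nat.mul_div_le n r]
  calc r ^ 2 * ∑ l ∈ L, #(lineInc X Y l)
      ≤ r ^ 2 * ∑ l ∈ L, ((r + r) + #(P l)) := by gcongr with l; exact hline l
    _ = 2 * r ^ 3 * #L + r ^ 2 * ∑ l ∈ L, #(P l) := by
        rw [sum_add_distrib, sum_const, smul_eq_mul]; ring
    _ ≤ 2 * r ^ 3 * #L + r ^ 2 * (#(X ×ˢ Y) * ((#X / r + 1) * (#Y / r + 1))) := by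
        gcongr
        exact (sum_card_offDiag_filter_line_le X L S).trans (card_filter_apply_eq_le _ _ hcell)
    _ = 2 * r ^ 3 * #L + #X * #Y * (r * (#X / r + 1)) * (r * (#Y / r + 1)) := by
        rw [card_product]; ring
    _ ≤ 2 * r ^ 3 * #L + #X * #Y * (2 * #X) * (2 * #Y) := by
        gcongr _ + _ * ?_ * ?_
        exacts [hblock hX, hblock hY]
    _ = 2 * r ^ 3 * #L + 4 * #X ^ 2 * #Y ^ 2 := by ring

lemma card_mul_pow_three_le_of_forall_le_card_lineInc {X Y : Finset K} {L : Finset (K × K)} {t : ℕ}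
    (ht : 4 ≤ t) (hslope : ∀ l ∈ L, l.1 ≠ 0) (hrich : ∀ l ∈ L, t ≤ #(lineInc X Y l)) :
    #L * t ^ 3 ≤ 512 * #X ^ 2 * #Y ^ 2 := by
  rcases L.eq_empty_or_nonempty with rfl | ⟨l₀, hl₀⟩
  · simp
  obtain ⟨r, hr, hrt, htr⟩ : ∃ r, 0 < r ∧ 4 * r ≤ t ∧ t ≤ 8 * r := ⟨t / 4, by lia⟩
  have htX : t ≤ #X := (hrich l₀ hl₀).trans (card_lineInc_le_left _ _ _)
  have htY : t ≤ #Y := (hrich l₀ hl₀).trans (card_lineInc_le_right _ _ (hslope l₀ hl₀))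
  have hsum : #L * t ≤ ∑ l ∈ L, #(lineInc X Y l) := card_nsmul_le_sum _ _ _ hrich
  have hinc := sq_mul_sum_card_lineInc_le X Y L hr (by lia) (by lia)
  have hrsq : r ^ 2 * (#L * t) ≤ 8 * #X ^ 2 * #Y ^ 2 := by
    have := Nat.mul_le_mul_left (r ^ 2) hsum
    have := Nat.mul_le_mul_right (r ^ 2 * #L) hrt
    linarith
  calc #L * t ^ 3 = t ^ 2 * (#L * t) := by ring
    _ ≤ (8 * r) ^ 2 * (#L * t) := by gcongr
    _ = 64 * (r ^ 2 * (#L * t)) := by ring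
    _ ≤ 64 * (8 * #X ^ 2 * #Y ^ 2) := by gcongr
    _ = 512 * #X ^ 2 * #Y ^ 2 := by ring

lemma sq_mul_card_slopes_mul_le {X Y Q : Finset K} {M r : ℕ} (hr : 0 < r) (hX : r ≤ #X)
    (hY : r ≤ #Y) (hM : ∀ q ∈ Q, #(Y - q • X) ≤ M) :
    r ^ 2 * (#Q * (#X * #Y)) ≤ 2 * r ^ 3 * (#Q * M) + 4 * #X ^ 2 * #Y ^ 2 := by
  set L : Finset (K × K) := Q.biUnion fun q ↦ (Y - q • X).image (Prod.mk q)
  have hL (l : K × K) : l ∈ L ↔ l.1 ∈ Q ∧ l.2 ∈ Y - l.1 • X := by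
    simp only [L, mem_biUnion, mem_image]
    grind
  have hcard : #L ≤ #Q * M := by
    rw [card_eq_sum_ones, sum_finset_product L Q (fun q ↦ Y - q • X) hL]
    simpa using sum_le_card_nsmul Q _ M hM
  have hsum : ∑ l ∈ L, #(lineInc X Y l) = #Q * (#X * #Y) := by
    simp [sum_finset_product L Q (fun q ↦ Y - q • X) hL, sum_card_lineInc_slope]
  calc r ^ 2 * (#Q * (#X * #Y)) = r ^ 2 * ∑ l ∈ L, #(lineInc X Y l) := by rw [hsum]
    _ ≤ 2 * r ^ 3 * #L + 4 * #X ^ 2 * #Y ^ 2 := sq_mul_sum_card_lineInc_le X Y L hr hX hY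
    _ ≤ 2 * r ^ 3 * (#Q * M) + 4 * #X ^ 2 * #Y ^ 2 := by gcongr

-- `r ≈ n / M` makes the two terms on the right of `hinc` comparable to the left-hand side.
lemma mul_le_of_sq_mul_le {k n M r : ℕ} (hn : 0 < n) (hrn : 4 * M * r ≤ n) (hnr : n ≤ 8 * M * r)
    (hinc : r ^ 2 * (k * n) ≤ 2 * r ^ 3 * (k * M) + 4 * n ^ 2) : k * n ≤ 512 * M ^ 2 := by
  have hrsq : r ^ 2 * k ≤ 8 * n := by
    refine le_of_mul_le_mul_right ?_ hn
    linarith [Nat.mul_le_mul_left (r ^ 2 * k) hrn]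
  refine le_of_mul_le_mul_left ?_ hn
  calc n * (k * n) = n * n * k := by ring
    _ ≤ (8 * M * r) * (8 * M * r) * k := by gcongr
    _ = 64 * M ^ 2 * (r ^ 2 * k) := by ring
    _ ≤ 64 * M ^ 2 * (8 * n) := by gcongr
    _ = n * (512 * M ^ 2) := by ring

lemma card_slopes_mul_le {X Y Q : Finset K} {M : ℕ} (h0 : 0 ∉ Q)
    (hM : ∀ q ∈ Q, #(Y - q • X) ≤ M) (hQ : #Q ≤ #X * #Y) :
    #Q * (#X * #Y) ≤ 512 * M ^ 2 := by
  rcases Q.eq_empty_or_nonempty with rfl | ⟨q, hq⟩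
  · simp
  rcases X.eq_empty_or_nonempty with rfl | hX
  · simp
  rcases Y.eq_empty_or_nonempty with rfl | hY
  · simp
  have hXM : #X ≤ M := by
    rw [← card_smul_finset₀ (ne_of_mem_of_not_mem hq h0) X]
    exact (card_le_card_sub_left hY).trans (hM q hq)
  have hYM : #Y ≤ M := (card_le_card_sub_right hX.smul_finset).trans (hM q hq)
  have hXpos := hX.card_pos
  have hYpos := hY.card_pos
  rcases le_or_gt (4 * M) (#X * #Y) with hsmall | hlarge
  · have hM4 : 0 < 4 * M := by lia
    obtain ⟨r, hr, hrn, hnr⟩ :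
        ∃ r, 0 < r ∧ 4 * M * r ≤ #X * #Y ∧ #X * #Y < 4 * M * (r + 1) :=
      ⟨#X * #Y / (4 * M), Nat.div_pos hsmall hM4, Nat.mul_div_le _ _, Nat.lt_mul_div_succ _ hM4⟩
    refine mul_le_of_sq_mul_le (mul_pos hXpos hYpos) hrn (by nlinarith) ?_
    rw [mul_pow, ← mul_assoc 4]
    exact sq_mul_card_slopes_mul_le hr (by nlinarith) (by nlinarith) hM
  · nlinarith

end LineIncidences

lemma sum_pow_three_le_card_mul_sum_mul_sum {ι : Type*} (s : Finset ι) {x f g : ι → ℝ}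
    (hx : ∀ i ∈ s, 0 ≤ x i) (hf : ∀ i ∈ s, 0 ≤ f i) (hg : ∀ i ∈ s, 0 ≤ g i)
    (hxfg : ∀ i ∈ s, x i ^ 3 ≤ f i * g i) :
    (∑ i ∈ s, x i) ^ 3 ≤ #s * (∑ i ∈ s, f i) * ∑ i ∈ s, g i := by
  have hsq {y : ℝ} (hy : 0 ≤ y) : (y ^ (3 / 2 : ℝ)) ^ 2 = y ^ 3 := by
    rw [← Real.rpow_mul_natCast hy, ← Real.rpow_natCast]; norm_num
  have hsqrt : ((#s : ℝ) ^ (3 / 2 - 1 : ℝ)) ^ 2 = #s := by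
    rw [← Real.rpow_mul_natCast (Nat.cast_nonneg _)]; norm_num
  have hmean : (∑ i ∈ s, x i) ^ (3 / 2 : ℝ) ≤
      (#s : ℝ) ^ (3 / 2 - 1 : ℝ) * ∑ i ∈ s, x i ^ (3 / 2 : ℝ) :=
    Real.rpow_sum_le_const_mul_sum_rpow_of_nonneg s (by norm_num) hx
  have hcauchy : (∑ i ∈ s, x i ^ (3 / 2 : ℝ)) ^ 2 ≤ (∑ i ∈ s, f i) * ∑ i ∈ s, g i :=
    sum_sq_le_sum_mul_sum_of_sq_le_mul s hf hg fun i hi ↦ (hsq (hx i hi)).trans_le (hxfg i hi)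
  have hsum0 := sum_nonneg hx
  calc (∑ i ∈ s, x i) ^ 3 = ((∑ i ∈ s, x i) ^ (3 / 2 : ℝ)) ^ 2 := (hsq hsum0).symm
    _ ≤ ((#s : ℝ) ^ (3 / 2 - 1 : ℝ) * ∑ i ∈ s, x i ^ (3 / 2 : ℝ)) ^ 2 := by gcongr
    _ = #s * (∑ i ∈ s, x i ^ (3 / 2 : ℝ)) ^ 2 := by rw [mul_pow, hsqrt]
    _ ≤ #s * ((∑ i ∈ s, f i) * ∑ i ∈ s, g i) := by gcongr
    _ = #s * (∑ i ∈ s, f i) * ∑ i ∈ s, g i := (mul_assoc _ _ _).symm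

section DifferenceEnergy

variable {G : Type*} [AddCommGroup G] [DecidableEq G]

/-- The representations `x = a - b` with `a ∈ A` and `b ∈ B`, recorded by `b`. For `B = A` this is
the set `A ∩ (A - x)`, often written `Aₓ`. -/
def diffReps (A B : Finset G) (x : G) : Finset G := {b ∈ B | x + b ∈ A}

/-- The energy `E_k(A, B)`: the sum over `x ∈ A - B` of the `k`-th power of the number of
representations of `x` as a difference. -/
def diffEnergy (k : ℕ) (A B : Finset G) : ℕ := ∑ x ∈ A - B, #(diffReps A B x) ^ k

lemma mem_diffReps {A B : Finset G} {x b : G} : b ∈ diffReps A B x ↔ b ∈ B ∧ x + b ∈ A := by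
  simp [diffReps]

lemma sum_card_diffReps (A B : Finset G) : ∑ x ∈ A - B, #(diffReps A B x) = #A * #B := by
  rw [← card_sigma, ← card_product]
  refine card_nbij' (fun z ↦ (z.1 + z.2, z.2)) (fun p ↦ ⟨p.1 - p.2, p.2⟩) ?_ ?_ ?_ ?_
  · rintro ⟨x, b⟩ h
    simp only [coe_sigma, Set.mem_sigma_iff, mem_coe, mem_diffReps] at h
    exact mem_product.2 h.2.symm
  · rintro ⟨a, b⟩ h
    obtain ⟨ha, hb⟩ := mem_product.1 (mem_coe.1 h)
    simp only [coe_sigma, Set.mem_sigma_iff, mem_coe, mem_diffReps, sub_add_cancel]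
    exact ⟨sub_mem_sub ha hb, hb, ha⟩
  · rintro ⟨x, b⟩ -
    simp
  · rintro ⟨a, b⟩ -
    simp

lemma addEnergy_neg_right (s t : Finset G) : addEnergy s (-t) = addEnergy s t := by
  refine card_nbij' (fun x ↦ (x.1, -x.2.2, -x.2.1)) (fun x ↦ (x.1, -x.2.2, -x.2.1)) ?_ ?_ ?_ ?_
  · rintro ⟨⟨a₁, a₂⟩, b₁, b₂⟩ h
    simp only [coe_filter, Set.mem_ofPred_eq, mem_product, mem_neg'] at h ⊢
    rw [← sub_eq_add_neg, ← sub_eq_add_neg, sub_eq_sub_iff_add_eq_add]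
    tauto
  · rintro ⟨⟨a₁, a₂⟩, b₁, b₂⟩ h
    simp only [coe_filter, Set.mem_ofPred_eq, mem_product, mem_neg', neg_neg] at h ⊢
    rw [← sub_eq_add_neg, ← sub_eq_add_neg, sub_eq_sub_iff_add_eq_add]
    tauto
  · rintro x -
    simp
  · rintro x -
    simp

lemma card_sq_mul_card_sq_le_card_sub_mul_addEnergy (s t : Finset G) :
    #s ^ 2 * #t ^ 2 ≤ #(s - t) * addEnergy s t := by
  simpa only [card_neg, addEnergy_neg_right, sub_eq_add_neg] using le_card_add_mul_addEnergy s (-t)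

-- `b + a' = b' + a` with `b, b' ∈ Aₛ` means that `b'`, `s + b'` and `a'` all lie in `A_{b - b'}`.
lemma sum_addEnergy_diffReps_le (A : Finset G) :
    ∑ s ∈ A - A, addEnergy (diffReps A A s) A ≤ diffEnergy 3 A A := by
  have hcube (x : G) : #(diffReps A A x) ^ 3 =
      #(diffReps A A x ×ˢ diffReps A A x ×ˢ diffReps A A x) := by
    rw [card_product, card_product]; ring
  simp only [diffEnergy, addEnergy, hcube]
  rw [← card_sigma, ← card_sigma]
  refine card_le_card_of_injOn (fun w ↦ ⟨w.2.1.1 - w.2.1.2, w.2.1.2, w.1 + w.2.1.2, w.2.2.1⟩) ?_ ?_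
  · rintro ⟨s, ⟨b, b'⟩, a', a⟩ hw
    simp only [coe_sigma, Set.mem_sigma_iff, mem_coe, mem_product, mem_filter,
      mem_diffReps] at hw ⊢
    obtain ⟨-, ⟨⟨⟨hb, hsb⟩, hb', hsb'⟩, ha', ha⟩, heq⟩ := hw
    have hsb_eq : b - b' + (s + b') = s + b := by abel
    have ha_eq : b - b' + a' = a := by rw [sub_add_eq_add_sub, heq, add_sub_cancel_left]
    rw [sub_add_cancel, hsb_eq, ha_eq]
    exact ⟨sub_mem_sub hb hb', ⟨hb', hb⟩, ⟨hsb', hsb⟩, ha', ha⟩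
  · rintro ⟨s, ⟨b, b'⟩, a', a⟩ hw ⟨s₂, ⟨b₂, b₂'⟩, a₂', a₂⟩ hw₂ h
    simp only [coe_sigma, Set.mem_sigma_iff, mem_coe, mem_filter] at hw hw₂
    simp only [Sigma.mk.injEq, heq_eq_eq, Prod.mk.injEq] at h
    obtain ⟨hdiff, rfl, hs, rfl⟩ := h
    obtain rfl := sub_left_injective hdiff
    obtain rfl := add_right_cancel hs
    obtain rfl := add_left_cancel (hw.2.2.symm.trans hw₂.2.2)
    rfl

-- For `b ∈ Aₛ` and `d ∈ Aₛ - A`, both `d` and `s + d` lie in `A - A`, and they represent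
-- `b - d = (s + b) - (s + d)`.
lemma sum_card_diffReps_mul_card_sub_le (A : Finset G) :
    ∑ s ∈ A - A, #(diffReps A A s) * #(diffReps A A s - A) ≤ diffEnergy 2 A (A - A) := by
  simp only [diffEnergy, sq, ← card_product]
  rw [← card_sigma, ← card_sigma]
  refine card_le_card_of_injOn (fun w ↦ ⟨w.2.1 - w.2.2, w.2.2, w.1 + w.2.2⟩) ?_ ?_
  · rintro ⟨s, b, d⟩ hw
    simp only [coe_sigma, Set.mem_sigma_iff, mem_coe, mem_product, mem_diffReps] at hw ⊢
    obtain ⟨-, ⟨hb, hsb⟩, hd⟩ := hw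
    obtain ⟨c, hc, a, ha, rfl⟩ := mem_sub.1 hd
    obtain ⟨hc, hsc⟩ := mem_diffReps.1 hc
    have hsb_eq : b - (c - a) + (s + (c - a)) = s + b := by abel
    rw [sub_add_cancel, hsb_eq, ← add_sub_assoc]
    have hca := sub_mem_sub hc ha
    exact ⟨sub_mem_sub hb hca, ⟨hca, hb⟩, sub_mem_sub hsc ha, hsb⟩
  · rintro ⟨s, b, d⟩ - ⟨s', b', d'⟩ - h
    simp only [Sigma.mk.injEq, heq_eq_eq, Prod.mk.injEq] at h
    obtain ⟨hdiff, rfl, hs⟩ := h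
    obtain rfl := sub_left_injective hdiff
    obtain rfl := add_right_cancel hs
    rfl

lemma card_pow_eight_le_card_sub_mul_diffEnergy_mul_diffEnergy (A : Finset G) :
    #A ^ 8 ≤ #(A - A) * diffEnergy 2 A (A - A) * diffEnergy 3 A A := by
  rcases A.eq_empty_or_nonempty with rfl | hA
  · simp
  have hA2 : (0 : ℝ) < (#A : ℝ) ^ 2 := by have := hA.card_pos; positivity
  have hcauchy (s : G) : (#(diffReps A A s) : ℝ) ^ 3 ≤
      (#(diffReps A A s) * #(diffReps A A s - A) : ℕ) *
        (addEnergy (diffReps A A s) A / (#A : ℝ) ^ 2) := by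
    rw [← mul_div_assoc, le_div_iff₀ hA2]
    have := card_sq_mul_card_sq_le_card_sub_mul_addEnergy (diffReps A A s) A
    calc (#(diffReps A A s) : ℝ) ^ 3 * #A ^ 2
        = #(diffReps A A s) * (#(diffReps A A s) ^ 2 * #A ^ 2 : ℕ) := by push_cast; ring
      _ ≤ #(diffReps A A s) * (#(diffReps A A s - A) * addEnergy (diffReps A A s) A : ℕ) := by
          gcongr
      _ = _ := by push_cast; ring
  have hholder := sum_pow_three_le_card_mul_sum_mul_sum (A - A)
    (fun s _ ↦ Nat.cast_nonneg _) (fun s _ ↦ Nat.cast_nonneg _) (fun s _ ↦ by positivity)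
    fun s _ ↦ hcauchy s
  rw [← sum_div, ← mul_div_assoc, le_div_iff₀ hA2] at hholder
  norm_cast at hholder
  rw [sum_card_diffReps] at hholder
  calc #A ^ 8 = (#A * #A) ^ 3 * #A ^ 2 := by ring
    _ ≤ _ := hholder
    _ ≤ #(A - A) * diffEnergy 2 A (A - A) * diffEnergy 3 A A := by
      gcongr
      · exact sum_card_diffReps_mul_card_sub_le A
      · exact sum_addEnergy_diffReps_le A

end DifferenceEnergy

section LayerCake

lemma add_one_pow_succ_le (m k : ℕ) : (m + 1) ^ (k + 1) ≤ m ^ (k + 1) + (k + 1) * (m + 1) ^ k := by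
  induction k with
  | zero => simp
  | succ k ih =>
    calc (m + 1) ^ (k + 1 + 1) = m * (m + 1) ^ (k + 1) + (m + 1) ^ (k + 1) := by ring
      _ ≤ m * (m ^ (k + 1) + (k + 1) * (m + 1) ^ k) + (m + 1) ^ (k + 1) := by gcongr
      _ = m ^ (k + 1 + 1) + (k + 1) * (m * (m + 1) ^ k) + (m + 1) ^ (k + 1) := by ring
      _ ≤ m ^ (k + 1 + 1) + (k + 1) * ((m + 1) * (m + 1) ^ k) + (m + 1) ^ (k + 1) := by
        gcongr
        exact Nat.le_succ m
      _ = _ := by ring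

lemma pow_succ_le_sum_Icc (m k : ℕ) : m ^ (k + 1) ≤ ∑ t ∈ Icc 1 m, (k + 1) * t ^ k := by
  induction m with
  | zero => simp
  | succ m ih =>
    rw [sum_Icc_succ_top (by lia)]
    exact (add_one_pow_succ_le m k).trans (by gcongr)

variable {ι : Type*} {T : Finset ι} {r : ι → ℕ} {n : ℕ}

lemma sum_pow_succ_le_sum_card_filter_le (hn : ∀ x ∈ T, r x ≤ n) (k : ℕ) :
    ∑ x ∈ T, r x ^ (k + 1) ≤ ∑ t ∈ Icc 1 n, #{x ∈ T | t ≤ r x} * ((k + 1) * t ^ k) := by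
  calc ∑ x ∈ T, r x ^ (k + 1)
      ≤ ∑ x ∈ T, ∑ t ∈ Icc 1 n, if t ≤ r x then (k + 1) * t ^ k else 0 := by
        refine sum_le_sum fun x hx ↦ (pow_succ_le_sum_Icc (r x) k).trans_eq ?_
        rw [← sum_filter]
        refine sum_congr ?_ fun _ _ ↦ rfl
        ext t
        have := hn x hx
        simp only [mem_Icc, mem_filter]
        lia
    _ = ∑ t ∈ Icc 1 n, #{x ∈ T | t ≤ r x} * ((k + 1) * t ^ k) := by
        rw [sum_comm]
        simp only [← sum_filter, sum_const, smul_eq_mul]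

lemma card_filter_le_mul_le_sum (T : Finset ι) (r : ι → ℕ) (t : ℕ) :
    #{x ∈ T | t ≤ r x} * t ≤ ∑ x ∈ T, r x :=
  (card_nsmul_le_sum _ _ _ fun _ hx ↦ (mem_filter.1 hx).2).trans
    (sum_le_sum_of_subset (filter_subset _ _))

variable {K : ℝ}

lemma sum_pow_three_le_of_card_filter_le (hn : ∀ x ∈ T, r x ≤ n)
    (hK : ∀ t : ℕ, (#{x ∈ T | t ≤ r x} : ℝ) * t ^ 3 ≤ K) :
    ∑ x ∈ T, (r x : ℝ) ^ 3 ≤ 3 * K * (1 + Real.log n) := by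
  have hK0 : 0 ≤ K := by simpa using hK 0
  have hlayer : ∑ x ∈ T, (r x : ℝ) ^ 3 ≤
      ∑ t ∈ Icc 1 n, (#{x ∈ T | t ≤ r x} : ℝ) * ((2 + 1) * (t : ℝ) ^ 2) := by
    exact_mod_cast sum_pow_succ_le_sum_card_filter_le hn 2
  calc ∑ x ∈ T, (r x : ℝ) ^ 3
      ≤ ∑ t ∈ Icc 1 n, (#{x ∈ T | t ≤ r x} : ℝ) * ((2 + 1) * (t : ℝ) ^ 2) := hlayer
    _ ≤ ∑ t ∈ Icc 1 n, 3 * K * (t : ℝ)⁻¹ := by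
        refine sum_le_sum fun t ht ↦ ?_
        have ht0 : (0 : ℝ) < t := Nat.cast_pos.2 (mem_Icc.1 ht).1
        rw [← div_eq_mul_inv, le_div_iff₀ ht0]
        linarith [hK t]
    _ = 3 * K * (harmonic n : ℚ) := by
        rw [← mul_sum, harmonic_eq_sum_Icc]
        push_cast
        rfl
    _ ≤ 3 * K * (1 + Real.log n) := by
        gcongr
        exact harmonic_le_one_add_log n

lemma sum_sq_le_of_card_filter_le {d : ℕ} (hd : 0 < d)
    (hK : ∀ t : ℕ, (#{x ∈ T | t ≤ r x} : ℝ) * t ^ 3 ≤ K) :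
    ∑ x ∈ T, (r x : ℝ) ^ 2 ≤ 2 * (∑ x ∈ T, (r x : ℝ)) * d + 2 * K / d := by
  set N := ∑ x ∈ T, (r x : ℝ) with hN
  set n := T.sup r ⊔ d
  have hK0 : 0 ≤ K := by simpa using hK 0
  have hn : ∀ x ∈ T, r x ≤ n := fun x hx ↦ (le_sup hx).trans le_sup_left
  have hlayer : ∑ x ∈ T, (r x : ℝ) ^ 2 ≤
      ∑ t ∈ Icc 1 n, (#{x ∈ T | t ≤ r x} : ℝ) * ((1 + 1) * (t : ℝ) ^ 1) := by
    exact_mod_cast sum_pow_succ_le_sum_card_filter_le hn 1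
  have hlow (t : ℕ) : (#{x ∈ T | t ≤ r x} : ℝ) * ((1 + 1) * (t : ℝ) ^ 1) ≤ 2 * N := by
    have hmarkov : (#{x ∈ T | t ≤ r x} : ℝ) * t ≤ N := by
      rw [hN, ← Nat.cast_sum]
      exact_mod_cast card_filter_le_mul_le_sum T r t
    linarith
  have hhigh {t : ℕ} (ht : 0 < t) :
      (#{x ∈ T | t ≤ r x} : ℝ) * ((1 + 1) * (t : ℝ) ^ 1) ≤ 2 * K * ((t : ℝ) ^ 2)⁻¹ := by
    rw [← div_eq_mul_inv, le_div_iff₀ (by positivity)]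
    linarith [hK t]
  calc ∑ x ∈ T, (r x : ℝ) ^ 2
      ≤ ∑ t ∈ Ioc 0 n, (#{x ∈ T | t ≤ r x} : ℝ) * ((1 + 1) * (t : ℝ) ^ 1) := hlayer
    _ ≤ ∑ t ∈ Ioc 0 d, 2 * N + ∑ t ∈ Ioc d n, 2 * K * ((t : ℝ) ^ 2)⁻¹ := by
        rw [← sum_Ioc_consecutive _ (Nat.zero_le d) le_sup_right]
        exact add_le_add (sum_le_sum fun t _ ↦ hlow t)
          (sum_le_sum fun t ht ↦ hhigh (hd.trans (mem_Ioc.1 ht).1))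
    _ ≤ 2 * N * d + 2 * K * ((d : ℝ)⁻¹ - (n : ℝ)⁻¹) := by
        rw [sum_const, Nat.card_Ioc, Nat.sub_zero, nsmul_eq_mul, mul_comm (d : ℝ), ← mul_sum]
        gcongr _ + _ * ?_
        exact sum_Ioc_inv_sq_le_sub hd.ne' le_sup_right
    _ ≤ 2 * N * d + 2 * K / d := by
        rw [div_eq_mul_inv]
        gcongr
        exact sub_le_self _ (by positivity)

lemma sq_sum_sq_le_of_card_filter_le (hN : 0 < ∑ x ∈ T, (r x : ℝ)) (hNK : ∑ x ∈ T, (r x : ℝ) ≤ K)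
    (hK : ∀ t : ℕ, (#{x ∈ T | t ≤ r x} : ℝ) * t ^ 3 ≤ K) :
    (∑ x ∈ T, (r x : ℝ) ^ 2) ^ 2 ≤ 36 * K * ∑ x ∈ T, (r x : ℝ) := by
  set N := ∑ x ∈ T, (r x : ℝ)
  set δ := √(K / N)
  have hδ : 1 ≤ δ := Real.one_le_sqrt.2 ((one_le_div hN).2 hNK)
  have hδK : K = N * δ ^ 2 := by
    rw [Real.sq_sqrt (div_nonneg (hN.le.trans hNK) hN.le), mul_div_cancel₀ _ hN.ne']
  have hceil : (⌈δ⌉₊ : ℝ) ≤ 2 * δ := by linarith [Nat.ceil_lt_add_one (zero_le_one.trans hδ)]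
  have hbound : ∑ x ∈ T, (r x : ℝ) ^ 2 ≤ 6 * N * δ :=
    calc ∑ x ∈ T, (r x : ℝ) ^ 2
        ≤ 2 * N * ⌈δ⌉₊ + 2 * K / ⌈δ⌉₊ := sum_sq_le_of_card_filter_le (by positivity) hK
      _ ≤ 2 * N * (2 * δ) + 2 * K / δ := by
          gcongr
          · linarith
          · exact Nat.le_ceil δ
      _ = 6 * N * δ := by
          rw [hδK]
          field_simp
          ring
  calc (∑ x ∈ T, (r x : ℝ) ^ 2) ^ 2 ≤ (6 * N * δ) ^ 2 := by gcongr
    _ = 36 * K * N := by rw [hδK]; ring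

end LayerCake

lemma card_le_card_div_self₀ {G₀ : Type*} [GroupWithZero G₀] [DecidableEq G₀] {A : Finset G₀}
    (h0 : 0 ∉ A) : #A ≤ #(A / A) := by
  rcases A.eq_empty_or_nonempty with rfl | ⟨a, ha⟩
  · simp
  · exact card_le_card_of_injOn (· / a) (fun b hb ↦ div_mem_div hb ha)
      fun b _ b' _ h ↦ (div_left_inj' (ne_of_mem_of_not_mem ha h0)).1 h

section Field

variable {K : Type*} [Field K] [DecidableEq K]

lemma card_diffReps_le_card_lineInc (A B : Finset K) {C : Finset K} {c : K} (hc : c ∈ C)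
    (hc0 : c ≠ 0) (x : K) : #(diffReps A B x) ≤ #(lineInc (A / C) B (c, -x)) := by
  refine card_le_card_of_injOn (fun b ↦ (x + b) / c) (fun b hb ↦ ?_) fun b _ b' _ h ↦ ?_
  · obtain ⟨hbB, hbA⟩ := mem_diffReps.1 hb
    rw [mem_coe, mem_lineInc, mul_div_cancel₀ _ hc0, add_neg_cancel_comm]
    exact ⟨div_mem_div hbA hc, hbB⟩
  · exact add_left_cancel ((div_left_inj' hc0).1 h)

lemma card_sub_div_smul_le {X Y C D : Finset K} {u v : K} (hu : u ∈ C) (hv : v ∈ D) (hv0 : v ≠ 0) :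
    #(Y - (u / v) • X) ≤ #(D * Y - C * X) := by
  refine card_le_card_of_injOn (v * ·) (fun z hz ↦ ?_) (mul_right_injective₀ hv0).injOn
  obtain ⟨y, hy, w, hw, rfl⟩ := mem_sub.1 (mem_coe.1 hz)
  obtain ⟨x, hx, rfl⟩ := mem_smul_finset.1 hw
  have hscale : v * (y - (u / v) • x) = v * y - u * x := by
    rw [smul_eq_mul]
    field_simp
  dsimp only
  rw [mem_coe, hscale]
  exact sub_mem_sub (mul_mem_mul hv hy) (mul_mem_mul hu hx)

lemma card_sub_le_card_mul_sub_mul {A : Finset K} (h0 : 0 ∉ A) : #(A - A) ≤ #(A * A - A * A) := by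
  rcases A.eq_empty_or_nonempty with rfl | ⟨a, ha⟩
  · simp
  · have ha0 : a ≠ 0 := ne_of_mem_of_not_mem ha h0
    simpa [div_self ha0] using card_sub_div_smul_le (X := A) (Y := A) ha ha ha0

end Field

section OrderedField

variable {K : Type*} [Field K] [LinearOrder K] [IsStrictOrderedRing K] {A : Finset K}

-- A popular difference `x` and `c ∈ A` give the line `y = c * x' - x`, which meets the grid
-- `(A / A) × B` in at least `t` points, so the incidence bound applies to `#A` lines for each `x`.
lemma card_mul_card_popular_diff_mul_pow_three_le (h0 : 0 ∉ A) (B : Finset K) (t : ℕ) :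
    #A * #{x ∈ A - B | t ≤ #(diffReps A B x)} * t ^ 3 ≤ 512 * #(A / A) ^ 2 * #B ^ 2 := by
  set S := {x ∈ A - B | t ≤ #(diffReps A B x)}
  rcases lt_or_ge t 4 with ht | ht
  · have hAQ : #A ≤ #(A / A) := card_le_card_div_self₀ h0
    have hSB : #S ≤ #A * #B := (card_filter_le _ _).trans (card_sub_le (s := A) (t := B))
    calc #A * #S * t ^ 3 ≤ #A * (#A * #B) * 4 ^ 3 := by gcongr
      _ = 64 * #A ^ 2 * #B := by ring
      _ ≤ 512 * #(A / A) ^ 2 * #B ^ 2 := by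
        gcongr
        · norm_num
        · exact Nat.le_self_pow two_ne_zero _
  · have hA0 {a : K} (ha : a ∈ A) : a ≠ 0 := ne_of_mem_of_not_mem ha h0
    rw [← card_neg S, ← card_product]
    refine card_mul_pow_three_le_of_forall_le_card_lineInc ht
      (fun l hl ↦ hA0 (mem_product.1 hl).1) ?_
    rintro ⟨c, y⟩ hl
    obtain ⟨hc, hy⟩ := mem_product.1 hl
    obtain ⟨x, hx, rfl⟩ := mem_neg.1 hy
    exact (mem_filter.1 hx).2.trans (card_diffReps_le_card_lineInc A B hc (hA0 hc) x)

lemma card_popular_diff_mul_pow_three_le_div (h0 : 0 ∉ A) (hA : A.Nonempty) (B : Finset K) (t : ℕ) :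
    (#{x ∈ A - B | t ≤ #(diffReps A B x)} : ℝ) * t ^ 3 ≤ 512 * #(A / A) ^ 2 * #B ^ 2 / #A := by
  rw [le_div_iff₀ (Nat.cast_pos.2 hA.card_pos), mul_comm _ (#A : ℝ), ← mul_assoc]
  exact_mod_cast card_mul_card_popular_diff_mul_pow_three_le h0 B t

lemma diffEnergy_three_self_le (h0 : 0 ∉ A) :
    (diffEnergy 3 A A : ℝ) ≤ 1536 * #(A / A) ^ 2 * #A * (1 + Real.log #A) := by
  rcases A.eq_empty_or_nonempty with rfl | hA
  · simp [diffEnergy]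
  have hA0 : (#A : ℝ) ≠ 0 := by simp [hA.ne_empty]
  rw [diffEnergy]
  push_cast
  calc ∑ x ∈ A - A, (#(diffReps A A x) : ℝ) ^ 3
      ≤ 3 * (512 * #(A / A) ^ 2 * #A ^ 2 / #A) * (1 + Real.log #A) :=
        sum_pow_three_le_of_card_filter_le (fun _ _ ↦ card_filter_le _ _)
          (card_popular_diff_mul_pow_three_le_div h0 hA A)
    _ = 1536 * #(A / A) ^ 2 * #A * (1 + Real.log #A) := by
        field_simp
        ring

lemma sq_diffEnergy_two_le (h0 : 0 ∉ A) (B : Finset K) :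
    (diffEnergy 2 A B : ℝ) ^ 2 ≤ 18432 * #(A / A) ^ 2 * #B ^ 3 := by
  rcases A.eq_empty_or_nonempty with rfl | hA
  · simp [diffEnergy]
  rcases B.eq_empty_or_nonempty with rfl | hB
  · simp [diffEnergy]
  have hApos : (0 : ℝ) < #A := Nat.cast_pos.2 hA.card_pos
  have hBpos : (1 : ℝ) ≤ #B := Nat.one_le_cast.2 hB.card_pos
  have hAQ : (#A : ℝ) ≤ #(A / A) := Nat.cast_le.2 (card_le_card_div_self₀ h0)
  have hsum : ∑ x ∈ A - B, (#(diffReps A B x) : ℝ) = #A * #B := by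
    exact_mod_cast sum_card_diffReps A B
  have hle : (#A * #B : ℝ) ≤ 512 * #(A / A) ^ 2 * #B ^ 2 / #A := by
    rw [le_div_iff₀ hApos]
    calc (#A * #B * #A : ℝ) = 1 * #A ^ 2 * #B := by ring
      _ ≤ 512 * #(A / A) ^ 2 * #B ^ 2 := by
        gcongr
        · norm_num
        · exact le_self_pow₀ hBpos two_ne_zero
  rw [diffEnergy]
  push_cast
  calc (∑ x ∈ A - B, (#(diffReps A B x) : ℝ) ^ 2) ^ 2
      ≤ 36 * (512 * #(A / A) ^ 2 * #B ^ 2 / #A) * ∑ x ∈ A - B, (#(diffReps A B x) : ℝ) :=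
        sq_sum_sq_le_of_card_filter_le (hsum ▸ by positivity) (hsum ▸ hle)
          (card_popular_diff_mul_pow_three_le_div h0 hA B)
    _ = 18432 * #(A / A) ^ 2 * #B ^ 3 := by
        rw [hsum]
        field_simp
        ring

-- The squares remove the square root from the bound on `diffEnergy 2 A (A - A)`.
lemma card_pow_le_card_sub_pow_mul_card_div_pow (h0 : 0 ∉ A) :
    (#A : ℝ) ^ 14 ≤
      2 ^ 29 * 3 ^ 4 * #(A - A) ^ 5 * #(A / A) ^ 6 * (1 + Real.log #A) ^ 2 := by
  rcases A.eq_empty_or_nonempty with rfl | hA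
  · simp
  have hApos : (0 : ℝ) < #A := Nat.cast_pos.2 hA.card_pos
  have henergy : (#A : ℝ) ^ 8 ≤ #(A - A) * diffEnergy 2 A (A - A) * diffEnergy 3 A A := by
    exact_mod_cast card_pow_eight_le_card_sub_mul_diffEnergy_mul_diffEnergy A
  refine le_of_mul_le_mul_right ?_ (pow_pos hApos 2)
  calc (#A : ℝ) ^ 14 * #A ^ 2 = ((#A : ℝ) ^ 8) ^ 2 := by ring
    _ ≤ ((#(A - A) : ℝ) * diffEnergy 2 A (A - A) * diffEnergy 3 A A) ^ 2 := by gcongr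
    _ = #(A - A) ^ 2 * (diffEnergy 2 A (A - A) : ℝ) ^ 2 * (diffEnergy 3 A A : ℝ) ^ 2 := by ring
    _ ≤ #(A - A) ^ 2 * (18432 * #(A / A) ^ 2 * #(A - A) ^ 3) *
          (1536 * #(A / A) ^ 2 * #A * (1 + Real.log #A)) ^ 2 := by
        gcongr
        · exact sq_diffEnergy_two_le h0 _
        · exact diffEnergy_three_self_le h0
    _ = 2 ^ 29 * 3 ^ 4 * #(A - A) ^ 5 * #(A / A) ^ 6 * (1 + Real.log #A) ^ 2 * #A ^ 2 := by ring

lemma card_sq_mul_card_div_le (h0 : 0 ∉ A) :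
    #A ^ 2 * #(A / A) ≤ 512 * #(A * A - A * A) ^ 2 := by
  rw [mul_comm, sq #A]
  refine card_slopes_mul_le (fun h ↦ ?_) (fun q hq ↦ ?_) card_div_le
  · obtain ⟨a, ha, b, hb, hab⟩ := mem_div.1 h
    rcases div_eq_zero_iff.1 hab with rfl | rfl
    exacts [h0 ha, h0 hb]
  · obtain ⟨a, ha, b, hb, rfl⟩ := mem_div.1 hq
    exact card_sub_div_smul_le ha hb (ne_of_mem_of_not_mem hb h0)

lemma card_pow_le_card_mul_sub_mul_pow_mul_log_sq (h0 : 0 ∉ A) :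
    (#A : ℝ) ^ 26 ≤ 2 ^ 83 * 3 ^ 4 * #(A * A - A * A) ^ 17 * (1 + Real.log #A) ^ 2 := by
  have hslopes : (#A : ℝ) ^ 2 * #(A / A) ≤ 512 * #(A * A - A * A) ^ 2 := by
    exact_mod_cast card_sq_mul_card_div_le h0
  have hsub : (#(A - A) : ℝ) ≤ #(A * A - A * A) := by
    exact_mod_cast card_sub_le_card_mul_sub_mul h0
  calc (#A : ℝ) ^ 26 = #A ^ 14 * #A ^ 12 := by ring
    _ ≤ 2 ^ 29 * 3 ^ 4 * #(A - A) ^ 5 * #(A / A) ^ 6 * (1 + Real.log #A) ^ 2 * #A ^ 12 := by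
        gcongr
        exact card_pow_le_card_sub_pow_mul_card_div_pow h0
    _ = 2 ^ 29 * 3 ^ 4 * #(A - A) ^ 5 * (#A ^ 2 * #(A / A)) ^ 6 * (1 + Real.log #A) ^ 2 := by ring
    _ ≤ 2 ^ 29 * 3 ^ 4 * #(A * A - A * A) ^ 5 * (512 * #(A * A - A * A) ^ 2) ^ 6 *
          (1 + Real.log #A) ^ 2 := by gcongr
    _ = 2 ^ 83 * 3 ^ 4 * #(A * A - A * A) ^ 17 * (1 + Real.log #A) ^ 2 := by ring

end OrderedField

lemma one_add_log_natCast_le {n : ℕ} (hn : 2 ≤ n) : 1 + Real.log n ≤ 3 * Real.log n := by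
  have hlog : Real.log 2 ≤ Real.log n := by gcongr; exact_mod_cast hn
  linarith [Real.log_two_gt_d9]

lemma rpow_neg_mul_rpow_div_le_of_pow_le {C x y l : ℝ} (hC : 0 < C) (hx : 0 ≤ x) (hy : 0 ≤ y)
    (hl : 0 < l) {m n k : ℕ} (hn : n ≠ 0) (h : x ^ m ≤ C * y ^ n * l ^ k) :
    C ^ (-(1 / n) : ℝ) * x ^ (m / n : ℝ) / l ^ (k / n : ℝ) ≤ y := by
  have hn0 : (n : ℝ) ≠ 0 := Nat.cast_ne_zero.2 hn
  have hroot {z : ℝ} (hz : 0 ≤ z) (j : ℕ) : (z ^ (j / n : ℝ)) ^ n = z ^ j := by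
    rw [← Real.rpow_mul_natCast hz, div_mul_cancel₀ _ hn0, Real.rpow_natCast]
  have hCroot : (C ^ (-(1 / n) : ℝ)) ^ n = C⁻¹ := by
    rw [← Real.rpow_mul_natCast hC.le, neg_mul, div_mul_cancel₀ _ hn0, Real.rpow_neg_one]
  refine le_of_pow_le_pow_left₀ hn hy ?_
  rw [div_pow, mul_pow, hroot hx, hroot hl.le, hCroot, div_le_iff₀ (by positivity),
    inv_mul_le_iff₀ hC, ← mul_assoc]
  exact h

universe u

theorem stmt_3_general : ∃ c : ℝ, 0 < c ∧
    ∀ (K : Type u) [Field K] [LinearOrder K] [IsStrictOrderedRing K] (A : Finset K),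
      0 ∉ A → 2 ≤ #A →
        c * (#A : ℝ) ^ ((26 : ℝ) / 17) / Real.log #A ^ ((2 : ℝ) / 17) ≤ #(A * A - A * A) := by
  refine ⟨(2 ^ 83 * 3 ^ 6 : ℝ) ^ (-(1 / (17 : ℕ)) : ℝ), by positivity, fun K _ _ _ A h0 hA ↦ ?_⟩
  have hlog : 0 < Real.log #A := Real.log_pos (by exact_mod_cast hA)
  refine rpow_neg_mul_rpow_div_le_of_pow_le (m := 26) (n := 17) (k := 2) (by positivity)
    (Nat.cast_nonneg _) (Nat.cast_nonneg _) hlog (by norm_num) ?_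
  calc (#A : ℝ) ^ 26 ≤ 2 ^ 83 * 3 ^ 4 * #(A * A - A * A) ^ 17 * (1 + Real.log #A) ^ 2 :=
        card_pow_le_card_mul_sub_mul_pow_mul_log_sq h0
    _ ≤ 2 ^ 83 * 3 ^ 4 * #(A * A - A * A) ^ 17 * (3 * Real.log #A) ^ 2 := by
        gcongr
        exact one_add_log_natCast_le hA
    _ = 2 ^ 83 * 3 ^ 6 * #(A * A - A * A) ^ 17 * Real.log #A ^ 2 := by ring

theorem stmt_3 :
    ∃ c : ℝ, 0 < c ∧
      ∀ A : Finset ℝ, (0 : ℝ) ∉ A → 2 ≤ A.card →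
        c * (A.card : ℝ) ^ ((26 : ℝ) / 17) / (Real.log (A.card : ℝ)) ^ ((2 : ℝ) / 17)
          ≤ ((A * A - A * A).card : ℝ) := by
  obtain ⟨c, hc, h⟩ := stmt_3_general
  exact ⟨c, hc, h ℝ⟩
end

section
/- (Szemerédi–Trotter theorem over ℝ.) There exists an absolute constant C > 0 such that for every finite set P of points in ℝ² and every finite set L of affine lines in ℝ², the number of incidences I(P,L) = #{(p,l) ∈ P × L : p ∈ l} satisfies I(P,L) ≤ C·(|P|^(2/3)·|L|^(2/3) + |P| + |L|). -/
open Finset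
open scoped Classical

/-- `l ⊆ ℝ²` is an affine line: the solution set of a nontrivial linear equation. -/
def IsAffineLine (l : Set (ℝ × ℝ)) : Prop :=
  ∃ a b c : ℝ, (a, b) ≠ (0, 0) ∧ l = {p : ℝ × ℝ | a * p.1 + b * p.2 = c}

/-!
This is Székely's crossing number argument. After a generic shear no two points share an abscissa
and no line is vertical. Join consecutive points on each line by a segment: this gives a
straight-line graph with at least `I(P, L) - |L|` edges and at most `|L| ^ 2` crossings, while the
crossing lemma forces about `|E| ^ 3 / |P| ^ 2` crossings as soon as `6 |P| ≤ |E|`.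

The crossing lemma follows by random sampling from `|E| ≤ 3 |V|` for straight-line graphs without
crossings, which is proved without Euler's formula. An edge `e` that is not the uppermost one
leaving its left endpoint spans a wedge with the next edge above it. No edge can enter this wedge
before the leftmost vertex `v` in it, so either `v` is the right endpoint of `e` and `e` is the
uppermost edge arriving there, or `e` is the edge seen from `v` when looking vertically down.
Each vertex accounts for at most one edge of each of these three kinds.
-/

namespace SzemerediTrotter

/-! ### Random sampling -/

section Sampling

variable {α ι ε χ : Type*}

/-- The probability that a random subset of `V`, containing each point independently with
probability `p`, equals `S`. It is only meaningful for `S ⊆ V`. -/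
def bernoulliWeight (V : Finset α) (p : ℝ) (S : Finset α) : ℝ :=
  p ^ #S * (1 - p) ^ (#V - #S)

lemma bernoulliWeight_nonneg (V S : Finset α) {p : ℝ} (hp₀ : 0 ≤ p) (hp₁ : p ≤ 1) :
    0 ≤ bernoulliWeight V p S :=
  mul_nonneg (pow_nonneg hp₀ _) (pow_nonneg (sub_nonneg.2 hp₁) _)

variable [DecidableEq α]

lemma sum_Icc_bernoulliWeight {T V : Finset α} (hTV : T ⊆ V) (p : ℝ) :
    ∑ S ∈ Icc T V, bernoulliWeight V p S = p ^ #T := by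
  have disjoint_of_mem {S : Finset α} (hS : S ∈ (V \ T).powerset) : Disjoint T S :=
    disjoint_sdiff.mono_right (mem_powerset.1 hS)
  have injOn_union : Set.InjOn (T ∪ ·) ((V \ T).powerset : Set (Finset α)) := by
    intro S hS S' hS' h
    rw [← union_sdiff_cancel_left (disjoint_of_mem hS), show T ∪ S = T ∪ S' from h,
      union_sdiff_cancel_left (disjoint_of_mem hS')]
  rw [Icc_eq_image_powerset hTV, sum_image injOn_union]
  calc ∑ S ∈ (V \ T).powerset, bernoulliWeight V p (T ∪ S)
      = ∑ S ∈ (V \ T).powerset, p ^ #T * (p ^ #S * (1 - p) ^ (#(V \ T) - #S)) := by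
        refine sum_congr rfl fun S hS => ?_
        rw [bernoulliWeight, card_union_of_disjoint (disjoint_of_mem hS), pow_add,
          card_sdiff_of_subset hTV, Nat.sub_sub, mul_assoc]
    _ = p ^ #T := by
        rw [← mul_sum, sum_pow_mul_eq_add_pow, add_sub_cancel, one_pow, mul_one]

lemma sum_bernoulliWeight_mul_card_filter_subset {V : Finset α} {A : Finset ι}
    {T : ι → Finset α} {k : ℕ} (hTV : ∀ i ∈ A, T i ⊆ V) (hcard : ∀ i ∈ A, #(T i) = k) (p : ℝ) :
    ∑ S ∈ V.powerset, bernoulliWeight V p S * #{i ∈ A | T i ⊆ S} = p ^ k * #A := by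
  have filter_eq_Icc (i : ι) : {S ∈ V.powerset | T i ⊆ S} = Icc (T i) V := by
    ext S
    simp only [mem_filter, mem_powerset, mem_Icc, and_comm]
  calc ∑ S ∈ V.powerset, bernoulliWeight V p S * #{i ∈ A | T i ⊆ S}
      = ∑ S ∈ V.powerset, ∑ i ∈ A, if T i ⊆ S then bernoulliWeight V p S else 0 := by
        refine sum_congr rfl fun S _ => ?_
        rw [← sum_filter, sum_const, nsmul_eq_mul, mul_comm]
    _ = ∑ _i ∈ A, p ^ k := by
        rw [sum_comm]
        refine sum_congr rfl fun i hi => ?_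
        rw [← sum_filter, filter_eq_Icc, sum_Icc_bernoulliWeight (hTV i hi), hcard i hi]
    _ = p ^ k * #A := by rw [sum_const, nsmul_eq_mul, mul_comm]

variable {V : Finset α} {E : Finset ε} {X : Finset χ} {ends : ε → Finset α}
  {support : χ → Finset α} {c : ℝ}

lemma sq_mul_card_le_of_forall_subset (hends : ∀ e ∈ E, ends e ⊆ V)
    (card_ends : ∀ e ∈ E, #(ends e) = 2) (hsupport : ∀ x ∈ X, support x ⊆ V)
    (card_support : ∀ x ∈ X, #(support x) = 4)
    (h : ∀ S ⊆ V, (#{e ∈ E | ends e ⊆ S} : ℝ) ≤ c * #S + #{x ∈ X | support x ⊆ S})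
    {p : ℝ} (hp₀ : 0 ≤ p) (hp₁ : p ≤ 1) :
    p ^ 2 * #E ≤ c * (p * #V) + p ^ 4 * #X := by
  have sum_card : ∑ S ∈ V.powerset, bernoulliWeight V p S * #S = p * #V := by
    calc ∑ S ∈ V.powerset, bernoulliWeight V p S * #S
        = ∑ S ∈ V.powerset, bernoulliWeight V p S * #{v ∈ V | {v} ⊆ S} := by
          refine sum_congr rfl fun S hS => ?_
          simp only [singleton_subset_iff, filter_mem_eq_inter,
            inter_eq_right.2 (mem_powerset.1 hS)]
      _ = p ^ 1 * #V :=
          sum_bernoulliWeight_mul_card_filter_subset (fun v hv => singleton_subset_iff.2 hv)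
            (fun v _ => card_singleton v) p
      _ = p * #V := by rw [pow_one]
  rw [← sum_bernoulliWeight_mul_card_filter_subset hends card_ends, ← sum_card,
    ← sum_bernoulliWeight_mul_card_filter_subset hsupport card_support, mul_sum,
    ← sum_add_distrib]
  refine sum_le_sum fun S hS => ?_
  have := mul_le_mul_of_nonneg_left (h S (mem_powerset.1 hS))
    (bernoulliWeight_nonneg V S hp₀ hp₁)
  linarith

lemma card_pow_three_le_of_forall_subset (hends : ∀ e ∈ E, ends e ⊆ V)
    (card_ends : ∀ e ∈ E, #(ends e) = 2) (hsupport : ∀ x ∈ X, support x ⊆ V)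
    (card_support : ∀ x ∈ X, #(support x) = 4)
    (h : ∀ S ⊆ V, (#{e ∈ E | ends e ⊆ S} : ℝ) ≤ c * #S + #{x ∈ X | support x ⊆ S})
    (hc : 0 < c) (hdense : 2 * c * #V ≤ #E) :
    (#E : ℝ) ^ 3 ≤ 8 * c ^ 2 * #V ^ 2 * #X := by
  obtain rfl | ⟨e, he⟩ := E.eq_empty_or_nonempty
  · rw [card_empty, Nat.cast_zero, zero_pow three_ne_zero]
    positivity
  have hE : (0 : ℝ) < #E := Nat.cast_pos.2 (card_pos.2 ⟨e, he⟩)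
  have hV : (0 : ℝ) < #V := by
    refine Nat.cast_pos.2 (lt_of_lt_of_le ?_ (card_le_card (hends e he)))
    rw [card_ends e he]
    exact two_pos
  -- This `p` makes the vertex term half as large as the edge term.
  have key := sq_mul_card_le_of_forall_subset hends card_ends hsupport card_support h
    (p := 2 * c * #V / #E) (by positivity) ((div_le_one hE).2 hdense)
  have edge_term : (2 * c * #V / #E) ^ 2 * #E * #E ^ 4 = 2 * c ^ 2 * #V ^ 2 * (2 * #E ^ 3) := by
    field_simp
  have other_terms : (c * (2 * c * #V / #E * #V) + (2 * c * #V / #E) ^ 4 * #X) * #E ^ 4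
      = 2 * c ^ 2 * #V ^ 2 * (#E ^ 3 + 8 * c ^ 2 * #V ^ 2 * #X) := by
    field_simp
    ring
  have scaled := mul_le_mul_of_nonneg_right key (by positivity : (0 : ℝ) ≤ #E ^ 4)
  rw [edge_term, other_terms] at scaled
  linarith [le_of_mul_le_mul_left scaled (by positivity)]

end Sampling

/-! ### Non-vertical segments -/

/-- A non-degenerate, non-vertical segment in the plane, given by its endpoints. -/
@[ext]
structure Edge where
  left : ℝ × ℝ
  right : ℝ × ℝ
  lt : left.1 < right.1

namespace Edge

/-- The open interval of abscissae of interior points of the segment. -/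
abbrev span (e : Edge) : Set ℝ := Set.Ioo e.left.1 e.right.1

/-- The slope of the line through the segment. -/
noncomputable def slope (e : Edge) : ℝ := (e.right.2 - e.left.2) / (e.right.1 - e.left.1)

/-- The ordinate at abscissa `x` of the line through the segment; `x` need not lie over the
segment. -/
noncomputable def height (e : Edge) (x : ℝ) : ℝ := e.left.2 + e.slope * (x - e.left.1)

/-- The line through the segment. -/
def line (e : Edge) : Set (ℝ × ℝ) := {p | p.2 = e.height p.1}

/-- The set of endpoints of the segment. -/
noncomputable def endpoints (e : Edge) : Finset (ℝ × ℝ) := {e.left, e.right}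

/-- Two distinct segments cross if they meet in a point interior to both. -/
def Crosses (e f : Edge) : Prop :=
  e ≠ f ∧ ∃ x, x ∈ e.span ∧ x ∈ f.span ∧ e.height x = f.height x

variable {e f : Edge} {x y : ℝ}

lemma height_left (e : Edge) : e.height e.left.1 = e.left.2 := by
  rw [height, sub_self, mul_zero, add_zero]

lemma height_right (e : Edge) : e.height e.right.1 = e.right.2 := by
  rw [height, slope, div_mul_cancel₀ _ (sub_ne_zero.2 e.lt.ne'), add_sub_cancel]

lemma left_ne_right (e : Edge) : e.left ≠ e.right :=
  fun h => e.lt.ne (congrArg Prod.fst h)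

lemma card_endpoints (e : Edge) : #e.endpoints = 2 :=
  card_pair e.left_ne_right

lemma endpoints_subset_iff {S : Finset (ℝ × ℝ)} :
    e.endpoints ⊆ S ↔ e.left ∈ S ∧ e.right ∈ S := by
  rw [endpoints, insert_subset_iff, singleton_subset_iff]

lemma height_eq_height_add (e : Edge) (x y : ℝ) :
    e.height y = e.height x + e.slope * (y - x) := by
  simp only [height]
  ring

lemma continuous_height (e : Edge) : Continuous e.height := by
  unfold height
  fun_prop

lemma slope_eq_of_height_eq (hxy : x ≠ y) (hx : e.height x = f.height x)
    (hy : e.height y = f.height y) : e.slope = f.slope := by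
  refine mul_right_cancel₀ (sub_ne_zero.2 hxy.symm) ?_
  linarith [e.height_eq_height_add x y, f.height_eq_height_add x y]

lemma height_eq_of_slope_eq (hslope : e.slope = f.slope) (hx : e.height x = f.height x) (y : ℝ) :
    e.height y = f.height y := by
  rw [e.height_eq_height_add x y, f.height_eq_height_add x y, hslope, hx]

lemma height_eq_of_line_eq (h : e.line = f.line) (x : ℝ) : e.height x = f.height x :=
  (Set.ext_iff.1 h (x, e.height x)).1 rfl

lemma slope_eq_of_line_eq (h : e.line = f.line) : e.slope = f.slope :=
  slope_eq_of_height_eq zero_ne_one (height_eq_of_line_eq h 0) (height_eq_of_line_eq h 1)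

lemma height_lt_height_iff_of_left_eq (hleft : e.left = f.left) (hx : e.left.1 < x) :
    e.height x < f.height x ↔ e.slope < f.slope := by
  rw [height, height, hleft, add_lt_add_iff_left]
  exact mul_lt_mul_iff_left₀ (sub_pos.2 (hleft ▸ hx))

lemma height_lt_height_iff_of_right_eq (hright : e.right = f.right) (hx : x < e.right.1) :
    e.height x < f.height x ↔ f.slope < e.slope := by
  rw [e.height_eq_height_add e.right.1, f.height_eq_height_add e.right.1, height_right, hright,
    height_right, add_lt_add_iff_left]
  exact mul_lt_mul_right_of_neg (sub_neg.2 (hright ▸ hx))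

lemma height_le_height_of_not_crosses (hcross : ¬ e.Crosses f) (hyx : y < x)
    (hey : e.left.1 ≤ y) (hfy : f.left.1 ≤ y) (hxe : x ≤ e.right.1) (hxf : x ≤ f.right.1)
    (hlt : e.height x < f.height x) : e.height y ≤ f.height y := by
  by_contra! hgt
  obtain ⟨z, ⟨hyz, hzx⟩, hz⟩ := intermediate_value_Ioo' hyx.le
    (e.continuous_height.sub f.continuous_height).continuousOn
    ⟨sub_neg.2 hlt, sub_pos.2 hgt⟩
  refine hcross ⟨?_, z, ⟨hey.trans_lt hyz, hzx.trans_le hxe⟩,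
    ⟨hfy.trans_lt hyz, hzx.trans_le hxf⟩, sub_eq_zero.1 hz⟩
  rintro rfl
  exact hlt.false

end Edge

/-! ### Straight-line graphs without crossings -/

/-- The pairs of crossing edges. The pairs are ordered, so every crossing is counted twice. -/
noncomputable def crossings (E : Finset Edge) : Finset (Edge × Edge) :=
  {q ∈ E ×ˢ E | q.1.Crosses q.2}

/-- A graph drawn in the plane with straight non-vertical edges, whose vertices have distinct
abscissae and do not lie in the interior of edges. -/
structure IsStraightLineGraph (V : Finset (ℝ × ℝ)) (E : Finset Edge) : Prop where
  injOn_fst : Set.InjOn Prod.fst (V : Set (ℝ × ℝ))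
  left_mem : ∀ e ∈ E, e.left ∈ V
  right_mem : ∀ e ∈ E, e.right ∈ V
  height_ne : ∀ e ∈ E, ∀ v ∈ V, v.1 ∈ e.span → e.height v.1 ≠ v.2

/-- `e` is the uppermost edge leaving its left endpoint. -/
def IsTopOutgoing (E : Finset Edge) (e : Edge) : Prop :=
  ∀ f ∈ E, f.left = e.left → f.slope ≤ e.slope

/-- `e` is the uppermost edge arriving at its right endpoint. Left of that endpoint, smaller slopes
are higher. -/
def IsTopIncoming (E : Finset Edge) (e : Edge) : Prop :=
  ∀ f ∈ E, f.right = e.right → e.slope ≤ f.slope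

/-- `e` is the first edge met when going vertically down from `v`. -/
def IsJustBelow (E : Finset Edge) (e : Edge) (v : ℝ × ℝ) : Prop :=
  v.1 ∈ e.span ∧ e.height v.1 < v.2 ∧
    ∀ f ∈ E, v.1 ∈ f.span → f.height v.1 < v.2 → f.height v.1 ≤ e.height v.1

/-- `e'` is the edge following `e` in the upward order of the edges that leave `e.left`. -/
structure IsNextAbove (E : Finset Edge) (e e' : Edge) : Prop where
  mem : e' ∈ E
  left_eq : e'.left = e.left
  slope_lt : e.slope < e'.slope
  slope_le : ∀ f ∈ E, f.left = e.left → e.slope < f.slope → e'.slope ≤ f.slope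

/-- The points between two edges `e` and `e'` with the same left endpoint, as far to the right as
both edges reach. The common endpoint is excluded. -/
def wedge (e e' : Edge) : Set (ℝ × ℝ) :=
  {v | e.left.1 < v.1 ∧ v.1 ≤ e.right.1 ∧ v.1 ≤ e'.right.1 ∧
    e.height v.1 ≤ v.2 ∧ v.2 ≤ e'.height v.1}

/-- `v` is the leftmost point of `V` in the wedge between `e` and `e'`. -/
structure IsFirstInWedge (V : Finset (ℝ × ℝ)) (e e' : Edge) (v : ℝ × ℝ) : Prop where
  mem : v ∈ V
  mem_wedge : v ∈ wedge e e'
  fst_le : ∀ w ∈ V, w ∈ wedge e e' → v.1 ≤ w.1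

lemma exists_isNextAbove {E : Finset Edge} {e : Edge} (h : ¬ IsTopOutgoing E e) :
    ∃ e', IsNextAbove E e e' := by
  simp only [IsTopOutgoing, not_forall, not_le] at h
  obtain ⟨g, hg, hleft, hslope⟩ := h
  obtain ⟨e', he', hmin⟩ := exists_min_image {f ∈ E | f.left = e.left ∧ e.slope < f.slope}
    Edge.slope ⟨g, mem_filter.2 ⟨hg, hleft, hslope⟩⟩
  obtain ⟨hmem, hleft', hslope'⟩ := mem_filter.1 he'
  exact ⟨e', hmem, hleft', hslope', fun f hf hfleft hfslope =>
    hmin f (mem_filter.2 ⟨hf, hfleft, hfslope⟩)⟩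

lemma IsNextAbove.height_lt {E : Finset Edge} {e e' : Edge} (h : IsNextAbove E e e') {x : ℝ}
    (hx : e.left.1 < x) : e.height x < e'.height x :=
  (Edge.height_lt_height_iff_of_left_eq h.left_eq.symm hx).2 h.slope_lt

namespace IsStraightLineGraph

variable {V : Finset (ℝ × ℝ)} {E : Finset Edge} {e e' f : Edge} {v : ℝ × ℝ} {x : ℝ}

lemma mono (G : IsStraightLineGraph V E) {W : Finset (ℝ × ℝ)} {F : Finset Edge} (hW : W ⊆ V)
    (hF : F ⊆ E) (hleft : ∀ e ∈ F, e.left ∈ W) (hright : ∀ e ∈ F, e.right ∈ W) :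
    IsStraightLineGraph W F where
  injOn_fst := G.injOn_fst.mono (coe_subset.2 hW)
  left_mem := hleft
  right_mem := hright
  height_ne e he v hv := G.height_ne e (hF he) v (hW hv)

lemma left_fst_le (G : IsStraightLineGraph V E) (he : e ∈ E) (hf : f ∈ E) (hxe : x ∈ e.span)
    (hxf : x ∈ f.span) (hslope : e.slope = f.slope) (hx : e.height x = f.height x) :
    f.left.1 ≤ e.left.1 := by
  by_contra! hlt
  refine G.height_ne e he f.left (G.left_mem f hf) ⟨hlt, hxf.1.trans hxe.2⟩ ?_
  rw [Edge.height_eq_of_slope_eq hslope hx, f.height_left]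

lemma right_fst_le (G : IsStraightLineGraph V E) (he : e ∈ E) (hf : f ∈ E) (hxe : x ∈ e.span)
    (hxf : x ∈ f.span) (hslope : e.slope = f.slope) (hx : e.height x = f.height x) :
    e.right.1 ≤ f.right.1 := by
  by_contra! hlt
  refine G.height_ne e he f.right (G.right_mem f hf) ⟨hxe.1.trans hxf.2, hlt⟩ ?_
  rw [Edge.height_eq_of_slope_eq hslope hx, f.height_right]

lemma eq_of_slope_eq_of_height_eq (G : IsStraightLineGraph V E) (he : e ∈ E) (hf : f ∈ E)
    (hxe : x ∈ e.span) (hxf : x ∈ f.span) (hslope : e.slope = f.slope)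
    (hx : e.height x = f.height x) : e = f := by
  refine Edge.ext (G.injOn_fst (G.left_mem e he) (G.left_mem f hf) ?_)
    (G.injOn_fst (G.right_mem e he) (G.right_mem f hf) ?_)
  · exact (G.left_fst_le hf he hxf hxe hslope.symm hx.symm).antisymm
      (G.left_fst_le he hf hxe hxf hslope hx)
  · exact (G.right_fst_le he hf hxe hxf hslope hx).antisymm
      (G.right_fst_le hf he hxf hxe hslope.symm hx.symm)

lemma eq_of_left_eq_of_slope_eq (G : IsStraightLineGraph V E) (he : e ∈ E) (hf : f ∈ E)
    (hleft : e.left = f.left) (hslope : e.slope = f.slope) : e = f := by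
  obtain ⟨x, hlx, hxr⟩ := exists_between (lt_min e.lt (hleft ▸ f.lt))
  refine G.eq_of_slope_eq_of_height_eq he hf ⟨hlx, hxr.trans_le (min_le_left _ _)⟩
    ⟨hleft ▸ hlx, hxr.trans_le (min_le_right _ _)⟩ hslope ?_
  rw [Edge.height, Edge.height, hleft, hslope]

lemma eq_of_right_eq_of_slope_eq (G : IsStraightLineGraph V E) (he : e ∈ E) (hf : f ∈ E)
    (hright : e.right = f.right) (hslope : e.slope = f.slope) : e = f := by
  obtain ⟨x, hlx, hxr⟩ := exists_between (max_lt e.lt (hright ▸ f.lt))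
  refine G.eq_of_slope_eq_of_height_eq he hf ⟨(le_max_left _ _).trans_lt hlx, hxr⟩
    ⟨(le_max_right _ _).trans_lt hlx, hright ▸ hxr⟩ hslope
    (Edge.height_eq_of_slope_eq (x := e.right.1) hslope ?_ x)
  rw [e.height_right, hright, f.height_right]

lemma exists_isFirstInWedge (G : IsStraightLineGraph V E) (he : e ∈ E)
    (hnext : IsNextAbove E e e') : ∃ v, IsFirstInWedge V e e' v := by
  have hleft := congrArg Prod.fst hnext.left_eq
  have nonempty : {v ∈ V | v ∈ wedge e e'}.Nonempty := by
    obtain h | h := le_total e.right.1 e'.right.1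
    · refine ⟨e.right, mem_filter.2 ⟨G.right_mem e he, e.lt, le_rfl, h, e.height_right.le, ?_⟩⟩
      exact e.height_right.symm.le.trans (hnext.height_lt e.lt).le
    · have hlt : e.left.1 < e'.right.1 := hleft ▸ e'.lt
      refine ⟨e'.right, mem_filter.2 ⟨G.right_mem e' hnext.mem, hlt, h, le_rfl, ?_,
        e'.height_right.ge⟩⟩
      exact (hnext.height_lt hlt).le.trans e'.height_right.le
  obtain ⟨v, hv, hmin⟩ := exists_min_image _ Prod.fst nonempty
  obtain ⟨hvV, hvw⟩ := mem_filter.1 hv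
  exact ⟨v, hvV, hvw, fun w hw hww => hmin w (mem_filter.2 ⟨hw, hww⟩)⟩

/-- Followed to the left, such an edge could only leave the wedge by crossing one of its sides,
through its apex, or by ending in it. -/
lemma not_height_lt_height_of_isFirstInWedge (G : IsStraightLineGraph V E)
    (nc : ∀ e ∈ E, ∀ f ∈ E, ¬ e.Crosses f) (he : e ∈ E) (hf : f ∈ E)
    (hnext : IsNextAbove E e e') (hfirst : IsFirstInWedge V e e' v)
    (hex : e.left.1 < x) (hxv : x ≤ v.1) (hfx : f.left.1 < x) (hxf : x ≤ f.right.1)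
    (hlow : e.height x < f.height x) : ¬ f.height x < e'.height x := by
  intro hhigh
  obtain ⟨-, hve, hve', -, -⟩ := hfirst.mem_wedge
  have hleft := congrArg Prod.fst hnext.left_eq
  have above {y : ℝ} (hey : e.left.1 ≤ y) (hfy : f.left.1 ≤ y) (hyx : y < x) :
      e.height y ≤ f.height y :=
    Edge.height_le_height_of_not_crosses (nc e he f hf) hyx hey hfy (hxv.trans hve) hxf hlow
  have below {y : ℝ} (hey : e.left.1 ≤ y) (hfy : f.left.1 ≤ y) (hyx : y < x) :
      f.height y ≤ e'.height y :=
    Edge.height_le_height_of_not_crosses (nc f hf e' hnext.mem) hyx hfy (hleft.le.trans hey)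
      hxf (hxv.trans hve') hhigh
  obtain h | h | h := lt_trichotomy f.left.1 e.left.1
  · refine G.height_ne f hf e.left (G.left_mem e he) ⟨h, hex.trans_le hxf⟩ (le_antisymm ?_ ?_)
    · refine (below le_rfl h.le hex).trans_eq ?_
      rw [← hnext.left_eq, e'.height_left]
    · exact e.height_left.symm.le.trans (above le_rfl h.le hex)
  · have hfleft : f.left = e.left := G.injOn_fst (G.left_mem f hf) (G.left_mem e he) h
    have low := (Edge.height_lt_height_iff_of_left_eq hfleft.symm hex).1 hlow
    have high := (Edge.height_lt_height_iff_of_left_eq (hfleft.trans hnext.left_eq.symm) hfx).1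
      hhigh
    exact (hnext.slope_le f hf hfleft low).not_gt high
  · refine (hfirst.fst_le f.left (G.left_mem f hf) ⟨h, ?_, ?_, ?_, ?_⟩).not_gt (hfx.trans_le hxv)
    · exact (hfx.le.trans hxv).trans hve
    · exact (hfx.le.trans hxv).trans hve'
    · exact (above h.le le_rfl hfx).trans_eq f.height_left
    · exact f.height_left.symm.le.trans (below h.le le_rfl hfx)

lemma isTopIncoming_of_isFirstInWedge (G : IsStraightLineGraph V E)
    (nc : ∀ e ∈ E, ∀ f ∈ E, ¬ e.Crosses f) (he : e ∈ E) (hnext : IsNextAbove E e e')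
    (hfirst : IsFirstInWedge V e e' e.right) :
    IsTopIncoming E e := by
  intro f hf hright
  by_contra! hslope
  have height_eq : f.height e.right.1 = e.height e.right.1 := by
    rw [e.height_right, ← hright, f.height_right]
  have near_right : ∀ᶠ x in nhdsWithin e.right.1 (Set.Iio e.right.1),
      f.height x < e'.height x :=
    (f.continuous_height.continuousAt.eventually_lt e'.continuous_height.continuousAt
      (height_eq ▸ hnext.height_lt e.lt)).filter_mono nhdsWithin_le_nhds
  obtain ⟨x, hhigh, ⟨hlx, hxr⟩⟩ := (near_right.and (Ioo_mem_nhdsLT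
    (max_lt e.lt (hright ▸ f.lt : f.left.1 < e.right.1)))).exists
  exact G.not_height_lt_height_of_isFirstInWedge nc he hf hnext hfirst
    ((le_max_left _ _).trans_lt hlx) hxr.le ((le_max_right _ _).trans_lt hlx) (hright ▸ hxr.le)
    ((Edge.height_lt_height_iff_of_right_eq hright.symm hxr).2 hslope) hhigh

lemma isJustBelow_of_isFirstInWedge (G : IsStraightLineGraph V E)
    (nc : ∀ e ∈ E, ∀ f ∈ E, ¬ e.Crosses f) (he : e ∈ E) (hnext : IsNextAbove E e e')
    (hfirst : IsFirstInWedge V e e' v) (hv : v ≠ e.right) :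
    IsJustBelow E e v := by
  obtain ⟨hev, hve, -, hlow, hhigh⟩ := hfirst.mem_wedge
  have mem_span : v.1 ∈ e.span :=
    ⟨hev, hve.lt_of_ne fun h => hv (G.injOn_fst hfirst.mem (G.right_mem e he) h)⟩
  refine ⟨mem_span, hlow.lt_of_ne (G.height_ne e he v hfirst.mem mem_span), ?_⟩
  intro f hf hvf hfv
  by_contra! hlt
  exact G.not_height_lt_height_of_isFirstInWedge nc he hf hnext hfirst hev le_rfl hvf.1 hvf.2.le
    hlt (hfv.trans_le hhigh)

lemma isTopOutgoing_or_isTopIncoming_or_isJustBelow (G : IsStraightLineGraph V E)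
    (nc : ∀ e ∈ E, ∀ f ∈ E, ¬ e.Crosses f) (he : e ∈ E) :
    IsTopOutgoing E e ∨ IsTopIncoming E e ∨ ∃ v ∈ V, IsJustBelow E e v := by
  refine or_iff_not_imp_left.2 fun hout => ?_
  obtain ⟨e', hnext⟩ := exists_isNextAbove hout
  obtain ⟨v, hfirst⟩ := G.exists_isFirstInWedge he hnext
  obtain rfl | hv := eq_or_ne v e.right
  · exact Or.inl (G.isTopIncoming_of_isFirstInWedge nc he hnext hfirst)
  · exact Or.inr ⟨v, hfirst.mem, G.isJustBelow_of_isFirstInWedge nc he hnext hfirst hv⟩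

lemma card_isTopOutgoing_le (G : IsStraightLineGraph V E) : #{e ∈ E | IsTopOutgoing E e} ≤ #V := by
  refine card_le_card_of_injOn Edge.left (fun e he => G.left_mem e (mem_filter.1 he).1) ?_
  intro e he f hf hleft
  obtain ⟨he, etop⟩ := mem_filter.1 he
  obtain ⟨hf, ftop⟩ := mem_filter.1 hf
  exact G.eq_of_left_eq_of_slope_eq he hf hleft
    ((ftop e he hleft).antisymm (etop f hf hleft.symm))

lemma card_isTopIncoming_le (G : IsStraightLineGraph V E) : #{e ∈ E | IsTopIncoming E e} ≤ #V := by
  refine card_le_card_of_injOn Edge.right (fun e he => G.right_mem e (mem_filter.1 he).1) ?_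
  intro e he f hf hright
  obtain ⟨he, etop⟩ := mem_filter.1 he
  obtain ⟨hf, ftop⟩ := mem_filter.1 hf
  exact G.eq_of_right_eq_of_slope_eq he hf hright
    ((etop f hf hright.symm).antisymm (ftop e he hright))

lemma card_isJustBelow_le (nc : ∀ e ∈ E, ∀ f ∈ E, ¬ e.Crosses f) (V : Finset (ℝ × ℝ)) :
    #{e ∈ E | ∃ v ∈ V, IsJustBelow E e v} ≤ #V := by
  refine card_le_card_of_forall_subsingleton (IsJustBelow E) (fun e he => (mem_filter.1 he).2) ?_
  rintro v - e ⟨he, hve, hev, emax⟩ f ⟨hf, hvf, hfv, fmax⟩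
  have he := (mem_filter.1 he).1
  have hf := (mem_filter.1 hf).1
  by_contra hne
  exact nc e he f hf ⟨hne, v.1, hve, hvf,
    (fmax e he hve hev).antisymm (emax f hf hvf hfv)⟩

lemma card_le_three_mul_card (G : IsStraightLineGraph V E)
    (nc : ∀ e ∈ E, ∀ f ∈ E, ¬ e.Crosses f) : #E ≤ 3 * #V := by
  have cover : E ⊆ {e ∈ E | IsTopOutgoing E e} ∪ ({e ∈ E | IsTopIncoming E e} ∪
      {e ∈ E | ∃ v ∈ V, IsJustBelow E e v}) := by
    intro e he
    simp only [mem_union, mem_filter, he, true_and]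
    exact G.isTopOutgoing_or_isTopIncoming_or_isJustBelow nc he
  calc #E ≤ #{e ∈ E | IsTopOutgoing E e} + (#{e ∈ E | IsTopIncoming E e} +
        #{e ∈ E | ∃ v ∈ V, IsJustBelow E e v}) :=
      (card_le_card cover).trans ((card_union_le _ _).trans
        (Nat.add_le_add_left (card_union_le _ _) _))
    _ ≤ #V + (#V + #V) := add_le_add G.card_isTopOutgoing_le
        (add_le_add G.card_isTopIncoming_le (card_isJustBelow_le nc V))
    _ = 3 * #V := by ring

lemma slope_ne_of_crosses (G : IsStraightLineGraph V E) (he : e ∈ E) (hf : f ∈ E)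
    (hcross : e.Crosses f) : e.slope ≠ f.slope := by
  obtain ⟨hne, x, hxe, hxf, hx⟩ := hcross
  exact fun hslope => hne (G.eq_of_slope_eq_of_height_eq he hf hxe hxf hslope hx)

/-! ### The crossing lemma -/

lemma card_le_three_mul_card_add_card_crossings (G : IsStraightLineGraph V E) :
    #E ≤ 3 * #V + #(crossings E) := by
  induction E using Finset.strongInduction with
  | H E ih =>
  by_cases nc : ∀ e ∈ E, ∀ f ∈ E, ¬ e.Crosses f
  · exact (G.card_le_three_mul_card nc).trans (Nat.le_add_right _ _)
  push Not at nc
  obtain ⟨e, he, f, hf, hcross⟩ := nc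
  have hsub : E.erase e ⊆ E := erase_subset e E
  have erased := ih (E.erase e) (erase_ssubset he)
    (G.mono Subset.rfl hsub (fun g hg => G.left_mem g (hsub hg))
      (fun g hg => G.right_mem g (hsub hg)))
  have fewer_crossings : crossings (E.erase e) ⊂ crossings E := by
    refine (ssubset_iff_of_subset (filter_subset_filter _ (product_subset_product hsub hsub))).2
      ⟨(e, f), mem_filter.2 ⟨mk_mem_product he hf, hcross⟩, fun h => ?_⟩
    exact notMem_erase e E (mem_product.1 (mem_filter.1 h).1).1
  have := card_lt_card fewer_crossings
  have := card_erase_add_one he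
  lia

lemma disjoint_endpoints_of_crosses (G : IsStraightLineGraph V E) (he : e ∈ E) (hf : f ∈ E)
    (hcross : e.Crosses f) : Disjoint e.endpoints f.endpoints := by
  have hslope := G.slope_ne_of_crosses he hf hcross
  obtain ⟨-, x, hxe, hxf, hx⟩ := hcross
  have left_ne_left : e.left ≠ f.left := fun h =>
    hslope (Edge.slope_eq_of_height_eq hxe.1.ne
      (by rw [e.height_left, h, f.height_left]) hx)
  have right_ne_right : e.right ≠ f.right := fun h =>
    hslope (Edge.slope_eq_of_height_eq hxe.2.ne hx
      (by rw [e.height_right, h, f.height_right]))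
  have left_ne_right : e.left ≠ f.right := fun h =>
    (hxe.1.trans hxf.2).ne (congrArg Prod.fst h)
  have right_ne_left : e.right ≠ f.left := fun h =>
    (hxf.1.trans hxe.2).ne' (congrArg Prod.fst h)
  simp only [Edge.endpoints, disjoint_insert_left, disjoint_singleton_left, mem_insert,
    mem_singleton, not_or]
  exact ⟨⟨left_ne_left, left_ne_right⟩, right_ne_left, right_ne_right⟩

lemma card_filter_endpoints_subset_le (G : IsStraightLineGraph V E) {S : Finset (ℝ × ℝ)}
    (hS : S ⊆ V) :
    #{e ∈ E | e.endpoints ⊆ S} ≤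
      3 * #S + #{q ∈ crossings E | q.1.endpoints ∪ q.2.endpoints ⊆ S} := by
  have induced : IsStraightLineGraph S {e ∈ E | e.endpoints ⊆ S} :=
    G.mono hS (filter_subset _ _)
      (fun e he => (Edge.endpoints_subset_iff.1 (mem_filter.1 he).2).1)
      (fun e he => (Edge.endpoints_subset_iff.1 (mem_filter.1 he).2).2)
  have crossings_eq : crossings {e ∈ E | e.endpoints ⊆ S} =
      {q ∈ crossings E | q.1.endpoints ∪ q.2.endpoints ⊆ S} := by
    ext q
    simp only [crossings, mem_filter, mem_product, union_subset_iff]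
    tauto
  exact crossings_eq ▸ induced.card_le_three_mul_card_add_card_crossings

theorem card_pow_three_le (G : IsStraightLineGraph V E) (hdense : 6 * #V ≤ #E) :
    (#E : ℝ) ^ 3 ≤ 72 * #V ^ 2 * #(crossings E) := by
  have endpoints_subset (e) (he : e ∈ E) : e.endpoints ⊆ V :=
    Edge.endpoints_subset_iff.2 ⟨G.left_mem e he, G.right_mem e he⟩
  have mem_of_mem_crossings {q : Edge × Edge} (hq : q ∈ crossings E) : q.1 ∈ E ∧ q.2 ∈ E :=
    mem_product.1 (mem_filter.1 hq).1
  have support_subset (q) (hq : q ∈ crossings E) : q.1.endpoints ∪ q.2.endpoints ⊆ V :=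
    union_subset (endpoints_subset _ (mem_of_mem_crossings hq).1)
      (endpoints_subset _ (mem_of_mem_crossings hq).2)
  have card_support (q) (hq : q ∈ crossings E) : #(q.1.endpoints ∪ q.2.endpoints) = 4 := by
    obtain ⟨h₁, h₂⟩ := mem_of_mem_crossings hq
    rw [card_union_of_disjoint (G.disjoint_endpoints_of_crosses h₁ h₂ (mem_filter.1 hq).2),
      Edge.card_endpoints, Edge.card_endpoints]
  have hdense' : 2 * 3 * (#V : ℝ) ≤ #E := by
    norm_num1
    exact_mod_cast hdense
  calc (#E : ℝ) ^ 3 ≤ 8 * 3 ^ 2 * #V ^ 2 * #(crossings E) :=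
        card_pow_three_le_of_forall_subset endpoints_subset (fun e _ => e.card_endpoints)
          support_subset card_support
          (fun S hS => by exact_mod_cast G.card_filter_endpoints_subset_le hS) three_pos hdense'
    _ = 72 * #V ^ 2 * #(crossings E) := by norm_num

end IsStraightLineGraph

/-! ### Incidences -/

/-- The incidences between a finite set of points and a finite family of sets. -/
noncomputable def incidences {α : Type*} (P : Finset α) (L : Finset (Set α)) :
    Finset (α × Set α) :=
  (P ×ˢ L).filter fun pl => pl.1 ∈ pl.2

lemma mem_incidences {α : Type*} {P : Finset α} {L : Finset (Set α)} {pl : α × Set α} :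
    pl ∈ incidences P L ↔ (pl.1 ∈ P ∧ pl.2 ∈ L) ∧ pl.1 ∈ pl.2 := by
  rw [incidences, mem_filter, mem_product]

lemma card_incidences_image {α β : Type*} [DecidableEq β] {φ : α → β} (hφ : Function.Injective φ)
    (P : Finset α) (L : Finset (Set α)) :
    #(incidences (P.image φ) (L.image (φ '' ·))) = #(incidences P L) := by
  have image_eq : incidences (P.image φ) (L.image (φ '' ·)) =
      (incidences P L).image (Prod.map φ (φ '' ·)) := by
    rw [incidences, ← prodMap_image_product, filter_image, incidences]
    simp only [Prod.map_fst, Prod.map_snd, hφ.mem_set_image]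
  rw [image_eq, card_image_of_injective _ (hφ.prodMap hφ.image_injective)]

/-- A line of the plane that is the graph of an affine function. -/
def IsNonverticalLine (l : Set (ℝ × ℝ)) : Prop :=
  ∃ m b : ℝ, l = {p | p.2 = m * p.1 + b}

lemma Edge.line_eq_of_mem {e : Edge} {l : Set (ℝ × ℝ)} (hl : IsNonverticalLine l)
    (hleft : e.left ∈ l) (hright : e.right ∈ l) : e.line = l := by
  obtain ⟨m, b, rfl⟩ := hl
  rw [Set.mem_ofPred_eq] at hleft hright
  have slope_eq : e.slope = m := by
    rw [slope, div_eq_iff (sub_ne_zero.2 e.lt.ne')]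
    linarith
  have height_eq (x : ℝ) : e.height x = m * x + b := by
    rw [height, slope_eq, hleft]
    ring
  simp only [line, height_eq]

lemma Edge.left_right_injective :
    Function.Injective fun e : Edge => (e.left, e.right) :=
  fun _ _ h => Edge.ext (congrArg Prod.fst h) (congrArg Prod.snd h)

/-- The segments joining consecutive points of `V` on the lines of `L`. -/
noncomputable def consecutiveEdges (V : Finset (ℝ × ℝ)) (L : Finset (Set (ℝ × ℝ))) :
    Finset Edge :=
  {e ∈ (V ×ˢ V).preimage (fun e : Edge => (e.left, e.right)) Edge.left_right_injective.injOn |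
    e.line ∈ L ∧ ∀ v ∈ V, v.1 ∈ e.span → e.height v.1 ≠ v.2}

section Incidences

variable {V : Finset (ℝ × ℝ)} {L : Finset (Set (ℝ × ℝ))}

lemma mem_consecutiveEdges {e : Edge} :
    e ∈ consecutiveEdges V L ↔ (e.left ∈ V ∧ e.right ∈ V) ∧
      e.line ∈ L ∧ ∀ v ∈ V, v.1 ∈ e.span → e.height v.1 ≠ v.2 := by
  rw [consecutiveEdges, mem_filter, mem_preimage, mem_product]

lemma isStraightLineGraph_consecutiveEdges (hV : Set.InjOn Prod.fst (V : Set (ℝ × ℝ)))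
    (L : Finset (Set (ℝ × ℝ))) : IsStraightLineGraph V (consecutiveEdges V L) where
  injOn_fst := hV
  left_mem _ he := (mem_consecutiveEdges.1 he).1.1
  right_mem _ he := (mem_consecutiveEdges.1 he).1.2
  height_ne _ he := (mem_consecutiveEdges.1 he).2.2

lemma card_crossings_consecutiveEdges_le (hV : Set.InjOn Prod.fst (V : Set (ℝ × ℝ)))
    (L : Finset (Set (ℝ × ℝ))) : #(crossings (consecutiveEdges V L)) ≤ #L ^ 2 := by
  have G := isStraightLineGraph_consecutiveEdges hV L
  rw [sq, ← card_product]
  refine card_le_card_of_injOn (fun q => (q.1.line, q.2.line)) ?_ ?_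
  · intro q hq
    obtain ⟨h₁, h₂⟩ := mem_product.1 (mem_filter.1 hq).1
    exact mk_mem_product (mem_consecutiveEdges.1 h₁).2.1 (mem_consecutiveEdges.1 h₂).2.1
  rintro ⟨e, f⟩ hef ⟨e', f'⟩ hef' hlines
  obtain ⟨hmem, hcross⟩ := mem_filter.1 hef
  obtain ⟨hmem', -, y, hye', hyf', hy⟩ := mem_filter.1 hef'
  obtain ⟨he, hf⟩ := mem_product.1 hmem
  obtain ⟨he', hf'⟩ := mem_product.1 hmem'
  obtain ⟨hline_e, hline_f⟩ := Prod.mk.inj hlines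
  have hslope := G.slope_ne_of_crosses he hf hcross
  obtain ⟨-, x, hxe, hxf, hx⟩ := hcross
  obtain rfl : x = y := by
    by_contra hxy
    refine hslope (Edge.slope_eq_of_height_eq hxy hx ?_)
    exact (Edge.height_eq_of_line_eq hline_e y).trans
      (hy.trans (Edge.height_eq_of_line_eq hline_f y).symm)
  exact Prod.ext
    (G.eq_of_slope_eq_of_height_eq he he' hxe hye' (Edge.slope_eq_of_line_eq hline_e)
      (Edge.height_eq_of_line_eq hline_e x))
    (G.eq_of_slope_eq_of_height_eq hf hf' hxf hyf' (Edge.slope_eq_of_line_eq hline_f)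
      (Edge.height_eq_of_line_eq hline_f x))

lemma exists_mem_consecutiveEdges {p r : ℝ × ℝ} {l : Set (ℝ × ℝ)} (hline : IsNonverticalLine l)
    (hl : l ∈ L) (hp : p ∈ V) (hpl : p ∈ l) (hr : r ∈ V) (hrl : r ∈ l) (hpr : p.1 < r.1) :
    ∃ e ∈ consecutiveEdges V L, e.left = p ∧ e.line = l := by
  obtain ⟨q, hq, hmin⟩ := exists_min_image {v ∈ V | v ∈ l ∧ p.1 < v.1} Prod.fst
    ⟨r, mem_filter.2 ⟨hr, hrl, hpr⟩⟩
  obtain ⟨hqV, hql, hpq⟩ := mem_filter.1 hq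
  let e : Edge := ⟨p, q, hpq⟩
  have line_eq : e.line = l := Edge.line_eq_of_mem hline hpl hql
  refine ⟨e, mem_consecutiveEdges.2 ⟨⟨hp, hqV⟩, line_eq ▸ hl, fun v hv hspan hheight => ?_⟩, rfl,
    line_eq⟩
  have hvl : v ∈ l := line_eq ▸ hheight.symm
  exact (hmin v (mem_filter.2 ⟨hv, hvl, hspan.1⟩)).not_gt hspan.2

lemma card_incidences_le_card_consecutiveEdges_add (hV : Set.InjOn Prod.fst (V : Set (ℝ × ℝ)))
    (hL : ∀ l ∈ L, IsNonverticalLine l) :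
    #(incidences V L) ≤ #(consecutiveEdges V L) + #L := by
  let rightmost := {pl ∈ incidences V L | ∀ r ∈ V, r ∈ pl.2 → r.1 ≤ pl.1.1}
  have cover : incidences V L ⊆
      (consecutiveEdges V L).image (fun e => (e.left, e.line)) ∪ rightmost := by
    intro pl hpl
    by_cases hright : ∀ r ∈ V, r ∈ pl.2 → r.1 ≤ pl.1.1
    · exact mem_union_right _ (mem_filter.2 ⟨hpl, hright⟩)
    push Not at hright
    obtain ⟨r, hr, hrl, hlt⟩ := hright
    obtain ⟨⟨hp, hl⟩, hmem⟩ := mem_incidences.1 hpl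
    obtain ⟨e, he, hleft, hline⟩ :=
      exists_mem_consecutiveEdges (hL _ hl) hl hp hmem hr hrl hlt
    exact mem_union_left _ (mem_image.2 ⟨e, he, Prod.ext hleft hline⟩)
  have card_rightmost : #rightmost ≤ #L := by
    refine card_le_card_of_injOn Prod.snd
      (fun pl hpl => (mem_incidences.1 (mem_filter.1 hpl).1).1.2) ?_
    rintro ⟨p, l⟩ hp ⟨q, _⟩ hq rfl
    obtain ⟨hp, pmax⟩ := mem_filter.1 hp
    obtain ⟨hq, qmax⟩ := mem_filter.1 hq
    obtain ⟨⟨hpV, -⟩, hpl⟩ := mem_incidences.1 hp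
    obtain ⟨⟨hqV, -⟩, hql⟩ := mem_incidences.1 hq
    exact Prod.ext (hV hpV hqV ((qmax p hpV hpl).antisymm (pmax q hqV hql))) rfl
  calc #(incidences V L)
      ≤ #((consecutiveEdges V L).image fun e => (e.left, e.line)) + #rightmost :=
        (card_le_card cover).trans (card_union_le _ _)
    _ ≤ #(consecutiveEdges V L) + #L := add_le_add card_image_le card_rightmost

lemma le_of_pow_three_le {N n m : ℝ} (hn : 0 ≤ n) (hm : 0 ≤ m)
    (h : 6 * n ≤ N → N ^ 3 ≤ 72 * n ^ 2 * m ^ 2) :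
    N ≤ 5 * (n ^ ((2 : ℝ) / 3) * m ^ ((2 : ℝ) / 3)) + 6 * n := by
  have rpow_pow_three {y : ℝ} (hy : 0 ≤ y) : (y ^ ((2 : ℝ) / 3)) ^ 3 = y ^ 2 := by
    rw [← Real.rpow_mul_natCast hy, ← Real.rpow_natCast]
    norm_num
  obtain hsparse | hdense := le_total N (6 * n)
  · linarith [show 0 ≤ n ^ ((2 : ℝ) / 3) * m ^ ((2 : ℝ) / 3) by positivity]
  suffices N ≤ 5 * (n ^ ((2 : ℝ) / 3) * m ^ ((2 : ℝ) / 3)) by linarith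
  refine le_of_pow_le_pow_left₀ three_ne_zero (by positivity) ?_
  calc N ^ 3 ≤ 72 * n ^ 2 * m ^ 2 := h hdense
    _ ≤ 5 ^ 3 * (n ^ 2 * m ^ 2) := by
        rw [mul_assoc]
        gcongr
        norm_num
    _ = (5 * (n ^ ((2 : ℝ) / 3) * m ^ ((2 : ℝ) / 3))) ^ 3 := by
        rw [mul_pow, mul_pow, rpow_pow_three hn, rpow_pow_three hm]

theorem card_incidences_le_of_isNonverticalLine (hV : Set.InjOn Prod.fst (V : Set (ℝ × ℝ)))
    (hL : ∀ l ∈ L, IsNonverticalLine l) :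
    (#(incidences V L) : ℝ) ≤
      5 * ((#V : ℝ) ^ ((2 : ℝ) / 3) * (#L : ℝ) ^ ((2 : ℝ) / 3)) + 6 * #V + #L := by
  have card_edges_le : (#(consecutiveEdges V L) : ℝ) ≤
      5 * ((#V : ℝ) ^ ((2 : ℝ) / 3) * (#L : ℝ) ^ ((2 : ℝ) / 3)) + 6 * #V := by
    refine le_of_pow_three_le (Nat.cast_nonneg _) (Nat.cast_nonneg _) fun hdense => ?_
    calc (#(consecutiveEdges V L) : ℝ) ^ 3
        ≤ 72 * #V ^ 2 * #(crossings (consecutiveEdges V L)) :=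
          (isStraightLineGraph_consecutiveEdges hV L).card_pow_three_le (by exact_mod_cast hdense)
      _ ≤ 72 * #V ^ 2 * #L ^ 2 := by
          gcongr
          exact_mod_cast card_crossings_consecutiveEdges_le hV L
  have card_incidences_le : (#(incidences V L) : ℝ) ≤ #(consecutiveEdges V L) + #L := by
    exact_mod_cast card_incidences_le_card_consecutiveEdges_add hV hL
  linarith

end Incidences

/-! ### Reduction to general position -/

/-- The horizontal shear `(x, y) ↦ (x + τ y, y)`. -/
def shear (τ : ℝ) (p : ℝ × ℝ) : ℝ × ℝ := (p.1 + τ * p.2, p.2)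

lemma shear_neg_shear (τ : ℝ) (p : ℝ × ℝ) : shear (-τ) (shear τ p) = p := by
  ext <;> simp [shear]

lemma shear_injective (τ : ℝ) : Function.Injective (shear τ) :=
  Function.LeftInverse.injective (shear_neg_shear τ)

lemma image_shear (τ : ℝ) (l : Set (ℝ × ℝ)) : shear τ '' l = shear (-τ) ⁻¹' l :=
  congrFun (Set.image_eq_preimage_of_inverse (shear_neg_shear τ)
    fun p => by simpa only [neg_neg] using shear_neg_shear (-τ) p) l

lemma eventually_eq_of_shear_fst_eq (p q : ℝ × ℝ) :
    ∀ᶠ τ in Filter.cofinite, (shear τ p).1 = (shear τ q).1 → p = q := by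
  filter_upwards [(Set.finite_singleton ((q.1 - p.1) / (p.2 - q.2))).eventually_cofinite_notMem]
    with τ hτ h
  simp only [shear] at h
  have snd_eq : p.2 = q.2 := by
    by_contra hne
    refine hτ (eq_div_of_mul_eq (sub_ne_zero.2 hne) ?_)
    linarith
  refine Prod.ext ?_ snd_eq
  rw [snd_eq] at h
  exact add_right_cancel h

lemma eventually_isNonverticalLine_image_shear {l : Set (ℝ × ℝ)} (hl : IsAffineLine l) :
    ∀ᶠ τ in Filter.cofinite, IsNonverticalLine (shear τ '' l) := by
  obtain ⟨a, b, c, hab, rfl⟩ := hl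
  filter_upwards [(Set.finite_singleton (b / a)).eventually_cofinite_notMem] with τ hτ
  have hne : b - a * τ ≠ 0 := by
    intro h
    by_cases ha : a = 0
    · refine hab (Prod.ext ha ?_)
      simpa only [ha, zero_mul, sub_zero] using h
    · exact hτ (eq_div_of_mul_eq ha (by linarith))
  refine ⟨-a / (b - a * τ), c / (b - a * τ), ?_⟩
  ext p
  simp only [image_shear, shear, Set.mem_preimage, Set.mem_ofPred_eq]
  rw [div_mul_eq_mul_div, ← add_div, eq_div_iff hne]
  constructor <;> intro h <;> linarith

lemma exists_shear_general_position (P : Finset (ℝ × ℝ)) {L : Finset (Set (ℝ × ℝ))}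
    (hL : ∀ l ∈ L, IsAffineLine l) :
    ∃ τ, Set.InjOn Prod.fst (P.image (shear τ) : Set (ℝ × ℝ)) ∧
      ∀ l ∈ L.image (shear τ '' ·), IsNonverticalLine l := by
  have points : ∀ᶠ τ in Filter.cofinite, ∀ p ∈ P, ∀ q ∈ P,
      (shear τ p).1 = (shear τ q).1 → p = q := by
    simp only [Filter.eventually_all_finset]
    exact fun p _ q _ => eventually_eq_of_shear_fst_eq p q
  have lines : ∀ᶠ τ in Filter.cofinite, ∀ l ∈ L, IsNonverticalLine (shear τ '' l) :=
    (Filter.eventually_all_finset L).2 fun l hl =>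
      eventually_isNonverticalLine_image_shear (hL l hl)
  obtain ⟨τ, hP, hL'⟩ := (points.and lines).exists
  refine ⟨τ, ?_, forall_mem_image.2 hL'⟩
  rw [coe_image]
  rintro _ ⟨p, hp, rfl⟩ _ ⟨q, hq, rfl⟩ h
  rw [hP p hp q hq h]

end SzemerediTrotter

open SzemerediTrotter in
theorem stmt_4 :
    ∃ C : ℝ, 0 < C ∧
      ∀ (P : Finset (ℝ × ℝ)) (L : Finset (Set (ℝ × ℝ))),
        (∀ l ∈ L, IsAffineLine l) →
        ((((P ×ˢ L).filter fun pl => pl.1 ∈ pl.2).card : ℝ)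
          ≤ C * ((P.card : ℝ) ^ ((2 : ℝ) / 3) * (L.card : ℝ) ^ ((2 : ℝ) / 3)
              + (P.card : ℝ) + (L.card : ℝ))) := by
  refine ⟨6, by norm_num, fun P L hL => ?_⟩
  change (#(incidences P L) : ℝ) ≤ _
  obtain ⟨τ, hP, hL'⟩ := exists_shear_general_position P hL
  have hτ := shear_injective τ
  have key := card_incidences_le_of_isNonverticalLine hP hL'
  rw [card_incidences_image hτ, card_image_of_injective _ hτ,
    card_image_of_injective _ hτ.image_injective] at key
  have : 0 ≤ (#P : ℝ) ^ ((2 : ℝ) / 3) * (#L : ℝ) ^ ((2 : ℝ) / 3) := by positivity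
  linarith [(#L).cast_nonneg (α := ℝ)]
end

section
/- (Weighted Szemerédi–Trotter theorem.) There exists an absolute constant C > 0 such that the following holds. Let P be a finite set of points in ℝ², L a finite set of affine lines in ℝ², and let w : P ∪ L → ℝ_{>0} be a positive weight function. Set w_P = max_{p∈P} w(p), w_L = max_{l∈L} w(l), W_P = Σ_{p∈P} w(p), W_L = Σ_{l∈L} w(l). Then the number of weighted incidences I_w = Σ_{p∈P, l∈L, p∈l} w(p)·w(l) satisfies I_w ≤ C·((w_P·w_L)^(1/3)·(W_P·W_L)^(2/3) + w_P·W_L + w_L·W_P). -/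
open Finset
open scoped Classical

/-!
In a noncrossing straight-line drawing, charge every edge `e` to the leftmost vertex in the wedge
between `e` and the next edge above it with the same left endpoint. A vertex is charged at most
twice, once by an edge through it and once by an edge below it, and at most one edge per left
endpoint has no edge above it, so a drawing on `V` has at most `3 * #V` edges. Random sampling of
the vertices turns this into the crossing lemma. Apply it to the drawing whose edges join
consecutive points on the given lines: it has almost as many edges as there are incidences, but at
most one crossing for every pair of lines. This is Székely's proof of the unweighted theorem.

For the weighted theorem, consider first the weights of the points, with total `W` and maximum `w`.
By concavity the power `#S ^ (2 / 3)` in the unweighted bound for a set `S` of points lies below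
its tangent at `#S = W / w`. A bound linear in `#S` for all `S` passes to weights, as one sees
from the set `S` of those points that lie on more lines than the slope of the bound. The tangent
point is chosen such that the result is the weighted bound without loss in the constant. The weights
of the lines are treated in the same way.
-/

/-! ### Nonvertical lines -/

/-- The nonvertical line `y = slope * x + intercept` of the plane `K × K`. Vertical lines are
counted separately: a point lies on only one of them. -/
@[ext]
structure NonverticalLine (K : Type*) where
  slope : K
  intercept : K

namespace NonverticalLine

variable {K : Type*} [Field K]

/-- The height of the line above the abscissa `x`. -/
def eval (ℓ : NonverticalLine K) (x : K) : K := ℓ.slope * x + ℓ.intercept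

/-- The line as a set of points of the plane. -/
def graph (ℓ : NonverticalLine K) : Set (K × K) := {p | p.2 = ℓ.eval p.1}

variable {ℓ m : NonverticalLine K} {x y : K}

lemma eval_eq_eval_add_slope_mul (ℓ : NonverticalLine K) (x y : K) :
    ℓ.eval y = ℓ.eval x + ℓ.slope * (y - x) := by
  simp only [eval]
  ring

lemma eq_of_slope_eq_of_eval_eq (hslope : ℓ.slope = m.slope) (hx : ℓ.eval x = m.eval x) :
    ℓ = m := by
  refine NonverticalLine.ext hslope ?_
  simpa only [eval, hslope, add_right_inj] using hx

lemma eq_of_eval_eq_of_eval_eq (hne : ℓ ≠ m) (hx : ℓ.eval x = m.eval x)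
    (hy : ℓ.eval y = m.eval y) : x = y := by
  have hprod : (ℓ.slope - m.slope) * (y - x) = 0 := by
    rw [eval_eq_eval_add_slope_mul ℓ x, eval_eq_eval_add_slope_mul m x] at hy
    linear_combination hy - hx
  rcases mul_eq_zero.1 hprod with hslope | hxy
  · exact absurd (eq_of_slope_eq_of_eval_eq (sub_eq_zero.1 hslope) hx) hne
  · exact (sub_eq_zero.1 hxy).symm

lemma graph_injective : Function.Injective (graph : NonverticalLine K → Set (K × K)) := by
  intro ℓ m h
  have heval (x : K) : ℓ.eval x = m.eval x := by
    have hx : (x, ℓ.eval x) ∈ m.graph := h ▸ (rfl : (x, ℓ.eval x) ∈ ℓ.graph)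
    exact hx
  by_contra hne
  exact zero_ne_one (eq_of_eval_eq_of_eval_eq hne (heval 0) (heval 1))

lemma eq_of_mem_graph_of_fst_eq {p q : K × K} (hp : p ∈ ℓ.graph) (hq : q ∈ ℓ.graph)
    (h : p.1 = q.1) : p = q :=
  Prod.ext h (by rw [hp, hq, h])

variable [LinearOrder K] [IsStrictOrderedRing K]

lemma eval_lt_eval_iff_slope_lt_slope (hx : ℓ.eval x = m.eval x) (hxy : x < y) :
    ℓ.eval y < m.eval y ↔ ℓ.slope < m.slope := by
  rw [eval_eq_eval_add_slope_mul ℓ x, eval_eq_eval_add_slope_mul m x, hx, add_lt_add_iff_left,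
    mul_lt_mul_iff_left₀ (sub_pos.2 hxy)]

lemma exists_mem_Ioo_eval_eq (hxy : x < y) (hx : m.eval x < ℓ.eval x)
    (hy : ℓ.eval y < m.eval y) : ∃ z ∈ Set.Ioo x y, ℓ.eval z = m.eval z := by
  set a := ℓ.eval x - m.eval x with ha
  set b := m.eval y - ℓ.eval y with hb
  have ha_pos : 0 < a := sub_pos.2 hx
  have hb_pos : 0 < b := sub_pos.2 hy
  have hab : a + b = (m.slope - ℓ.slope) * (y - x) := by
    rw [ha, hb, eval_eq_eval_add_slope_mul ℓ x y, eval_eq_eval_add_slope_mul m x y]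
    ring
  have hstep : (y - x) * (a / (a + b)) < y - x :=
    mul_lt_of_lt_one_right (sub_pos.2 hxy) ((div_lt_one (by positivity)).2 (by linarith))
  have hstep_pos : 0 < (y - x) * (a / (a + b)) :=
    mul_pos (sub_pos.2 hxy) (by positivity)
  refine ⟨x + (y - x) * (a / (a + b)), ⟨by linarith, by linarith⟩, ?_⟩
  have hzero : a = (m.slope - ℓ.slope) * (y - x) * (a / (a + b)) := by
    rw [← hab]
    field_simp
  rw [eval_eq_eval_add_slope_mul ℓ x, eval_eq_eval_add_slope_mul m x]
  linear_combination hzero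

end NonverticalLine

/-! ### Noncrossing straight-line drawings -/

/-- A nonvertical segment of the plane, as an edge of a straight-line drawing. The supporting line
is determined by the endpoints but is carried along for convenience. -/
@[ext]
structure StraightEdge (K : Type*) [Field K] [LinearOrder K] where
  left : K × K
  right : K × K
  line : NonverticalLine K
  left_lt_right : left.1 < right.1
  left_mem : left ∈ line.graph
  right_mem : right ∈ line.graph

section Drawing

variable {K : Type*} [Field K] [LinearOrder K]

namespace StraightEdge

/-- The set of the two endpoints. -/
def ends (e : StraightEdge K) : Finset (K × K) := {e.left, e.right}

/-- Two edges cross if they share a relative interior point. In particular an edge crosses itself,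
and so do overlapping collinear edges. -/
def Crosses (e f : StraightEdge K) : Prop :=
  ∃ x ∈ Set.Ioo e.left.1 e.right.1 ∩ Set.Ioo f.left.1 f.right.1, e.line.eval x = f.line.eval x

variable {e f : StraightEdge K} {V : Finset (K × K)}

lemma ends_subset_iff : e.ends ⊆ V ↔ e.left ∈ V ∧ e.right ∈ V := by
  rw [ends, insert_subset_iff, singleton_subset_iff]

lemma card_ends (e : StraightEdge K) : #e.ends = 2 :=
  card_pair fun h => e.left_lt_right.ne (congrArg Prod.fst h)

lemma eval_left_eq_of_left_eq (h : e.left = f.left) :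
    e.line.eval e.left.1 = f.line.eval e.left.1 := by
  rw [← e.left_mem, h, ← f.left_mem]

variable [IsStrictOrderedRing K]

lemma eval_lt_eval_iff_of_left_eq (h : e.left = f.left) {x : K} (hx : e.left.1 < x) :
    e.line.eval x < f.line.eval x ↔ e.line.slope < f.line.slope :=
  NonverticalLine.eval_lt_eval_iff_slope_lt_slope (eval_left_eq_of_left_eq h) hx

lemma crosses_of_left_eq_of_slope_eq (hleft : e.left = f.left)
    (hslope : e.line.slope = f.line.slope) : e.Crosses f := by
  have hline := NonverticalLine.eq_of_slope_eq_of_eval_eq hslope (eval_left_eq_of_left_eq hleft)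
  have hf : e.left.1 < f.right.1 := hleft ▸ f.left_lt_right
  obtain ⟨x, hx, hx'⟩ := exists_between (lt_min e.left_lt_right hf)
  rw [lt_min_iff] at hx'
  exact ⟨x, ⟨⟨hx, hx'.1⟩, ⟨hleft ▸ hx, hx'.2⟩⟩, by rw [hline]⟩

lemma crosses_of_eval_lt_of_eval_lt {x y : K} (hxy : x < y)
    (he : e.left.1 ≤ x ∧ y ≤ e.right.1) (hf : f.left.1 ≤ x ∧ y ≤ f.right.1)
    (hx : f.line.eval x < e.line.eval x) (hy : e.line.eval y < f.line.eval y) :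
    e.Crosses f := by
  obtain ⟨z, ⟨hxz, hzy⟩, hz⟩ := NonverticalLine.exists_mem_Ioo_eval_eq hxy hx hy
  exact ⟨z, ⟨⟨he.1.trans_lt hxz, hzy.trans_le he.2⟩, ⟨hf.1.trans_lt hxz, hzy.trans_le hf.2⟩⟩, hz⟩

end StraightEdge

/-- Some edge of `E` leaves the left endpoint of `e` with a larger slope. -/
def HasEdgeAbove (E : Finset (StraightEdge K)) (e : StraightEdge K) : Prop :=
  ∃ f ∈ E, e.left = f.left ∧ e.line.slope < f.line.slope

/-- `f` is the edge of `E` directly above `e` among those with the same left endpoint as `e`. -/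
structure IsNextAbove (E : Finset (StraightEdge K)) (e f : StraightEdge K) : Prop where
  mem : f ∈ E
  left_eq : e.left = f.left
  slope_lt : e.line.slope < f.line.slope
  slope_le_of_lt : ∀ g ∈ E, g.left = e.left → g.line.slope < f.line.slope →
    g.line.slope ≤ e.line.slope

/-- The point `r` lies in the triangular wedge between the edges `e` (below) and `f` (above) that
start at a common left endpoint, the endpoint excluded. -/
structure InWedge (e f : StraightEdge K) (r : K × K) : Prop where
  left_lt : e.left.1 < r.1
  le_right_lower : r.1 ≤ e.right.1
  le_right_upper : r.1 ≤ f.right.1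
  lower_le : e.line.eval r.1 ≤ r.2
  le_upper : r.2 ≤ f.line.eval r.1

/-- `w` is a leftmost point of `V` in the wedge between `e` and the next edge `f` above it. Edges
are counted below by charging `e` to `w`. -/
structure IsFirstWedgeVertex (V : Finset (K × K)) (E : Finset (StraightEdge K))
    (e f : StraightEdge K) (w : K × K) : Prop where
  next : IsNextAbove E e f
  mem : w ∈ V
  inWedge : InWedge e f w
  le_of_inWedge : ∀ r ∈ V, InWedge e f r → w.1 ≤ r.1

variable {V : Finset (K × K)} {E : Finset (StraightEdge K)} {e f e' f' : StraightEdge K}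
  {w : K × K}

lemma exists_isNextAbove (h : HasEdgeAbove E e) : ∃ f, IsNextAbove E e f := by
  have hne : {f ∈ E | e.left = f.left ∧ e.line.slope < f.line.slope}.Nonempty :=
    filter_nonempty_iff.2 h
  obtain ⟨f, hf, hmin⟩ := exists_min_image _ (fun f => f.line.slope) hne
  simp only [mem_filter] at hf hmin
  exact ⟨f, hf.1, hf.2.1, hf.2.2, fun g hg hleft hlt =>
    not_lt.1 fun hgt => hlt.not_ge (hmin g ⟨hg, hleft.symm, hgt⟩)⟩

variable [IsStrictOrderedRing K]

lemma IsNextAbove.eval_lt_eval (h : IsNextAbove E e f) {x : K} (hx : e.left.1 < x) :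
    e.line.eval x < f.line.eval x :=
  (StraightEdge.eval_lt_eval_iff_of_left_eq h.left_eq hx).2 h.slope_lt

lemma IsNextAbove.inWedge_right_or (h : IsNextAbove E e f) :
    InWedge e f e.right ∨ InWedge e f f.right := by
  have hf : e.left.1 < f.right.1 := h.left_eq ▸ f.left_lt_right
  rcases le_total e.right.1 f.right.1 with hle | hle
  · exact .inl ⟨e.left_lt_right, le_rfl, hle, e.right_mem.ge,
      e.right_mem.trans_le (h.eval_lt_eval e.left_lt_right).le⟩
  · exact .inr ⟨hf, hle, le_rfl, (h.eval_lt_eval hf).le.trans f.right_mem.ge, f.right_mem.le⟩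

lemma exists_isFirstWedgeVertex (hV : ∀ e ∈ E, e.ends ⊆ V) (he : e ∈ E)
    (h : HasEdgeAbove E e) : ∃ f w, IsFirstWedgeVertex V E e f w := by
  obtain ⟨f, hf⟩ := exists_isNextAbove h
  have hright (g : StraightEdge K) (hg : g ∈ E) : g.right ∈ V :=
    (StraightEdge.ends_subset_iff.1 (hV g hg)).2
  have hne : {r ∈ V | InWedge e f r}.Nonempty := by
    rw [filter_nonempty_iff]
    exact hf.inWedge_right_or.elim (fun h => ⟨e.right, hright e he, h⟩)
      fun h => ⟨f.right, hright f hf.mem, h⟩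
  obtain ⟨w, hw, hmin⟩ := exists_min_image _ Prod.fst hne
  simp only [mem_filter] at hw hmin
  exact ⟨f, w, hf, hw.1, hw.2, fun r hr hrW => hmin r ⟨hr, hrW⟩⟩

namespace IsFirstWedgeVertex

lemma eval_lt_eval_of_mem_iff_mem (h : IsFirstWedgeVertex V E e f w)
    (h' : IsFirstWedgeVertex V E e' f' w) (hiff : w ∈ e.line.graph ↔ w ∈ e'.line.graph) :
    e'.line.eval w.1 < f.line.eval w.1 := by
  by_cases hw : w ∈ e.line.graph
  · calc e'.line.eval w.1 = w.2 := (hiff.1 hw).symm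
      _ = e.line.eval w.1 := hw
      _ < f.line.eval w.1 := h.next.eval_lt_eval h.inWedge.left_lt
  · have hw' : e'.line.eval w.1 ≠ w.2 := fun heq => hw (hiff.2 heq.symm)
    exact (h'.inWedge.lower_le.lt_of_ne hw').trans_le h.inWedge.le_upper

/-- If `e'.left` were outside the wedge of `e` then `e'` or `f'`, both of which start there and
reach `w` inside the wedge, would have to cross its boundary. -/
lemma left_eq_of_left_le (hX : (E : Set (StraightEdge K)).Pairwise fun e f => ¬ e.Crosses f)
    (he : e ∈ E) (he' : e' ∈ E) (h : IsFirstWedgeVertex V E e f w)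
    (h' : IsFirstWedgeVertex V E e' f' w) (hmem : e'.left ∈ V)
    (hlower : e'.line.eval w.1 < f.line.eval w.1) (hupper : e.line.eval w.1 < f'.line.eval w.1)
    (hle : e.left.1 ≤ e'.left.1) : e.left = e'.left := by
  have hlt : e'.left.1 < w.1 := h'.inWedge.left_lt
  have hbelow : e'.left.2 ≤ f.line.eval e'.left.1 := by
    by_contra! hgt
    have hcross : e'.Crosses f := StraightEdge.crosses_of_eval_lt_of_eval_lt hlt
      ⟨le_rfl, h'.inWedge.le_right_lower⟩ ⟨h.next.left_eq ▸ hle, h.inWedge.le_right_upper⟩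
      (hgt.trans_eq e'.left_mem) hlower
    exact hlower.ne (by rw [hX.eq he' h.next.mem (not_not_intro hcross)])
  have habove : e.line.eval e'.left.1 ≤ e'.left.2 := by
    by_contra! hgt
    have hcross : e.Crosses f' := StraightEdge.crosses_of_eval_lt_of_eval_lt hlt
      ⟨hle, h.inWedge.le_right_lower⟩ ⟨h'.next.left_eq ▸ le_rfl, h'.inWedge.le_right_upper⟩
      (by rwa [← StraightEdge.eval_left_eq_of_left_eq h'.next.left_eq, ← e'.left_mem]) hupper
    exact hupper.ne (by rw [hX.eq he h'.next.mem (not_not_intro hcross)])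
  rcases hle.lt_or_eq with hlt' | heq
  · have hwedge : InWedge e f e'.left := ⟨hlt', hlt.le.trans h.inWedge.le_right_lower,
      hlt.le.trans h.inWedge.le_right_upper, habove, hbelow⟩
    exact absurd hlt (h.le_of_inWedge _ hmem hwedge).not_gt
  · refine Prod.ext heq (le_antisymm ?_ ?_)
    · rwa [e.left_mem, heq]
    · rwa [← heq, ← StraightEdge.eval_left_eq_of_left_eq h.next.left_eq, ← e.left_mem] at hbelow

lemma eq_of_mem_iff_mem (hV : ∀ e ∈ E, e.ends ⊆ V)
    (hX : (E : Set (StraightEdge K)).Pairwise fun e f => ¬ e.Crosses f)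
    (he : e ∈ E) (he' : e' ∈ E) (h : IsFirstWedgeVertex V E e f w)
    (h' : IsFirstWedgeVertex V E e' f' w) (hiff : w ∈ e.line.graph ↔ w ∈ e'.line.graph) :
    e = e' := by
  have hlower := h.eval_lt_eval_of_mem_iff_mem h' hiff
  have hupper := h'.eval_lt_eval_of_mem_iff_mem h hiff.symm
  have hmem (g : StraightEdge K) (hg : g ∈ E) : g.left ∈ V :=
    (StraightEdge.ends_subset_iff.1 (hV g hg)).1
  have hleft : e.left = e'.left := by
    rcases le_total e.left.1 e'.left.1 with hle | hle
    · exact h.left_eq_of_left_le hX he he' h' (hmem e' he') hlower hupper hle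
    · exact (h'.left_eq_of_left_le hX he' he h (hmem e he) hupper hlower hle).symm
  have hslope' : e'.line.slope < f.line.slope :=
    (StraightEdge.eval_lt_eval_iff_of_left_eq (hleft.symm.trans h.next.left_eq)
      h'.inWedge.left_lt).1 hlower
  have hslope : e.line.slope < f'.line.slope :=
    (StraightEdge.eval_lt_eval_iff_of_left_eq (hleft.trans h'.next.left_eq)
      h.inWedge.left_lt).1 hupper
  have hslope_eq : e.line.slope = e'.line.slope :=
    le_antisymm (h'.next.slope_le_of_lt e he hleft hslope)
      (h.next.slope_le_of_lt e' he' hleft.symm hslope')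
  exact hX.eq he he' (not_not_intro (StraightEdge.crosses_of_left_eq_of_slope_eq hleft hslope_eq))

end IsFirstWedgeVertex

lemma card_filter_not_hasEdgeAbove_le (hV : ∀ e ∈ E, e.ends ⊆ V)
    (hX : (E : Set (StraightEdge K)).Pairwise fun e f => ¬ e.Crosses f) :
    #{e ∈ E | ¬ HasEdgeAbove E e} ≤ #V := by
  refine card_le_card_of_injOn StraightEdge.left ?_ ?_
  · intro e he
    exact (StraightEdge.ends_subset_iff.1 (hV e (mem_filter.1 he).1)).1
  · intro e he f hf hleft
    obtain ⟨he, htop⟩ := mem_filter.1 he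
    obtain ⟨hf, htop'⟩ := mem_filter.1 hf
    simp only [HasEdgeAbove, not_exists, not_and, not_lt] at htop htop'
    exact hX.eq he hf (not_not_intro (StraightEdge.crosses_of_left_eq_of_slope_eq hleft
      (le_antisymm (htop' e he hleft.symm) (htop f hf hleft))))

lemma card_filter_hasEdgeAbove_le (hV : ∀ e ∈ E, e.ends ⊆ V)
    (hX : (E : Set (StraightEdge K)).Pairwise fun e f => ¬ e.Crosses f) :
    #{e ∈ E | HasEdgeAbove E e} ≤ 2 * #V := by
  have hcard : #(V ×ˢ (univ : Finset Bool)) = 2 * #V := by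
    rw [card_product, card_univ, Fintype.card_bool, mul_comm]
  rw [← hcard]
  refine card_le_card_of_forall_subsingleton (fun e x => (∃ f, IsFirstWedgeVertex V E e f x.1) ∧
    x.2 = decide (x.1 ∈ e.line.graph)) ?_ ?_
  · intro e he
    obtain ⟨he, hnext⟩ := mem_filter.1 he
    obtain ⟨f, w, h⟩ := exists_isFirstWedgeVertex hV he hnext
    exact ⟨(w, decide (w ∈ e.line.graph)), mem_product.2 ⟨h.mem, mem_univ _⟩, ⟨f, h⟩, rfl⟩
  · rintro x - e ⟨he, ⟨f, h⟩, hside⟩ e' ⟨he', ⟨f', h'⟩, hside'⟩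
    exact h.eq_of_mem_iff_mem hV hX (mem_filter.1 he).1 (mem_filter.1 he').1 h'
      (decide_eq_decide.1 (hside.symm.trans hside'))

theorem card_le_three_mul_card_of_pairwise_not_crosses (hV : ∀ e ∈ E, e.ends ⊆ V)
    (hX : (E : Set (StraightEdge K)).Pairwise fun e f => ¬ e.Crosses f) : #E ≤ 3 * #V := by
  have hsplit := card_filter_add_card_filter_not (s := E) fun e => HasEdgeAbove E e
  have htop := card_filter_not_hasEdgeAbove_le hV hX
  have hrest := card_filter_hasEdgeAbove_le hV hX
  omega

end Drawing

/-! ### Random sampling and the crossing lemma -/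

section Sampling

variable {α ι κ R : Type*} [DecidableEq α] [CommRing R]

/-- The probability that the random subset of `V` containing each element independently with
probability `p` is equal to `S`. -/
def bernoulliWeight (p : R) (V S : Finset α) : R := p ^ #S * (1 - p) ^ #(V \ S)

lemma sum_powerset_filter_bernoulliWeight (p : R) {V T : Finset α} (hT : T ⊆ V) :
    ∑ S ∈ V.powerset with T ⊆ S, bernoulliWeight p V S = p ^ #T := by
  have hterm (S : Finset α) : (if T ⊆ S then bernoulliWeight p V S else 0) =
      (∏ _i ∈ S, p) * ∏ i ∈ V \ S, if i ∈ T then 0 else 1 - p := by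
    rw [prod_const]
    split_ifs with hTS
    · have hprod : ∏ i ∈ V \ S, (if i ∈ T then 0 else 1 - p) = (1 - p) ^ #(V \ S) :=
        prod_eq_pow_card fun i hi => if_neg fun hiT => (mem_sdiff.1 hi).2 (hTS hiT)
      rw [hprod, bernoulliWeight]
    · obtain ⟨i, hiT, hiS⟩ := not_subset.1 hTS
      have hprod : ∏ i ∈ V \ S, (if i ∈ T then 0 else 1 - p) = 0 :=
        prod_eq_zero (mem_sdiff.2 ⟨hT hiT, hiS⟩) (if_pos hiT)
      rw [hprod, mul_zero]
  calc ∑ S ∈ V.powerset with T ⊆ S, bernoulliWeight p V S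
      = ∏ i ∈ V, (p + if i ∈ T then 0 else 1 - p) := by
        rw [sum_filter, prod_add, sum_congr rfl fun S _ => hterm S]
    _ = ∏ i ∈ V, if i ∈ T then p else 1 :=
        prod_congr rfl fun i _ => by split_ifs <;> ring
    _ = p ^ #T := by rw [prod_ite_mem, inter_eq_right.2 hT, prod_const]

lemma sum_bernoulliWeight_mul_card_filter_subset (p : R) {V : Finset α} {F : Finset ι}
    {T : ι → Finset α} {n : ℕ} (hT : ∀ i ∈ F, T i ⊆ V) (hn : ∀ i ∈ F, #(T i) = n) :
    ∑ S ∈ V.powerset, bernoulliWeight p V S * #{i ∈ F | T i ⊆ S} = #F * p ^ n := by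
  calc ∑ S ∈ V.powerset, bernoulliWeight p V S * #{i ∈ F | T i ⊆ S}
      = ∑ S ∈ V.powerset, ∑ i ∈ F, if T i ⊆ S then bernoulliWeight p V S else 0 :=
        sum_congr rfl fun S _ => by rw [← sum_filter, sum_const, nsmul_eq_mul, mul_comm]
    _ = ∑ i ∈ F, ∑ S ∈ V.powerset with T i ⊆ S, bernoulliWeight p V S := by
        simp only [sum_comm (s := V.powerset), sum_filter]
    _ = ∑ _i ∈ F, p ^ n :=
        sum_congr rfl fun i hi => by rw [sum_powerset_filter_bernoulliWeight p (hT i hi), hn i hi]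
    _ = #F * p ^ n := by rw [sum_const, nsmul_eq_mul]

/-- Take the expectation of the hypothesis over a random subset `S` of `V`. -/
lemma card_mul_pow_le_of_forall_subset [LinearOrder R] [IsStrictOrderedRing R] {p : R}
    (hp₀ : 0 ≤ p) (hp₁ : p ≤ 1) {V : Finset α} {E : Finset ι} {X : Finset κ}
    {s : ι → Finset α} {t : κ → Finset α} {m n c : ℕ}
    (hs : ∀ i ∈ E, s i ⊆ V) (ht : ∀ i ∈ X, t i ⊆ V)
    (hm : ∀ i ∈ E, #(s i) = m) (hn : ∀ i ∈ X, #(t i) = n)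
    (h : ∀ S ⊆ V, #{i ∈ E | s i ⊆ S} ≤ c * #S + #{i ∈ X | t i ⊆ S}) :
    #E * p ^ m ≤ c * (#V * p) + #X * p ^ n := by
  have hcardV : ∑ S ∈ V.powerset, bernoulliWeight p V S * #S = #V * p := by
    have hsingle := sum_bernoulliWeight_mul_card_filter_subset p (F := V) (T := ({·})) (n := 1)
      (fun v hv => singleton_subset_iff.2 hv) fun v _ => card_singleton v
    rw [← pow_one p, ← hsingle, pow_one]
    refine sum_congr rfl fun S hS => ?_
    simp only [singleton_subset_iff, filter_mem_eq_inter, inter_eq_right.2 (mem_powerset.1 hS)]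
  rw [← sum_bernoulliWeight_mul_card_filter_subset p hs hm,
    ← sum_bernoulliWeight_mul_card_filter_subset p ht hn, ← hcardV, mul_sum, ← sum_add_distrib]
  refine sum_le_sum fun S hS => ?_
  have hweight : 0 ≤ bernoulliWeight p V S :=
    mul_nonneg (pow_nonneg hp₀ _) (pow_nonneg (sub_nonneg.2 hp₁) _)
  have hcast : (#{i ∈ E | s i ⊆ S} : R) ≤ c * #S + #{i ∈ X | t i ⊆ S} := by
    exact_mod_cast h S (mem_powerset.1 hS)
  calc bernoulliWeight p V S * #{i ∈ E | s i ⊆ S}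
      ≤ bernoulliWeight p V S * (c * #S + #{i ∈ X | t i ⊆ S}) :=
        mul_le_mul_of_nonneg_left hcast hweight
    _ = c * (bernoulliWeight p V S * #S) + bernoulliWeight p V S * #{i ∈ X | t i ⊆ S} := by ring

end Sampling

section CrossingLemma

variable {K : Type*} [Field K] [LinearOrder K]

/-- The ordered pairs of distinct crossing edges of `E`; each crossing is counted twice. -/
noncomputable def crossingPairs (E : Finset (StraightEdge K)) :
    Finset (StraightEdge K × StraightEdge K) :=
  {t ∈ E.offDiag | t.1.Crosses t.2}

variable {V : Finset (K × K)} {E : Finset (StraightEdge K)} {e f : StraightEdge K}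

lemma mem_crossingPairs : (e, f) ∈ crossingPairs E ↔ e ∈ E ∧ f ∈ E ∧ e ≠ f ∧ e.Crosses f := by
  simp only [crossingPairs, mem_filter, mem_offDiag, and_assoc]

lemma crossingPairs_filter_ends_subset (E : Finset (StraightEdge K)) (S : Finset (K × K)) :
    crossingPairs {e ∈ E | e.ends ⊆ S} =
      {t ∈ crossingPairs E | t.1.ends ∪ t.2.ends ⊆ S} := by
  ext ⟨e, f⟩
  simp only [mem_crossingPairs, mem_filter, union_subset_iff]
  tauto

lemma StraightEdge.Crosses.disjoint_ends (h : e.Crosses f) (hline : e.line ≠ f.line) :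
    Disjoint e.ends f.ends := by
  obtain ⟨x, ⟨⟨hex, hxe⟩, -⟩, hx⟩ := h
  have hcommon {v : K × K} (he : v ∈ e.line.graph) (hf : v ∈ f.line.graph) : v.1 = x :=
    NonverticalLine.eq_of_eval_eq_of_eval_eq hline (he.symm.trans hf) hx
  have hmem {g : StraightEdge K} {v : K × K} (hv : v ∈ g.ends) : v ∈ g.line.graph := by
    rcases mem_insert.1 hv with rfl | hv
    · exact g.left_mem
    · exact mem_singleton.1 hv ▸ g.right_mem
  refine disjoint_left.2 fun v hve hvf => ?_
  have hvx := hcommon (hmem hve) (hmem hvf)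
  rcases mem_insert.1 hve with rfl | hv
  · exact hex.ne hvx
  · exact hxe.ne' (mem_singleton.1 hv ▸ hvx)

lemma StraightEdge.Crosses.card_ends_union_ends (h : e.Crosses f) (hline : e.line ≠ f.line) :
    #(e.ends ∪ f.ends) = 4 := by
  rw [card_union_of_disjoint (h.disjoint_ends hline), e.card_ends, f.card_ends]

variable [IsStrictOrderedRing K]

/-- Delete every edge that takes part in a crossing. -/
lemma card_le_three_mul_card_add_card_crossingPairs (hV : ∀ e ∈ E, e.ends ⊆ V) :
    #E ≤ 3 * #V + #(crossingPairs E) := by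
  set crossing := (crossingPairs E).image Prod.fst
  have hrest : #(E \ crossing) ≤ 3 * #V := by
    refine card_le_three_mul_card_of_pairwise_not_crosses
      (fun e he => hV e (mem_sdiff.1 he).1) fun e he f hf hne h => ?_
    obtain ⟨he, he'⟩ := mem_sdiff.1 he
    exact he' (mem_image_of_mem Prod.fst
      (mem_crossingPairs.2 ⟨he, (mem_sdiff.1 hf).1, hne, h⟩))
  calc #E ≤ #(E \ crossing) + #crossing := card_le_card_sdiff_add_card
    _ ≤ 3 * #V + #(crossingPairs E) := add_le_add hrest card_image_le

theorem card_mul_sq_le_of_crossingPairs (hV : ∀ e ∈ E, e.ends ⊆ V)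
    (hline : ∀ t ∈ crossingPairs E, t.1.line ≠ t.2.line) {p : ℝ} (hp₀ : 0 ≤ p) (hp₁ : p ≤ 1) :
    #E * p ^ 2 ≤ 3 * (#V * p) + #(crossingPairs E) * p ^ 4 := by
  refine card_mul_pow_le_of_forall_subset hp₀ hp₁ (c := 3) (s := StraightEdge.ends)
    (t := fun t => t.1.ends ∪ t.2.ends) hV ?_ (fun e _ => e.card_ends) ?_ ?_
  · rintro ⟨e, f⟩ h
    obtain ⟨he, hf, -⟩ := mem_crossingPairs.1 h
    exact union_subset (hV e he) (hV f hf)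
  · rintro ⟨e, f⟩ h
    obtain ⟨-, -, -, hcross⟩ := mem_crossingPairs.1 h
    exact hcross.card_ends_union_ends (hline _ h)
  · intro S _
    rw [← crossingPairs_filter_ends_subset]
    exact card_le_three_mul_card_add_card_crossingPairs fun e he => (mem_filter.1 he).2

end CrossingLemma

/-! ### The unweighted Szemerédi–Trotter theorem -/

section ConsecutiveEdges

variable {K : Type*} [Field K] [LinearOrder K]

/-- The edges that join consecutive points of `P` along the lines of `M`. -/
noncomputable def consecutiveEdges (P : Finset (K × K)) (M : Finset (NonverticalLine K)) :
    Finset (StraightEdge K) :=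
  {e ∈ (P ×ˢ P ×ˢ M).preimage (fun e : StraightEdge K => (e.left, e.right, e.line))
      (Function.Injective.injOn fun _ _ h => by simpa [StraightEdge.ext_iff] using h) |
    ∀ r ∈ P, r ∈ e.line.graph → r.1 ∉ Set.Ioo e.left.1 e.right.1}

variable {P : Finset (K × K)} {M : Finset (NonverticalLine K)} {e f : StraightEdge K}

lemma mem_consecutiveEdges : e ∈ consecutiveEdges P M ↔ (e.left ∈ P ∧ e.right ∈ P ∧ e.line ∈ M) ∧
    ∀ r ∈ P, r ∈ e.line.graph → r.1 ∉ Set.Ioo e.left.1 e.right.1 := by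
  simp only [consecutiveEdges, mem_filter, mem_preimage, mem_product]

lemma ends_subset_of_mem_consecutiveEdges (he : e ∈ consecutiveEdges P M) : e.ends ⊆ P :=
  have h := (mem_consecutiveEdges.1 he).1
  StraightEdge.ends_subset_iff.2 ⟨h.1, h.2.1⟩

lemma eq_of_mem_consecutiveEdges_of_line_eq (he : e ∈ consecutiveEdges P M)
    (hf : f ∈ consecutiveEdges P M) (hline : e.line = f.line) {x : K}
    (hx : x ∈ Set.Ioo e.left.1 e.right.1 ∩ Set.Ioo f.left.1 f.right.1) : e = f := by
  obtain ⟨⟨he_left, he_right, -⟩, he_gap⟩ := mem_consecutiveEdges.1 he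
  obtain ⟨⟨hf_left, hf_right, -⟩, hf_gap⟩ := mem_consecutiveEdges.1 hf
  obtain ⟨⟨hex, hxe⟩, ⟨hfx, hxf⟩⟩ := hx
  rw [hline] at he_gap
  rw [← hline] at hf_gap
  have hleft : e.left.1 = f.left.1 := le_antisymm
    (not_lt.1 fun h => hf_gap _ he_left e.left_mem ⟨h, hex.trans hxf⟩)
    (not_lt.1 fun h => he_gap _ hf_left f.left_mem ⟨h, hfx.trans hxe⟩)
  have hright : e.right.1 = f.right.1 := le_antisymm
    (not_lt.1 fun h => he_gap _ hf_right f.right_mem ⟨hex.trans hxf, h⟩)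
    (not_lt.1 fun h => hf_gap _ he_right e.right_mem ⟨hfx.trans hxe, h⟩)
  exact StraightEdge.ext
    (NonverticalLine.eq_of_mem_graph_of_fst_eq e.left_mem (hline ▸ f.left_mem) hleft)
    (NonverticalLine.eq_of_mem_graph_of_fst_eq e.right_mem (hline ▸ f.right_mem) hright) hline

lemma line_ne_of_mem_crossingPairs_consecutiveEdges
    (h : (e, f) ∈ crossingPairs (consecutiveEdges P M)) : e.line ≠ f.line := by
  obtain ⟨he, hf, hne, x, hx, -⟩ := mem_crossingPairs.1 h
  exact fun hline => hne (eq_of_mem_consecutiveEdges_of_line_eq he hf hline hx)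

/-- Two distinct lines meet only once, so a pair of lines carries at most one crossing. -/
lemma card_crossingPairs_consecutiveEdges_le (P : Finset (K × K))
    (M : Finset (NonverticalLine K)) :
    #(crossingPairs (consecutiveEdges P M)) ≤ #M ^ 2 := by
  rw [sq, ← card_product]
  refine card_le_card_of_injOn (fun t => (t.1.line, t.2.line)) ?_ ?_
  · rintro ⟨e, f⟩ h
    obtain ⟨he, hf, -⟩ := mem_crossingPairs.1 h
    exact mem_product.2 ⟨(mem_consecutiveEdges.1 he).1.2.2, (mem_consecutiveEdges.1 hf).1.2.2⟩
  · rintro ⟨e, f⟩ h ⟨e', f'⟩ h' hlines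
    obtain ⟨heq, hfeq⟩ := Prod.mk.inj hlines
    have hne := line_ne_of_mem_crossingPairs_consecutiveEdges h
    obtain ⟨he, hf, -, x, hx, hmeet⟩ := mem_crossingPairs.1 h
    obtain ⟨he', hf', -, x', hx', hmeet'⟩ := mem_crossingPairs.1 h'
    obtain rfl : x = x' := NonverticalLine.eq_of_eval_eq_of_eval_eq hne hmeet
      (by rwa [← heq, ← hfeq] at hmeet')
    rw [eq_of_mem_consecutiveEdges_of_line_eq he he' heq ⟨hx.1, hx'.1⟩,
      eq_of_mem_consecutiveEdges_of_line_eq hf hf' hfeq ⟨hx.2, hx'.2⟩]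

lemma exists_mem_consecutiveEdges {p q : K × K} {ℓ : NonverticalLine K} (hp : p ∈ P) (hq : q ∈ P)
    (hℓ : ℓ ∈ M) (hpℓ : p ∈ ℓ.graph) (hqℓ : q ∈ ℓ.graph) (hpq : p.1 < q.1) :
    ∃ e ∈ consecutiveEdges P M, e.left = p ∧ e.line = ℓ := by
  obtain ⟨r, hr, hmin⟩ := exists_min_image {r ∈ P | r ∈ ℓ.graph ∧ p.1 < r.1} Prod.fst
    ⟨q, mem_filter.2 ⟨hq, hqℓ, hpq⟩⟩
  simp only [mem_filter] at hr hmin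
  obtain ⟨hr, hrℓ, hpr⟩ := hr
  refine ⟨⟨p, r, ℓ, hpr, hpℓ, hrℓ⟩, mem_consecutiveEdges.2 ⟨⟨hp, hr, hℓ⟩, ?_⟩, rfl, rfl⟩
  exact fun s hs hsℓ hgap => hgap.2.not_ge (hmin s ⟨hs, hsℓ, hgap.1⟩)

/-- Every incident point of a line except the rightmost is the left end of a consecutive edge. -/
lemma card_incidences_le_card_add_card_consecutiveEdges (P : Finset (K × K))
    (M : Finset (NonverticalLine K)) :
    #{t ∈ P ×ˢ M | t.1 ∈ t.2.graph} ≤ #M + #(consecutiveEdges P M) := by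
  set incidences := {t ∈ P ×ˢ M | t.1 ∈ t.2.graph}
  set leftEnds := (consecutiveEdges P M).image fun e => (e.left, e.line)
  have hrightmost : #(incidences \ leftEnds) ≤ #M := by
    have hle {p q : K × K} {ℓ : NonverticalLine K} (hp : (p, ℓ) ∈ incidences \ leftEnds)
        (hq : (q, ℓ) ∈ incidences \ leftEnds) : q.1 ≤ p.1 := by
      simp only [incidences, leftEnds, mem_sdiff, mem_filter, mem_product, mem_image] at hp hq
      obtain ⟨⟨⟨hpP, hℓ⟩, hpℓ⟩, hlast⟩ := hp
      obtain ⟨⟨⟨hqP, -⟩, hqℓ⟩, -⟩ := hq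
      refine not_lt.1 fun hpq => hlast ?_
      obtain ⟨e, he, hleft, hline⟩ := exists_mem_consecutiveEdges hpP hqP hℓ hpℓ hqℓ hpq
      exact ⟨e, he, Prod.ext hleft hline⟩
    have hgraph {t} (ht : t ∈ incidences \ leftEnds) : t.1 ∈ t.2.graph :=
      (mem_filter.1 (mem_sdiff.1 ht).1).2
    refine card_le_card_of_injOn Prod.snd
      (fun t ht => (mem_product.1 (mem_filter.1 (mem_sdiff.1 ht).1).1).2) ?_
    rintro ⟨p, ℓ⟩ hp ⟨q, m⟩ hq (rfl : ℓ = m)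
    have hpq : p = q := NonverticalLine.eq_of_mem_graph_of_fst_eq (ℓ := ℓ) (hgraph hp) (hgraph hq)
      (le_antisymm (hle hq hp) (hle hp hq))
    rw [hpq]
  calc #incidences ≤ #(incidences \ leftEnds) + #leftEnds := card_le_card_sdiff_add_card
    _ ≤ #M + #(consecutiveEdges P M) := add_le_add hrightmost card_image_le

variable [IsStrictOrderedRing K]

lemma card_incidences_le_of_one_le (P : Finset (K × K)) (M : Finset (NonverticalLine K)) {k : ℝ}
    (hk : 1 ≤ k) :
    (#{t ∈ P ×ˢ M | t.1 ∈ t.2.graph} : ℝ) ≤ #M + (3 * k * #P + #M ^ 2 / k ^ 2) := by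
  have hk_pos : 0 < k := by linarith
  set E := consecutiveEdges P M
  have hinc : (#{t ∈ P ×ˢ M | t.1 ∈ t.2.graph} : ℝ) ≤ #M + #E := by
    exact_mod_cast card_incidences_le_card_add_card_consecutiveEdges P M
  have hpairs : (#(crossingPairs E) : ℝ) ≤ #M ^ 2 := by
    exact_mod_cast card_crossingPairs_consecutiveEdges_le P M
  have hcross := card_mul_sq_le_of_crossingPairs (E := E) (p := k⁻¹)
    (fun e he => ends_subset_of_mem_consecutiveEdges he)
    (fun t ht => line_ne_of_mem_crossingPairs_consecutiveEdges ht)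
    (inv_nonneg.2 hk_pos.le) (inv_le_one_of_one_le₀ hk)
  have hedges : (#E : ℝ) ≤ 3 * k * #P + #M ^ 2 / k ^ 2 := by
    calc (#E : ℝ) = k ^ 2 * (#E * k⁻¹ ^ 2) := by field_simp
      _ ≤ k ^ 2 * (3 * (#P * k⁻¹) + #M ^ 2 * k⁻¹ ^ 4) := by
          gcongr
          exact hcross.trans (by gcongr)
      _ = 3 * k * #P + #M ^ 2 / k ^ 2 := by field_simp
  linarith

end ConsecutiveEdges

/-- The two terms on the left balance at `k = y ^ (2 / 3) / x ^ (1 / 3)`, to which `1` is added to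
ensure `1 ≤ k`. -/
lemma exists_one_le_mul_add_sq_div_sq_le {c x y : ℝ} (hx : 0 < x) (hy : 0 < y) :
    ∃ k : ℝ, 1 ≤ k ∧ c * k * x + y ^ 2 / k ^ 2 ≤
      (c + 1) * x ^ (2 / 3 : ℝ) * y ^ (2 / 3 : ℝ) + c * x := by
  set k := y ^ (2 / 3 : ℝ) / x ^ (1 / 3 : ℝ)
  have hk : 0 < k := by positivity
  have hkx : k * x = x ^ (2 / 3 : ℝ) * y ^ (2 / 3 : ℝ) := by
    have hsplit : x = x ^ (1 / 3 : ℝ) * x ^ (2 / 3 : ℝ) := by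
      rw [← Real.rpow_add hx]
      norm_num
    calc k * x = k * (x ^ (1 / 3 : ℝ) * x ^ (2 / 3 : ℝ)) := by rw [← hsplit]
      _ = x ^ (2 / 3 : ℝ) * y ^ (2 / 3 : ℝ) := by simp only [k]; field_simp
  have hyk : y ^ 2 / k ^ 2 = x ^ (2 / 3 : ℝ) * y ^ (2 / 3 : ℝ) := by
    have hxsq : (x ^ (1 / 3 : ℝ)) ^ 2 = x ^ (2 / 3 : ℝ) := by
      rw [← Real.rpow_mul_natCast hx.le]
      norm_num
    have hycube : (y ^ (2 / 3 : ℝ)) ^ 3 = y ^ 2 := by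
      rw [← Real.rpow_mul_natCast hy.le, ← Real.rpow_natCast]
      norm_num
    rw [← hycube, div_pow, hxsq]
    field_simp
  refine ⟨1 + k, by linarith, ?_⟩
  have hdiv : y ^ 2 / (1 + k) ^ 2 ≤ y ^ 2 / k ^ 2 := by gcongr; linarith
  linear_combination hdiv + hyk + c * hkx

theorem szemeredi_trotter_nonvertical {K : Type*} [Field K] [LinearOrder K]
    [IsStrictOrderedRing K] (P : Finset (K × K)) (M : Finset (NonverticalLine K)) :
    (#{t ∈ P ×ˢ M | t.1 ∈ t.2.graph} : ℝ) ≤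
      4 * (#P : ℝ) ^ (2 / 3 : ℝ) * (#M : ℝ) ^ (2 / 3 : ℝ) + 3 * #P + #M := by
  rcases P.eq_empty_or_nonempty with rfl | hP
  · simp
  rcases M.eq_empty_or_nonempty with rfl | hM
  · simp
  obtain ⟨k, hk, hbound⟩ := exists_one_le_mul_add_sq_div_sq_le (c := 3) (x := #P) (y := #M)
    (mod_cast hP.card_pos) (mod_cast hM.card_pos)
  linarith [card_incidences_le_of_one_le P M hk]

/-- `IsAffineLine` over an arbitrary field; over `ℝ` the two unfold to the same proposition. -/
def IsAffineLineOver (K : Type*) [Field K] (l : Set (K × K)) : Prop :=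
  ∃ a b c : K, (a, b) ≠ (0, 0) ∧ l = {p : K × K | a * p.1 + b * p.2 = c}

lemma IsAffineLineOver.eq_graph_or_eq_vertical {K : Type*} [Field K] {l : Set (K × K)}
    (hl : IsAffineLineOver K l) :
    (∃ ℓ : NonverticalLine K, ℓ.graph = l) ∨ ∃ x : K, l = {p | p.1 = x} := by
  obtain ⟨a, b, c, hab, rfl⟩ := hl
  by_cases hb : b = 0
  · subst hb
    have ha : a ≠ 0 := fun ha => hab (by rw [ha])
    refine .inr ⟨c / a, Set.ext fun p => ?_⟩
    simp only [Set.mem_ofPred_eq, zero_mul, add_zero, eq_div_iff ha, mul_comm a]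
  · refine .inl ⟨⟨-a / b, c / b⟩, Set.ext fun p => ?_⟩
    simp only [NonverticalLine.graph, NonverticalLine.eval, Set.mem_ofPred_eq]
    field_simp
    constructor <;> intro h <;> linear_combination h

lemma card_incidences_le_card_add_card_nonvertical_incidences {K : Type*} [Field K]
    (P : Finset (K × K)) {L : Finset (Set (K × K))} (hL : ∀ l ∈ L, IsAffineLineOver K l) :
    #{t ∈ P ×ˢ L | t.1 ∈ t.2} ≤ #P +
      #{t ∈ P ×ˢ L.preimage NonverticalLine.graph NonverticalLine.graph_injective.injOn |
        t.1 ∈ t.2.graph} := by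
  set M := L.preimage NonverticalLine.graph NonverticalLine.graph_injective.injOn
  set vertical := P.image fun p => (p, {q : K × K | q.1 = p.1})
  set nonvertical := {t ∈ P ×ˢ M | t.1 ∈ t.2.graph}.image fun t => (t.1, t.2.graph)
  have hcover : {t ∈ P ×ˢ L | t.1 ∈ t.2} ⊆ vertical ∪ nonvertical := by
    rintro ⟨p, l⟩ h
    obtain ⟨hpL, hpl⟩ := mem_filter.1 h
    obtain ⟨hp, hl⟩ := mem_product.1 hpL
    rcases (hL l hl).eq_graph_or_eq_vertical with ⟨ℓ, rfl⟩ | ⟨x, rfl⟩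
    · refine mem_union_right _ (mem_image.2 ⟨(p, ℓ), mem_filter.2 ⟨?_, hpl⟩, rfl⟩)
      exact mem_product.2 ⟨hp, mem_preimage.2 hl⟩
    · obtain rfl : p.1 = x := hpl
      exact mem_union_left _ (mem_image_of_mem _ hp)
  calc #{t ∈ P ×ˢ L | t.1 ∈ t.2} ≤ #(vertical ∪ nonvertical) := card_le_card hcover
    _ ≤ #vertical + #nonvertical := card_union_le _ _
    _ ≤ #P + #{t ∈ P ×ˢ M | t.1 ∈ t.2.graph} := add_le_add card_image_le card_image_le

theorem szemeredi_trotter {K : Type*} [Field K] [LinearOrder K] [IsStrictOrderedRing K]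
    (P : Finset (K × K)) {L : Finset (Set (K × K))} (hL : ∀ l ∈ L, IsAffineLineOver K l) :
    (#{t ∈ P ×ˢ L | t.1 ∈ t.2} : ℝ) ≤
      4 * (#P : ℝ) ^ (2 / 3 : ℝ) * (#L : ℝ) ^ (2 / 3 : ℝ) + 4 * #P + #L := by
  set M := L.preimage NonverticalLine.graph NonverticalLine.graph_injective.injOn
  have hsplit : (#{t ∈ P ×ˢ L | t.1 ∈ t.2} : ℝ) ≤ #P + #{t ∈ P ×ˢ M | t.1 ∈ t.2.graph} := by
    exact_mod_cast card_incidences_le_card_add_card_nonvertical_incidences P hL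
  have hM : (#M : ℝ) ≤ #L := by
    exact_mod_cast card_le_card_of_injOn _ (fun ℓ hℓ => mem_preimage.1 hℓ)
      NonverticalLine.graph_injective.injOn
  calc (#{t ∈ P ×ˢ L | t.1 ∈ t.2} : ℝ)
      ≤ #P + (4 * (#P : ℝ) ^ (2 / 3 : ℝ) * (#M : ℝ) ^ (2 / 3 : ℝ) + 3 * #P + #M) :=
        hsplit.trans (by gcongr; exact szemeredi_trotter_nonvertical P M)
    _ ≤ #P + (4 * (#P : ℝ) ^ (2 / 3 : ℝ) * (#L : ℝ) ^ (2 / 3 : ℝ) + 3 * #P + #L) := by gcongr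
    _ = 4 * (#P : ℝ) ^ (2 / 3 : ℝ) * (#L : ℝ) ^ (2 / 3 : ℝ) + 4 * #P + #L := by ring

/-! ### From cardinalities to weights -/

section Weights

variable {α β : Type*}

lemma pos_of_sum_pos_of_forall_le {R : Type*} [AddCommMonoid R] [LinearOrder R]
    [IsOrderedAddMonoid R] {P : Finset α} {w : α → R} {m : R} (hwm : ∀ p ∈ P, w p ≤ m)
    (hW : 0 < ∑ p ∈ P, w p) : 0 < m := by
  by_contra! hm
  exact hW.not_ge (sum_nonpos fun p hp => (hwm p hp).trans hm)

lemma sum_mul_le_of_forall_subset_sum_le_linear {R : Type*} [CommRing R] [LinearOrder R]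
    [IsStrictOrderedRing R] {P : Finset α} {w g : α → R} {A B m : R}
    (hw : ∀ p ∈ P, 0 ≤ w p) (hwm : ∀ p ∈ P, w p ≤ m) (hm : 0 ≤ m)
    (hg : ∀ S ⊆ P, ∑ p ∈ S, g p ≤ A * #S + B) :
    ∑ p ∈ P, w p * g p ≤ A * ∑ p ∈ P, w p + B * m := by
  have hexcess : ∑ p ∈ P with A < g p, (g p - A) ≤ B := by
    rw [sum_sub_distrib, sum_const, nsmul_eq_mul]
    linarith [hg _ (filter_subset (fun p => A < g p) P)]
  -- Where the excess `g p - A` is positive the weight is replaced by `m`, elsewhere by `0`.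
  have hterm : ∀ p ∈ P, w p * (g p - A) ≤ if A < g p then m * (g p - A) else 0 := by
    intro p hp
    split_ifs with hgp
    · exact mul_le_mul_of_nonneg_right (hwm p hp) (sub_nonneg.2 hgp.le)
    · exact mul_nonpos_of_nonneg_of_nonpos (hw p hp) (sub_nonpos.2 (not_lt.1 hgp))
  calc ∑ p ∈ P, w p * g p
      = A * ∑ p ∈ P, w p + ∑ p ∈ P, w p * (g p - A) := by
        simp only [mul_sub, sum_sub_distrib, ← sum_mul]
        ring
    _ ≤ A * ∑ p ∈ P, w p + ∑ p ∈ P with A < g p, m * (g p - A) := by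
        rw [sum_filter]
        gcongr with p hp
        exact hterm p hp
    _ ≤ A * ∑ p ∈ P, w p + B * m := by
        rw [← mul_sum, mul_comm B]
        gcongr

lemma rpow_le_tangent {x τ a : ℝ} (hx : 0 ≤ x) (hτ : 0 < τ) (ha₀ : 0 ≤ a) (ha₁ : a ≤ 1) :
    x ^ a ≤ τ ^ (a - 1) * (a * x + (1 - a) * τ) := by
  have hamgm := Real.geom_mean_le_arith_mean2_weighted ha₀ (sub_nonneg.2 ha₁) hx hτ.le
    (add_sub_cancel a 1)
  calc x ^ a = τ ^ (a - 1) * (x ^ a * τ ^ (1 - a)) := by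
        rw [mul_left_comm, ← Real.rpow_add hτ, sub_add_sub_cancel, sub_self, Real.rpow_zero,
          mul_one]
    _ ≤ τ ^ (a - 1) * (a * x + (1 - a) * τ) := by gcongr

lemma div_rpow_sub_one_mul {W m : ℝ} (hW : 0 < W) (hm : 0 < m) (a : ℝ) :
    (W / m) ^ (a - 1) * W = m ^ (1 - a) * W ^ a := by
  rw [Real.div_rpow hW.le hm.le, Real.rpow_sub_one hW.ne', ← neg_sub a 1, Real.rpow_neg hm.le]
  field_simp

/-- The power `#S ^ a` is replaced by its tangent at `#S = W / m`, where `W` is the total weight: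
this is the number of points carrying the total weight `W` when each has the maximal weight. -/
lemma sum_mul_le_of_forall_subset_sum_le_rpow {P : Finset α} {w g : α → ℝ} {A B D a m : ℝ}
    (hw : ∀ p ∈ P, 0 ≤ w p) (hwm : ∀ p ∈ P, w p ≤ m) (hW : 0 < ∑ p ∈ P, w p)
    (hA : 0 ≤ A) (ha₀ : 0 ≤ a) (ha₁ : a ≤ 1)
    (hg : ∀ S ⊆ P, ∑ p ∈ S, g p ≤ A * (#S : ℝ) ^ a + B * #S + D) :
    ∑ p ∈ P, w p * g p ≤
      A * (m ^ (1 - a) * (∑ p ∈ P, w p) ^ a) + B * ∑ p ∈ P, w p + D * m := by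
  set W := ∑ p ∈ P, w p
  have hm : 0 < m := pos_of_sum_pos_of_forall_le hwm hW
  set τ := W / m
  have hτ : 0 < τ := div_pos hW hm
  have hτm : τ * m = W := div_mul_cancel₀ W hm.ne'
  have hlinear : ∀ S ⊆ P, ∑ p ∈ S, g p ≤
      (A * τ ^ (a - 1) * a + B) * #S + (A * τ ^ (a - 1) * (1 - a) * τ + D) := by
    intro S hS
    have htangent := mul_le_mul_of_nonneg_left
      (rpow_le_tangent (Nat.cast_nonneg #S) hτ ha₀ ha₁) hA
    linarith [hg S hS]
  calc ∑ p ∈ P, w p * g p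
      ≤ (A * τ ^ (a - 1) * a + B) * W + (A * τ ^ (a - 1) * (1 - a) * τ + D) * m :=
        sum_mul_le_of_forall_subset_sum_le_linear hw hwm hm.le hlinear
    _ = A * (τ ^ (a - 1) * W) + B * W + D * m := by
        linear_combination A * τ ^ (a - 1) * (1 - a) * hτm
    _ = A * (m ^ (1 - a) * W ^ a) + B * W + D * m := by rw [div_rpow_sub_one_mul hW hm]

lemma sum_card_filter_eq_card_filter_product (S : Finset α) (T : Finset β) (r : α → β → Prop) :
    ∑ p ∈ S, #{l ∈ T | r p l} = #{t ∈ S ×ˢ T | r t.1 t.2} := by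
  simp only [card_filter, sum_product]

lemma sum_sum_filter_eq_sum_mul_card_filter {R : Type*} [CommSemiring R] (P : Finset α)
    (T : Finset β) (r : α → β → Prop) (w : α → R) :
    ∑ l ∈ T, ∑ p ∈ P with r p l, w p = ∑ p ∈ P, w p * #{l ∈ T | r p l} := by
  simp only [sum_filter]
  rw [sum_comm]
  simp only [← sum_filter, sum_const, nsmul_eq_mul, mul_comm]

lemma sum_filter_product_mul_eq_sum_mul_sum_filter {R : Type*} [CommSemiring R] (P : Finset α)
    (L : Finset β) (r : α → β → Prop) (w : α → R) (v : β → R) :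
    ∑ t ∈ P ×ˢ L with r t.1 t.2, w t.1 * v t.2 = ∑ l ∈ L, v l * ∑ p ∈ P with r p l, w p := by
  simp only [sum_filter, sum_product_right, mul_sum, mul_ite, mul_zero, mul_comm]

/-- The weights are introduced one side at a time, since a weighted incidence count is linear in the
weights of either side. -/
theorem sum_filter_product_mul_le_of_forall_card_le {P : Finset α} {L : Finset β}
    {r : α → β → Prop} {w : α → ℝ} {v : β → ℝ} {A B C a b m n : ℝ}
    (hw : ∀ p ∈ P, 0 ≤ w p) (hwm : ∀ p ∈ P, w p ≤ m) (hW : 0 < ∑ p ∈ P, w p)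
    (hv : ∀ l ∈ L, 0 ≤ v l) (hvn : ∀ l ∈ L, v l ≤ n) (hV : 0 < ∑ l ∈ L, v l)
    (hA : 0 ≤ A) (ha₀ : 0 ≤ a) (ha₁ : a ≤ 1) (hb₀ : 0 ≤ b) (hb₁ : b ≤ 1)
    (hcard : ∀ S ⊆ P, ∀ T ⊆ L, (#{t ∈ S ×ˢ T | r t.1 t.2} : ℝ) ≤
      A * (#S : ℝ) ^ a * (#T : ℝ) ^ b + B * #S + C * #T) :
    ∑ t ∈ P ×ˢ L with r t.1 t.2, w t.1 * v t.2 ≤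
      A * (m ^ (1 - a) * (∑ p ∈ P, w p) ^ a) * (n ^ (1 - b) * (∑ l ∈ L, v l) ^ b)
        + B * (∑ p ∈ P, w p) * n + C * m * ∑ l ∈ L, v l := by
  set W := ∑ p ∈ P, w p
  have hm : 0 < m := pos_of_sum_pos_of_forall_le hwm hW
  have hpoints : ∀ T ⊆ L, ∑ l ∈ T, ∑ p ∈ P with r p l, w p ≤
      A * (m ^ (1 - a) * W ^ a) * (#T : ℝ) ^ b + C * m * #T + B * W := by
    intro T hT
    have hbound := sum_mul_le_of_forall_subset_sum_le_rpow
      (g := fun p => (#{l ∈ T | r p l} : ℝ)) (A := A * (#T : ℝ) ^ b) (B := B) (D := C * #T)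
      hw hwm hW (by positivity) ha₀ ha₁ fun S hS => by
        rw [← Nat.cast_sum, sum_card_filter_eq_card_filter_product]
        linarith [hcard S hS T hT]
    rw [sum_sum_filter_eq_sum_mul_card_filter]
    linarith
  rw [sum_filter_product_mul_eq_sum_mul_sum_filter]
  linarith [sum_mul_le_of_forall_subset_sum_le_rpow hv hvn hV (by positivity) hb₀ hb₁ hpoints]

end Weights

theorem stmt_6_general {K : Type*} [Field K] [LinearOrder K] [IsStrictOrderedRing K]
    (P : Finset (K × K)) (L : Finset (Set (K × K))) (hP : P.Nonempty) (hL : L.Nonempty)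
    (wp : K × K → ℝ) (wl : Set (K × K) → ℝ) (hline : ∀ l ∈ L, IsAffineLineOver K l)
    (hwp : ∀ p ∈ P, 0 < wp p) (hwl : ∀ l ∈ L, 0 < wl l) :
    ∑ pl ∈ P ×ˢ L with pl.1 ∈ pl.2, wp pl.1 * wl pl.2 ≤
      4 * ((P.sup' hP wp * L.sup' hL wl) ^ ((1 : ℝ) / 3)
          * ((∑ p ∈ P, wp p) * ∑ l ∈ L, wl l) ^ ((2 : ℝ) / 3)
        + P.sup' hP wp * ∑ l ∈ L, wl l + L.sup' hL wl * ∑ p ∈ P, wp p) := by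
  have hWP : 0 < ∑ p ∈ P, wp p := sum_pos hwp hP
  have hWL : 0 < ∑ l ∈ L, wl l := sum_pos hwl hL
  have hmP : 0 < P.sup' hP wp := pos_of_sum_pos_of_forall_le (fun p hp => le_sup' wp hp) hWP
  have hmL : 0 < L.sup' hL wl := pos_of_sum_pos_of_forall_le (fun l hl => le_sup' wl hl) hWL
  have hweighted := sum_filter_product_mul_le_of_forall_card_le (r := (· ∈ ·))
    (A := 4) (B := 4) (C := 1) (a := 2 / 3) (b := 2 / 3) (m := P.sup' hP wp) (n := L.sup' hL wl)
    (fun p hp => (hwp p hp).le) (fun p hp => le_sup' wp hp) hWP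
    (fun l hl => (hwl l hl).le) (fun l hl => le_sup' wl hl) hWL
    (by norm_num) (by norm_num) (by norm_num) (by norm_num) (by norm_num)
    fun S _ T hT => by
      simpa only [one_mul] using szemeredi_trotter S fun l hl => hline l (hT hl)
  rw [show (1 : ℝ) - 2 / 3 = 1 / 3 by norm_num] at hweighted
  rw [Real.mul_rpow hmP.le hmL.le, Real.mul_rpow hWP.le hWL.le]
  linarith [mul_pos hmP hWL]

theorem stmt_6 :
    ∃ C : ℝ, 0 < C ∧
      ∀ (P : Finset (ℝ × ℝ)) (L : Finset (Set (ℝ × ℝ)))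
        (hP : P.Nonempty) (hL : L.Nonempty)
        (wp : (ℝ × ℝ) → ℝ) (wl : Set (ℝ × ℝ) → ℝ),
        (∀ l ∈ L, IsAffineLine l) →
        (∀ p ∈ P, 0 < wp p) → (∀ l ∈ L, 0 < wl l) →
        (∑ pl ∈ (P ×ˢ L).filter fun pl => pl.1 ∈ pl.2, wp pl.1 * wl pl.2)
          ≤ C * (((P.sup' hP wp) * (L.sup' hL wl)) ^ ((1 : ℝ) / 3)
                  * ((∑ p ∈ P, wp p) * (∑ l ∈ L, wl l)) ^ ((2 : ℝ) / 3)
              + (P.sup' hP wp) * (∑ l ∈ L, wl l)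
              + (L.sup' hL wl) * (∑ p ∈ P, wp p)) :=
  ⟨4, by norm_num, stmt_6_general⟩
end

section
/- (Solymosi–Tardos cross-ratio theorem.) There exists an absolute constant c > 0 such that for every finite set A ⊆ ℝ with |A| ≥ 4, the set R(A) of cross-ratios satisfies |R(A)| ≥ c·|A|². -/
open Finset
open scoped Classical

/-- The set of cross-ratios of quadruples of pairwise distinct elements of `A`. -/
noncomputable def crossRatioSet (A : Finset ℝ) : Finset ℝ :=
  ((A ×ˢ A ×ˢ A ×ˢ A).filter fun x =>
      x.1 ≠ x.2.1 ∧ x.1 ≠ x.2.2.1 ∧ x.1 ≠ x.2.2.2 ∧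
      x.2.1 ≠ x.2.2.1 ∧ x.2.1 ≠ x.2.2.2 ∧ x.2.2.1 ≠ x.2.2.2).image
    fun x => ((x.1 - x.2.1) * (x.2.2.1 - x.2.2.2)) / ((x.1 - x.2.2.1) * (x.2.1 - x.2.2.2))

/-!
By Cauchy–Schwarz it suffices to bound the number of pairs of quadruples with the same cross-ratio
by `O(n⁶)`, where `n = |A|`. Two quadruples have the same cross-ratio iff a Möbius map takes one to
the other, so these pairs are counted by `∑ k⁴`, summed over the traces on `A × A` of graphs of
Möbius maps, `k` being the size of the trace.

Cut `A` into blocks of `w` consecutive elements and `A × A` into the corresponding cells. Such a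
graph consists of two monotone branches, so it meets only `O(n / w)` cells, and if `w` is a large
multiple of `n / k` at least `k / 2` triples of its points lie in a common cell. Since three points
determine a Möbius map, no triple is counted for two different maps, and there are at most `n² w⁴`
of them altogether. Now weight the scale `w` by `w⁻⁴` and sum over all scales: the scales of order
`n / k` alone give each trace a contribution of order `k / w³ ≈ k⁴ / n³`, while the total is at most
`n³`, whence `∑ k⁴ = O(n⁶)`.
-/

/-! ### Collisions and monochromatic triples -/

section Coloring

variable {α β : Type*} [DecidableEq β]

/-- The ordered triples of distinct points of `G` on which the coloring `f` is constant. -/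
noncomputable def monochromaticTriples (f : α → β) (G : Finset α) : Finset (α × α × α) :=
  {t ∈ G ×ˢ G ×ˢ G | (t.1 ≠ t.2.1 ∧ t.1 ≠ t.2.2 ∧ t.2.1 ≠ t.2.2) ∧
    f t.2.1 = f t.1 ∧ f t.2.2 = f t.1}

lemma mem_monochromaticTriples {f : α → β} {G : Finset α} {p q r : α} :
    (p, q, r) ∈ monochromaticTriples f G ↔
      (p ∈ G ∧ q ∈ G ∧ r ∈ G) ∧ (p ≠ q ∧ p ≠ r ∧ q ≠ r) ∧ f q = f p ∧ f r = f p := by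
  simp only [monochromaticTriples, mem_filter, mem_product]

lemma card_sq_le_card_image_mul_card_collisions (f : α → β) (s : Finset α) :
    #s ^ 2 ≤ #(s.image f) * #{z ∈ s ×ˢ s | f z.1 = f z.2} := by
  have hcollisions : #{z ∈ s ×ˢ s | f z.1 = f z.2} =
      ∑ c ∈ s.image f, #{x ∈ s | f x = c} ^ 2 := by
    rw [card_eq_sum_card_fiberwise (f := fun z => f z.1) (t := s.image f)]
    · refine sum_congr rfl fun c _ => ?_
      rw [sq, ← card_product]
      congr 1
      ext z
      simp only [mem_filter, mem_product]
      grind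
    · intro z hz
      exact mem_image_of_mem f (mem_product.1 (mem_filter.1 hz).1).1
  rw [hcollisions, card_eq_sum_card_image f s]
  exact sq_sum_le_card_mul_sum_sq

lemma card_fiber_le_card_monochromaticTriples_add_two (f : α → β) (G : Finset α) (c : β) :
    #{x ∈ G | f x = c} ≤ #{t ∈ monochromaticTriples f G | f t.1 = c} + 2 := by
  rcases le_or_gt #{x ∈ G | f x = c} 1 with hsmall | hlarge
  · lia
  obtain ⟨p, hp, q, hq, hpq⟩ := one_lt_card.1 hlarge
  have hinj : #(({x ∈ G | f x = c}.erase p).erase q) ≤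
      #{t ∈ monochromaticTriples f G | f t.1 = c} := by
    refine card_le_card_of_injOn (fun r => (p, q, r)) (fun r hr => ?_) (fun r _ r' _ h => ?_)
    · simp only [coe_erase, Set.mem_sdiff, mem_coe, Set.mem_singleton_iff, mem_filter] at hp hq hr
      simp only [coe_filter, Set.mem_ofPred_eq, mem_monochromaticTriples]
      grind
    · simpa using h
  rw [card_erase_of_mem (mem_erase.2 ⟨hpq.symm, hq⟩), card_erase_of_mem hp] at hinj
  lia

lemma card_le_card_monochromaticTriples_add (f : α → β) (G : Finset α) :
    #G ≤ #(monochromaticTriples f G) + 2 * #(G.image f) := by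
  have hmaps : Set.MapsTo (fun t => f t.1) (monochromaticTriples f G : Set (α × α × α))
      (G.image f) := by
    rintro ⟨p, q, r⟩ ht
    exact mem_image_of_mem f (mem_monochromaticTriples.1 ht).1.1
  calc #G = ∑ c ∈ G.image f, #{x ∈ G | f x = c} := card_eq_sum_card_image f G
    _ ≤ ∑ c ∈ G.image f, (#{t ∈ monochromaticTriples f G | f t.1 = c} + 2) :=
        sum_le_sum fun c _ => card_fiber_le_card_monochromaticTriples_add_two f G c
    _ = #(monochromaticTriples f G) + 2 * #(G.image f) := by
        rw [sum_add_distrib, ← card_eq_sum_card_fiberwise hmaps, sum_const, smul_eq_mul, mul_comm 2]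

lemma card_monochromaticTriples_le (f : α → β) {X : Finset α} {m : ℕ}
    (hm : ∀ c, #{p ∈ X | f p = c} ≤ m) :
    #(monochromaticTriples f X) ≤ #X * m ^ 2 := by
  have hsub : monochromaticTriples f X ⊆
      X.biUnion fun p => {p} ×ˢ {q ∈ X | f q = f p} ×ˢ {r ∈ X | f r = f p} := by
    rintro ⟨p, q, r⟩ ht
    simp only [mem_monochromaticTriples] at ht
    simp only [mem_biUnion, mem_product, mem_singleton, mem_filter]
    exact ⟨p, ht.1.1, rfl, ⟨ht.1.2.1, ht.2.2.1⟩, ht.1.2.2, ht.2.2.2⟩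
  refine (card_le_card hsub).trans (card_biUnion_le_card_mul _ _ _ fun p _ => ?_)
  rw [card_product, card_product, card_singleton, one_mul, sq]
  exact Nat.mul_le_mul (hm _) (hm _)

variable [DecidableEq α] {F : Finset (Finset α)}

lemma pairwiseDisjoint_monochromaticTriples (f : α → β)
    (hF : (F : Set (Finset α)).Pairwise fun G H => #(G ∩ H) ≤ 2) :
    (F : Set (Finset α)).PairwiseDisjoint (monochromaticTriples f) := by
  intro G hG H hH hGH
  refine disjoint_left.2 ?_
  rintro ⟨p, q, r⟩ htG htH
  obtain ⟨⟨hpG, hqG, hrG⟩, ⟨hpq, hpr, hqr⟩, -⟩ := mem_monochromaticTriples.1 htG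
  obtain ⟨⟨hpH, hqH, hrH⟩, -⟩ := mem_monochromaticTriples.1 htH
  exact (hF hG hH hGH).not_gt <| two_lt_card.2 ⟨p, mem_inter.2 ⟨hpG, hpH⟩, q,
    mem_inter.2 ⟨hqG, hqH⟩, r, mem_inter.2 ⟨hrG, hrH⟩, hpq, hpr, hqr⟩

lemma sum_card_monochromaticTriples_le (f : α → β) {X : Finset α} (hFX : ∀ G ∈ F, G ⊆ X)
    (hF : (F : Set (Finset α)).Pairwise fun G H => #(G ∩ H) ≤ 2) {m : ℕ}
    (hm : ∀ c, #{p ∈ X | f p = c} ≤ m) :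
    ∑ G ∈ F, #(monochromaticTriples f G) ≤ #X * m ^ 2 := by
  rw [← card_biUnion (pairwiseDisjoint_monochromaticTriples f hF)]
  refine (card_le_card ?_).trans (card_monochromaticTriples_le f hm)
  refine biUnion_subset.2 fun G hG => ?_
  rintro ⟨p, q, r⟩ ht
  rw [mem_monochromaticTriples] at ht ⊢
  exact ⟨⟨hFX G hG ht.1.1, hFX G hG ht.1.2.1, hFX G hG ht.1.2.2⟩, ht.2⟩

end Coloring

lemma card_le_card_pow_three_of_pairwise_card_inter_le_two {α : Type*} [DecidableEq α]
    {X : Finset α} {F : Finset (Finset α)} (hFX : ∀ G ∈ F, G ⊆ X)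
    (hF : (F : Set (Finset α)).Pairwise fun G H => #(G ∩ H) ≤ 2) (hthree : ∀ G ∈ F, 3 ≤ #G) :
    #F ≤ #X ^ 3 := by
  have htriple : ∀ G ∈ F, 1 ≤ #(monochromaticTriples (fun _ => ()) G) := fun G hG => by
    have hcard := card_le_card_monochromaticTriples_add (fun _ => ()) G
    have himage : #(G.image fun _ => ()) ≤ 1 := card_le_one_of_subsingleton _
    have := hthree G hG
    lia
  calc #F = ∑ G ∈ F, 1 := card_eq_sum_ones F
    _ ≤ ∑ G ∈ F, #(monochromaticTriples (fun _ => ()) G) := sum_le_sum htriple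
    _ ≤ #X * #X ^ 2 :=
        sum_card_monochromaticTriples_le _ hFX hF fun _ => card_filter_le _ _
    _ = #X ^ 3 := by ring

/-! ### Monotone sets and grid cells -/

section MonotoneSet

variable {α β γ δ : Type*} [Preorder α] [Preorder β] [Preorder γ] [Preorder δ]

/-- A planar set that is weakly increasing or weakly decreasing, as a chain of one of the two
product orders; vertical and horizontal segments are allowed. -/
def IsMonotoneSet (S : Set (α × β)) : Prop :=
  IsChain (· ≤ ·) S ∨ IsChain (fun p q => p.1 ≤ q.1 ∧ q.2 ≤ p.2) S

/-- A planar set covered by two monotone sets, as the graph of a Möbius map is. -/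
def HasTwoMonotoneBranches (S : Set (α × β)) : Prop :=
  ∃ S₁ S₂, IsMonotoneSet S₁ ∧ IsMonotoneSet S₂ ∧ S ⊆ S₁ ∪ S₂

lemma IsMonotoneSet.mono {S T : Set (α × β)} (hT : IsMonotoneSet T) (hST : S ⊆ T) :
    IsMonotoneSet S :=
  hT.imp (IsChain.mono hST) (IsChain.mono hST)

lemma HasTwoMonotoneBranches.mono {S T : Set (α × β)} (hT : HasTwoMonotoneBranches T)
    (hST : S ⊆ T) : HasTwoMonotoneBranches S :=
  let ⟨T₁, T₂, hT₁, hT₂, hcover⟩ := hT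
  ⟨T₁, T₂, hT₁, hT₂, hST.trans hcover⟩

lemma IsMonotoneSet.image_prodMap {S : Set (α × β)} (hS : IsMonotoneSet S) {f : α → γ} {g : β → δ}
    (hf : Monotone f) (hg : Monotone g) : IsMonotoneSet (Prod.map f g '' S) :=
  hS.imp (IsChain.image_of_map_rel _ _ _ (fun _ _ h => ⟨hf h.1, hg h.2⟩))
    (IsChain.image_of_map_rel _ _ _ (fun _ _ h => ⟨hf h.1, hg h.2⟩))

lemma IsMonotoneSet.card_le {C : Finset (ℕ × ℕ)} (hC : IsMonotoneSet (C : Set (ℕ × ℕ))) {M : ℕ}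
    (hM : ∀ c ∈ C, c.1 ≤ M ∧ c.2 ≤ M) : #C ≤ 2 * M + 1 := by
  suffices ∃ h : ℕ × ℕ → ℕ, (∀ c ∈ C, h c < 2 * M + 1) ∧ Set.InjOn h C by
    obtain ⟨h, hlt, hinj⟩ := this
    simpa using card_le_card_of_injOn (t := range (2 * M + 1)) h
      (fun c hc => mem_range.2 (hlt c hc)) hinj
  rcases hC with hC | hC
  · refine ⟨fun c => c.1 + c.2, fun c hc => by grind, fun c hc d hd hcd => ?_⟩
    rcases eq_or_ne c d with rfl | hne
    · rfl
    rcases hC hc hd hne with hle | hle <;>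
      exact Prod.ext (by grind [Prod.le_def]) (by grind [Prod.le_def])
  · refine ⟨fun c => c.1 + (M - c.2), fun c hc => by grind, fun c hc d hd hcd => ?_⟩
    have := hM c hc
    have := hM d hd
    rcases eq_or_ne c d with rfl | hne
    · rfl
    rcases hC hc hd hne with hle | hle <;> exact Prod.ext (by grind) (by grind)

end MonotoneSet

section Grid

variable {α : Type*} [LinearOrder α]

/-- The number of elements of `A` below `a`; on `A` itself this is the index in increasing order,
starting from `0`. -/
def rankIn (A : Finset α) (a : α) : ℕ := #{x ∈ A | x < a}

/-- The index of the block containing `a` when `A` is cut into blocks of `w` consecutive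
elements. -/
def blockIndex (A : Finset α) (w : ℕ) (a : α) : ℕ := rankIn A a / w

/-- The pair of block indices of a point, locating its cell in the partition of `A × A` into cells
of `w × w` points. -/
def gridCell (A : Finset α) (w : ℕ) : α × α → ℕ × ℕ :=
  Prod.map (blockIndex A w) (blockIndex A w)

lemma rankIn_mono (A : Finset α) : Monotone (rankIn A) := fun _ _ hab =>
  card_le_card <| monotone_filter_right A fun _ _ hx => hx.trans_le hab

lemma rankIn_strictMonoOn (A : Finset α) : StrictMonoOn (rankIn A) A := fun a ha _ _ hab =>
  card_lt_card <| (ssubset_iff_of_subset <|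
    monotone_filter_right A fun _ _ hx => hx.trans hab).2 ⟨a, by simpa [hab] using ha, by simp⟩

lemma rankIn_le_card (A : Finset α) (a : α) : rankIn A a ≤ #A := card_filter_le _ _

lemma blockIndex_mono (A : Finset α) (w : ℕ) : Monotone (blockIndex A w) := fun _ _ hab =>
  Nat.div_le_div_right (rankIn_mono A hab)

lemma blockIndex_le (A : Finset α) (w : ℕ) (a : α) : blockIndex A w a ≤ #A / w :=
  Nat.div_le_div_right (rankIn_le_card A a)

lemma card_block_le (A : Finset α) {w : ℕ} (hw : 0 < w) (i : ℕ) :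
    #{a ∈ A | blockIndex A w a = i} ≤ w := by
  have hinj : #{a ∈ A | blockIndex A w a = i} ≤ #(Ico (i * w) (i * w + w)) := by
    refine card_le_card_of_injOn (rankIn A) (fun a ha => ?_)
      ((rankIn_strictMonoOn A).injOn.mono (filter_subset _ A))
    rw [← (mem_filter.1 ha).2, blockIndex, coe_Ico]
    exact ⟨Nat.div_mul_le_self _ w, Nat.lt_div_mul_add hw⟩
  simpa using hinj

lemma card_gridCell_fiber_le (A : Finset α) {w : ℕ} (hw : 0 < w) (c : ℕ × ℕ) :
    #{p ∈ A ×ˢ A | gridCell A w p = c} ≤ w ^ 2 := by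
  have hprod : {p ∈ A ×ˢ A | gridCell A w p = c} =
      {a ∈ A | blockIndex A w a = c.1} ×ˢ {a ∈ A | blockIndex A w a = c.2} := by
    ext p
    simp only [mem_filter, mem_product, gridCell, Prod.map, Prod.ext_iff]
    tauto
  rw [hprod, card_product, sq]
  exact Nat.mul_le_mul (card_block_le A hw _) (card_block_le A hw _)

lemma IsMonotoneSet.card_image_gridCell_le {G : Finset (α × α)}
    (hG : IsMonotoneSet (G : Set (α × α))) (A : Finset α) (w : ℕ) :
    #(G.image (gridCell A w)) ≤ 2 * (#A / w) + 1 := by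
  refine IsMonotoneSet.card_le ?_ ?_
  · rw [coe_image]
    exact hG.image_prodMap (blockIndex_mono A w) (blockIndex_mono A w)
  · refine forall_mem_image.2 fun p _ => ?_
    exact ⟨blockIndex_le A w p.1, blockIndex_le A w p.2⟩

lemma HasTwoMonotoneBranches.card_image_gridCell_le {G : Finset (α × α)}
    (hG : HasTwoMonotoneBranches (G : Set (α × α))) (A : Finset α) (w : ℕ) :
    #(G.image (gridCell A w)) ≤ 4 * (#A / w) + 2 := by
  obtain ⟨S₁, S₂, hS₁, hS₂, hcover⟩ := hG
  have hsplit : G = {p ∈ G | p ∈ S₁} ∪ {p ∈ G | p ∈ S₂} := by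
    rw [← filter_or]
    exact (filter_true_of_mem fun p hp => hcover hp).symm
  have hbranch : ∀ S : Set (α × α), IsMonotoneSet S →
      #({p ∈ G | p ∈ S}.image (gridCell A w)) ≤ 2 * (#A / w) + 1 := fun S hS =>
    (hS.mono fun _ hp => (mem_filter.1 hp).2).card_image_gridCell_le A w
  calc #(G.image (gridCell A w))
      ≤ #({p ∈ G | p ∈ S₁}.image (gridCell A w)) + #({p ∈ G | p ∈ S₂}.image (gridCell A w)) := by
        conv_lhs => rw [hsplit, image_union]
        exact card_union_le _ _
    _ ≤ 4 * (#A / w) + 2 := by linarith [hbranch S₁ hS₁, hbranch S₂ hS₂]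

/-! ### The fourth moment of a family of curves -/

/-- The number of triples of points of `G` in a common cell, summed over all scales `w`. The weight
`w⁻⁴` compensates for the `w⁴` choices of the second and third point once the first is fixed. -/
noncomputable def multiscaleTriples (A : Finset α) (G : Finset (α × α)) : ℝ :=
  ∑ w ∈ Icc 1 #A, (#(monochromaticTriples (gridCell A w) G) : ℝ) / (w : ℝ) ^ 4

lemma multiscaleTriples_nonneg (A : Finset α) (G : Finset (α × α)) : 0 ≤ multiscaleTriples A G :=
  sum_nonneg fun _ _ => by positivity

lemma HasTwoMonotoneBranches.card_le_two_mul_card_monochromaticTriples {A : Finset α}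
    {G : Finset (α × α)} (hG : HasTwoMonotoneBranches (G : Set (α × α))) {w : ℕ} (hw : 0 < w)
    (hwA : w ≤ #A) (hGw : 24 * #A ≤ #G * w) :
    #G ≤ 2 * #(monochromaticTriples (gridCell A w) G) := by
  have hcells := hG.card_image_gridCell_le A w
  have htriples := card_le_card_monochromaticTriples_add (gridCell A w) G
  have hquot_pos : 1 ≤ #A / w := (Nat.one_le_div_iff hw).2 hwA
  have hquot_le : 24 * (#A / w) ≤ #G := by
    refine Nat.le_of_mul_le_mul_right ?_ hw
    calc 24 * (#A / w) * w = 24 * (#A / w * w) := mul_assoc _ _ _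
      _ ≤ 24 * #A := by gcongr; exact Nat.div_mul_le_self _ _
      _ ≤ #G * w := hGw
  lia

lemma exists_scale {k n : ℕ} (hk : 64 ≤ k) (hkn : k ≤ n) :
    ∃ W, 24 * n ≤ k * W ∧ k * W ≤ 32 * n ∧ 2 * W ≤ n := by
  have hlower : 24 * n ≤ k * (24 * n / k + 1) := (Nat.lt_mul_div_succ _ (by lia)).le
  have hupper : k * (24 * n / k + 1) ≤ 32 * n := by
    have := Nat.mul_div_le (24 * n) k
    lia
  exact ⟨24 * n / k + 1, hlower, hupper, by nlinarith⟩

lemma div_le_sum_Ico_div_pow_four {τ : ℕ → ℝ} {t : ℝ} {W : ℕ} (hW : 0 < W) (ht : 0 ≤ t)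
    (hτ : ∀ w ∈ Ico W (2 * W), t ≤ τ w) :
    t / (16 * (W : ℝ) ^ 3) ≤ ∑ w ∈ Ico W (2 * W), τ w / (w : ℝ) ^ 4 := by
  have hterm : ∀ w ∈ Ico W (2 * W), t / (2 * (W : ℝ)) ^ 4 ≤ τ w / (w : ℝ) ^ 4 := by
    intro w hw
    have hwpos : (0 : ℝ) < w := by exact_mod_cast hW.trans_le (mem_Ico.1 hw).1
    have hwW : (w : ℝ) ≤ 2 * W := by exact_mod_cast (mem_Ico.1 hw).2.le
    have htτ := hτ w hw
    have hτpos := ht.trans htτ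
    gcongr
  calc t / (16 * (W : ℝ) ^ 3) = #(Ico W (2 * W)) • (t / (2 * (W : ℝ)) ^ 4) := by
        rw [Nat.card_Ico, two_mul W, Nat.add_sub_cancel, nsmul_eq_mul]
        field_simp
        norm_num
    _ ≤ ∑ w ∈ Ico W (2 * W), τ w / (w : ℝ) ^ 4 := card_nsmul_le_sum _ _ _ hterm

lemma HasTwoMonotoneBranches.card_pow_four_le {A : Finset α} {G : Finset (α × α)}
    (hG : HasTwoMonotoneBranches (G : Set (α × α))) (hlarge : 64 ≤ #G) (hcard : #G ≤ #A) :
    (#G : ℝ) ^ 4 ≤ 2 ^ 20 * (#A : ℝ) ^ 3 * multiscaleTriples A G := by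
  obtain ⟨W, hlower, hupper, hWA⟩ := exists_scale hlarge hcard
  have hW : 0 < W := Nat.pos_of_ne_zero (by rintro rfl; lia)
  have hhalf : ∀ w ∈ Ico W (2 * W),
      (#G : ℝ) / 2 ≤ #(monochromaticTriples (gridCell A w) G) := by
    intro w hw
    obtain ⟨hWw, hwW⟩ := mem_Ico.1 hw
    have htriples := hG.card_le_two_mul_card_monochromaticTriples (A := A) (hW.trans_le hWw)
      (by lia) (hlower.trans (Nat.mul_le_mul_left _ hWw))
    rw [div_le_iff₀' two_pos]
    exact_mod_cast htriples
  have hscales : (#G : ℝ) / 2 / (16 * (W : ℝ) ^ 3) ≤ multiscaleTriples A G :=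
    (div_le_sum_Ico_div_pow_four hW (by positivity) hhalf).trans <|
      sum_le_sum_of_subset_of_nonneg (fun w hw => by rw [mem_Ico] at hw; rw [mem_Icc]; lia)
        fun _ _ _ => by positivity
  have hcube : ((#G : ℝ) * W) ^ 3 ≤ (32 * #A) ^ 3 :=
    pow_le_pow_left₀ (by positivity) (by exact_mod_cast hupper) 3
  have hGle : (#G : ℝ) ≤ multiscaleTriples A G * (32 * (W : ℝ) ^ 3) := by
    rwa [div_div, div_le_iff₀ (by positivity), ← mul_assoc 2, show (2 : ℝ) * 16 = 32 by norm_num]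
      at hscales
  calc (#G : ℝ) ^ 4 = (#G : ℝ) ^ 3 * #G := by ring
    _ ≤ (#G : ℝ) ^ 3 * (multiscaleTriples A G * (32 * (W : ℝ) ^ 3)) := by gcongr
    _ = 32 * ((#G : ℝ) * W) ^ 3 * multiscaleTriples A G := by ring
    _ ≤ 32 * (32 * #A) ^ 3 * multiscaleTriples A G := by
        gcongr
        exact multiscaleTriples_nonneg A G
    _ = 2 ^ 20 * (#A : ℝ) ^ 3 * multiscaleTriples A G := by ring

variable {A : Finset α} {F : Finset (Finset (α × α))}

lemma sum_multiscaleTriples_le (hFA : ∀ G ∈ F, G ⊆ A ×ˢ A)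
    (hF : (F : Set (Finset (α × α))).Pairwise fun G H => #(G ∩ H) ≤ 2) :
    ∑ G ∈ F, multiscaleTriples A G ≤ (#A : ℝ) ^ 3 := by
  have hscale : ∀ w ∈ Icc 1 #A,
      ∑ G ∈ F, (#(monochromaticTriples (gridCell A w) G) : ℝ) / (w : ℝ) ^ 4 ≤ (#A : ℝ) ^ 2 := by
    intro w hw
    have hw : 0 < w := (mem_Icc.1 hw).1
    have htriples := sum_card_monochromaticTriples_le (gridCell A w) hFA hF
      (card_gridCell_fiber_le A hw)
    rw [card_product, ← sq, ← pow_mul] at htriples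
    rw [← sum_div, div_le_iff₀ (by positivity)]
    exact_mod_cast htriples
  calc ∑ G ∈ F, multiscaleTriples A G
      = ∑ w ∈ Icc 1 #A, ∑ G ∈ F,
          (#(monochromaticTriples (gridCell A w) G) : ℝ) / (w : ℝ) ^ 4 := sum_comm
    _ ≤ #(Icc 1 #A) • (#A : ℝ) ^ 2 := sum_le_card_nsmul _ _ _ hscale
    _ = (#A : ℝ) ^ 3 := by
        rw [Nat.card_Icc, Nat.add_sub_cancel, nsmul_eq_mul]
        ring

theorem sum_card_pow_four_le (hFA : ∀ G ∈ F, G ⊆ A ×ˢ A)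
    (hF : (F : Set (Finset (α × α))).Pairwise fun G H => #(G ∩ H) ≤ 2)
    (hbranches : ∀ G ∈ F, HasTwoMonotoneBranches (G : Set (α × α)))
    (hthree : ∀ G ∈ F, 3 ≤ #G) (hcard : ∀ G ∈ F, #G ≤ #A) :
    ∑ G ∈ F, #G ^ 4 ≤ 2 ^ 25 * #A ^ 6 := by
  have hterm : ∀ G ∈ F,
      (#G : ℝ) ^ 4 ≤ 2 ^ 24 + 2 ^ 20 * (#A : ℝ) ^ 3 * multiscaleTriples A G := by
    intro G hG
    have hnonneg := multiscaleTriples_nonneg A G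
    rcases le_or_gt 64 #G with hlarge | hsmall
    · linarith [(hbranches G hG).card_pow_four_le hlarge (hcard G hG)]
    · calc (#G : ℝ) ^ 4 ≤ 64 ^ 4 := by gcongr; exact_mod_cast hsmall.le
        _ = 2 ^ 24 := by norm_num
        _ ≤ _ := le_add_of_nonneg_right (by positivity)
  have hFcard : (#F : ℝ) ≤ (#A : ℝ) ^ 6 := by
    have := card_le_card_pow_three_of_pairwise_card_inter_le_two hFA hF hthree
    rw [card_product, ← sq, ← pow_mul] at this
    exact_mod_cast this
  have hreal : ∑ G ∈ F, (#G : ℝ) ^ 4 ≤ 2 ^ 25 * (#A : ℝ) ^ 6 := by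
    calc ∑ G ∈ F, (#G : ℝ) ^ 4
        ≤ ∑ G ∈ F, (2 ^ 24 + 2 ^ 20 * (#A : ℝ) ^ 3 * multiscaleTriples A G) := sum_le_sum hterm
      _ = #F * 2 ^ 24 + 2 ^ 20 * (#A : ℝ) ^ 3 * ∑ G ∈ F, multiscaleTriples A G := by
          rw [sum_add_distrib, ← mul_sum, sum_const, nsmul_eq_mul]
      _ ≤ (#A : ℝ) ^ 6 * 2 ^ 24 + 2 ^ 20 * (#A : ℝ) ^ 3 * (#A : ℝ) ^ 3 := by
          gcongr
          exact sum_multiscaleTriples_le hFA hF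
      _ = (2 ^ 24 + 2 ^ 20) * (#A : ℝ) ^ 6 := by ring
      _ ≤ 2 ^ 25 * (#A : ℝ) ^ 6 := by gcongr; norm_num
  exact_mod_cast hreal

end Grid

/-! ### Möbius curves -/

section Mobius

variable {K : Type*} [Field K]

/-- The plane curve `a x y + b x + c y + d = 0`. For `b c - a d ≠ 0` it is the graph, away from the
pole, of the Möbius map `x ↦ -(b x + d) / (a x + c)`. -/
def mobiusCurve (a b c d : K) : Set (K × K) :=
  {p | a * p.1 * p.2 + b * p.1 + c * p.2 + d = 0}

/-- The graph of a Möbius map, in the implicit form given by `mobiusCurve`. -/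
def IsMobiusCurve (C : Set (K × K)) : Prop :=
  ∃ a b c d : K, b * c - a * d ≠ 0 ∧ C = mobiusCurve a b c d

variable {a b c d : K} {p q : K × K}

lemma denom_ne_zero_of_mem_mobiusCurve (hdet : b * c - a * d ≠ 0) (hp : p ∈ mobiusCurve a b c d) :
    a * p.1 + c ≠ 0 := by
  rw [mobiusCurve, Set.mem_ofPred_eq] at hp
  intro hdenom
  have hnum : b * p.1 + d = 0 := by linear_combination hp - p.2 * hdenom
  exact hdet (by linear_combination b * hdenom - a * hnum)

lemma snd_sub_snd_mul_of_mem_mobiusCurve (hp : p ∈ mobiusCurve a b c d)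
    (hq : q ∈ mobiusCurve a b c d) :
    (p.2 - q.2) * ((a * p.1 + c) * (a * q.1 + c)) = -(b * c - a * d) * (p.1 - q.1) := by
  rw [mobiusCurve, Set.mem_ofPred_eq] at hp hq
  linear_combination (a * q.1 + c) * hp - (a * p.1 + c) * hq

lemma IsMobiusCurve.injOn_fst {C : Set (K × K)} (hC : IsMobiusCurve C) : Set.InjOn Prod.fst C := by
  obtain ⟨a, b, c, d, hdet, rfl⟩ := hC
  intro p hp q hq hpq
  have hsub := snd_sub_snd_mul_of_mem_mobiusCurve hp hq
  rw [hpq, sub_self, mul_zero, mul_eq_zero, sub_eq_zero] at hsub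
  have hdenom := denom_ne_zero_of_mem_mobiusCurve hdet hq
  exact Prod.ext hpq (hsub.resolve_right (mul_ne_zero hdenom hdenom))

lemma quadratic_eq_zero_of_three_roots {a b c x y z : K} (hxy : x ≠ y) (hxz : x ≠ z) (hyz : y ≠ z)
    (hx : a * x ^ 2 + b * x + c = 0) (hy : a * y ^ 2 + b * y + c = 0)
    (hz : a * z ^ 2 + b * z + c = 0) (t : K) : a * t ^ 2 + b * t + c = 0 := by
  have hslope_xy : a * (x + y) + b = 0 :=
    mul_left_cancel₀ (sub_ne_zero.2 hxy) (by linear_combination hx - hy)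
  have hslope_xz : a * (x + z) + b = 0 :=
    mul_left_cancel₀ (sub_ne_zero.2 hxz) (by linear_combination hx - hz)
  have ha : a = 0 :=
    mul_left_cancel₀ (sub_ne_zero.2 hyz) (by linear_combination hslope_xy - hslope_xz)
  linear_combination hx + (t - x) * hslope_xy + (t - x) * (t - y) * ha

lemma IsMobiusCurve.subset_of_three_mem {C D : Set (K × K)} (hC : IsMobiusCurve C)
    (hD : IsMobiusCurve D) {p q r : K × K} (hpq : p ≠ q) (hpr : p ≠ r) (hqr : q ≠ r)
    (hp : p ∈ C ∩ D) (hq : q ∈ C ∩ D) (hr : r ∈ C ∩ D) : C ⊆ D := by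
  have hinj := hC.injOn_fst
  have hpq₁ := hinj.ne hp.1 hq.1 hpq
  have hpr₁ := hinj.ne hp.1 hr.1 hpr
  have hqr₁ := hinj.ne hq.1 hr.1 hqr
  obtain ⟨a', b', c', d', -, rfl⟩ := hD
  obtain ⟨a, b, c, d, hdet, rfl⟩ := hC
  -- Eliminating the second coordinate from the two equations leaves a quadratic in the first.
  have hresultant : ∀ s ∈ mobiusCurve a b c d ∩ mobiusCurve a' b' c' d',
      (b * a' - b' * a) * s.1 ^ 2 + (b * c' + d * a' - b' * c - d' * a) * s.1 +
        (d * c' - d' * c) = 0 := by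
    rintro s ⟨hs, hs'⟩
    rw [mobiusCurve, Set.mem_ofPred_eq] at hs hs'
    linear_combination (a' * s.1 + c') * hs - (a * s.1 + c) * hs'
  intro s hs
  have hzero := quadratic_eq_zero_of_three_roots hpq₁ hpr₁ hqr₁ (hresultant p hp)
    (hresultant q hq) (hresultant r hr) s.1
  refine mul_left_cancel₀ (denom_ne_zero_of_mem_mobiusCurve hdet hs) ?_
  rw [mobiusCurve, Set.mem_ofPred_eq] at hs
  linear_combination (a' * s.1 + c') * hs - hzero

lemma IsMobiusCurve.eq_of_three_mem {C D : Set (K × K)} (hC : IsMobiusCurve C)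
    (hD : IsMobiusCurve D) {p q r : K × K} (hpq : p ≠ q) (hpr : p ≠ r) (hqr : q ≠ r)
    (hp : p ∈ C ∩ D) (hq : q ∈ C ∩ D) (hr : r ∈ C ∩ D) : C = D :=
  (hC.subset_of_three_mem hD hpq hpr hqr hp hq hr).antisymm
    (hD.subset_of_three_mem hC hpq hpr hqr hp.symm hq.symm hr.symm)

/-- The traces on `A × A` of the Möbius curves that meet it in at least three points. -/
noncomputable def richMobiusTraces (A : Finset K) : Finset (Finset (K × K)) :=
  {G ∈ (A ×ˢ A).powerset | 3 ≤ #G ∧ ∃ C, IsMobiusCurve C ∧ G = {p ∈ A ×ˢ A | p ∈ C}}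

lemma mem_richMobiusTraces {A : Finset K} {G : Finset (K × K)} :
    G ∈ richMobiusTraces A ↔ 3 ≤ #G ∧ ∃ C, IsMobiusCurve C ∧ G = {p ∈ A ×ˢ A | p ∈ C} := by
  rw [richMobiusTraces, mem_filter, mem_powerset, and_iff_right_iff_imp]
  rintro ⟨-, C, -, rfl⟩
  exact filter_subset _ _

lemma pairwise_card_inter_richMobiusTraces_le_two [DecidableEq K] (A : Finset K) :
    (richMobiusTraces A : Set (Finset (K × K))).Pairwise fun G H => #(G ∩ H) ≤ 2 := by
  intro G hG H hH hGH
  obtain ⟨-, C, hC, rfl⟩ := mem_richMobiusTraces.1 hG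
  obtain ⟨-, D, hD, rfl⟩ := mem_richMobiusTraces.1 hH
  refine le_of_not_gt fun hthree => hGH ?_
  obtain ⟨p, hp, q, hq, r, hr, hpq, hpr, hqr⟩ := two_lt_card.1 hthree
  have hmem : ∀ s ∈ {p ∈ A ×ˢ A | p ∈ C} ∩ {p ∈ A ×ˢ A | p ∈ D}, s ∈ C ∩ D := fun s hs =>
    ⟨(mem_filter.1 (mem_inter.1 hs).1).2, (mem_filter.1 (mem_inter.1 hs).2).2⟩
  rw [hC.eq_of_three_mem hD hpq hpr hqr (hmem p hp) (hmem q hq) (hmem r hr)]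

variable [LinearOrder K] [IsStrictOrderedRing K]

lemma isMonotoneSet_of_subset_mobiusCurve {S : Set (K × K)} (hS : S ⊆ mobiusCurve a b c d)
    (hdenom : ∀ p ∈ S, ∀ q ∈ S, 0 < (a * p.1 + c) * (a * q.1 + c)) : IsMonotoneSet S := by
  rcases le_total (b * c - a * d) 0 with hdet | hdet
  · have hincr : ∀ p ∈ S, ∀ q ∈ S, p.1 ≤ q.1 → p ≤ q := fun p hp q hq hpq => by
      refine ⟨hpq, sub_nonpos.1 (nonpos_of_mul_nonpos_left ?_ (hdenom p hp q hq))⟩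
      rw [snd_sub_snd_mul_of_mem_mobiusCurve (hS hp) (hS hq)]
      exact mul_nonpos_of_nonneg_of_nonpos (neg_nonneg.2 hdet) (sub_nonpos.2 hpq)
    exact .inl fun p hp q hq _ => (le_total p.1 q.1).imp (hincr p hp q hq) (hincr q hq p hp)
  · have hdecr : ∀ p ∈ S, ∀ q ∈ S, p.1 ≤ q.1 → p.1 ≤ q.1 ∧ q.2 ≤ p.2 := fun p hp q hq hpq => by
      refine ⟨hpq, sub_nonneg.1 (nonneg_of_mul_nonneg_left ?_ (hdenom p hp q hq))⟩
      rw [snd_sub_snd_mul_of_mem_mobiusCurve (hS hp) (hS hq)]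
      exact mul_nonneg_of_nonpos_of_nonpos (neg_nonpos.2 hdet) (sub_nonpos.2 hpq)
    exact .inr fun p hp q hq _ => (le_total p.1 q.1).imp (hdecr p hp q hq) (hdecr q hq p hp)

lemma IsMobiusCurve.hasTwoMonotoneBranches {C : Set (K × K)} (hC : IsMobiusCurve C) :
    HasTwoMonotoneBranches C := by
  obtain ⟨a, b, c, d, hdet, rfl⟩ := hC
  refine ⟨{p ∈ mobiusCurve a b c d | 0 < a * p.1 + c}, {p ∈ mobiusCurve a b c d | a * p.1 + c < 0},
    ?_, ?_, fun p hp => ?_⟩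
  · exact isMonotoneSet_of_subset_mobiusCurve (Set.sep_subset _ _)
      fun p hp q hq => mul_pos hp.2 hq.2
  · exact isMonotoneSet_of_subset_mobiusCurve (Set.sep_subset _ _)
      fun p hp q hq => mul_pos_of_neg_of_neg hp.2 hq.2
  · exact (denom_ne_zero_of_mem_mobiusCurve hdet hp).gt_or_lt.imp (⟨hp, ·⟩) (⟨hp, ·⟩)

lemma sum_card_pow_four_richMobiusTraces_le (A : Finset K) :
    ∑ G ∈ richMobiusTraces A, #G ^ 4 ≤ 2 ^ 25 * #A ^ 6 := by
  refine sum_card_pow_four_le (fun G hG => ?_) (pairwise_card_inter_richMobiusTraces_le_two A)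
    (fun G hG => ?_) (fun G hG => (mem_richMobiusTraces.1 hG).1) (fun G hG => ?_) <;>
  obtain ⟨-, C, hC, rfl⟩ := mem_richMobiusTraces.1 hG
  · exact filter_subset _ _
  · exact hC.hasTwoMonotoneBranches.mono fun _ hp => (mem_filter.1 hp).2
  · exact card_le_card_of_injOn Prod.fst (fun _ hp => (mem_product.1 (mem_filter.1 hp).1).1)
      (hC.injOn_fst.mono fun _ hp => (mem_filter.1 hp).2)

end Mobius

/-! ### Cross-ratios -/

section Quadruples

variable {α : Type*} [DecidableEq α]

/-- The quadruples of pairwise distinct elements of `A`. -/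
def distinctQuadruples (A : Finset α) : Finset (α × α × α × α) :=
  (A ×ˢ A ×ˢ A ×ˢ A).filter fun x =>
    x.1 ≠ x.2.1 ∧ x.1 ≠ x.2.2.1 ∧ x.1 ≠ x.2.2.2 ∧
    x.2.1 ≠ x.2.2.1 ∧ x.2.1 ≠ x.2.2.2 ∧ x.2.2.1 ≠ x.2.2.2

lemma descFactorial_le_card_distinctQuadruples (A : Finset α) :
    (#A).descFactorial 4 ≤ #(distinctQuadruples A) := by
  have hcard : #(univ : Finset (Fin 4 ↪ A)) = (#A).descFactorial 4 := by
    simp [Fintype.card_embedding_eq]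
  rw [← hcard]
  refine card_le_card_of_injOn (fun e => ((e 0 : α), (e 1 : α), (e 2 : α), (e 3 : α))) ?_ ?_
  · intro e _
    have hne : ∀ i j, i ≠ j → (e i : α) ≠ e j := fun i j hij h =>
      hij (e.injective (Subtype.ext h))
    simp only [distinctQuadruples, coe_filter, mem_product, Set.mem_ofPred_eq]
    refine ⟨⟨(e 0).2, (e 1).2, (e 2).2, (e 3).2⟩, ?_, ?_, ?_, ?_, ?_, ?_⟩ <;>
      exact hne _ _ (by decide)
  · intro e _ e' _ h
    simp only [Prod.mk.injEq] at h
    ext i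
    fin_cases i
    exacts [h.1, h.2.1, h.2.2.1, h.2.2.2]

lemma card_pow_four_le_card_distinctQuadruples {A : Finset α} (hA : 4 ≤ #A) :
    #A ^ 4 ≤ 2 ^ 8 * #(distinctQuadruples A) :=
  calc #A ^ 4 ≤ (4 * (#A + 1 - 4)) ^ 4 := by gcongr; lia
    _ = 2 ^ 8 * (#A + 1 - 4) ^ 4 := by ring
    _ ≤ 2 ^ 8 * (#A).descFactorial 4 := by gcongr; exact Nat.pow_sub_le_descFactorial _ _
    _ ≤ 2 ^ 8 * #(distinctQuadruples A) := by
        gcongr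
        exact descFactorial_le_card_distinctQuadruples A

end Quadruples

section CrossRatio

variable {K : Type*} [Field K]

/-- The cross-ratio `r(a, b, c, d)`, equal to `0` by convention if `a = c` or `b = d`. -/
def crossRatio (x : K × K × K × K) : K :=
  ((x.1 - x.2.1) * (x.2.2.1 - x.2.2.2)) / ((x.1 - x.2.2.1) * (x.2.1 - x.2.2.2))

lemma exists_isMobiusCurve_of_crossRatio_eq {a b c d a' b' c' d' : K}
    (hab : a ≠ b) (hac : a ≠ c) (hbc : b ≠ c) (hbd : b ≠ d)
    (hab' : a' ≠ b') (hac' : a' ≠ c') (hbc' : b' ≠ c') (hbd' : b' ≠ d')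
    (h : crossRatio (a, b, c, d) = crossRatio (a', b', c', d')) :
    ∃ C, IsMobiusCurve C ∧ (a, a') ∈ C ∧ (b, b') ∈ C ∧ (c, c') ∈ C ∧ (d, d') ∈ C := by
  rw [← sub_ne_zero] at hab hac hbc hbd hab' hac' hbc' hbd'
  rw [crossRatio, crossRatio, div_eq_div_iff (mul_ne_zero hac hbd) (mul_ne_zero hac' hbd')] at h
  -- Every curve `u (x - c) (y - b') = v (x - b) (y - c')` contains the second and third
  -- of the four points; the ratio `u : v` is chosen so that it also contains the first.
  obtain ⟨u, hu⟩ : ∃ u, u = (a - b) * (a' - c') := ⟨_, rfl⟩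
  obtain ⟨v, hv⟩ : ∃ v, v = (a' - b') * (a - c) := ⟨_, rfl⟩
  have hdet : (-u * b' + v * c') * (-u * c + v * b) - (u - v) * (u * c * b' - v * c' * b) ≠ 0 := by
    have hfactor : (-u * b' + v * c') * (-u * c + v * b) - (u - v) * (u * c * b' - v * c' * b) =
        -(u * v * ((b - c) * (b' - c'))) := by ring
    rw [hfactor, hu, hv]
    exact neg_ne_zero.2 (mul_ne_zero (mul_ne_zero (mul_ne_zero hab hac') (mul_ne_zero hab' hac))
      (mul_ne_zero hbc hbc'))
  refine ⟨_, ⟨u - v, -u * b' + v * c', -u * c + v * b, u * c * b' - v * c' * b, hdet, rfl⟩,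
    ?_, ?_, ?_, ?_⟩ <;> rw [mobiusCurve, Set.mem_ofPred_eq]
  · rw [hu, hv]; ring
  · ring
  · ring
  · rw [hu, hv]; linear_combination h

variable [DecidableEq K]

/-- The set of cross-ratios `R(A)`, over an arbitrary field in place of `ℝ`. -/
def crossRatios (A : Finset K) : Finset K := (distinctQuadruples A).image crossRatio

lemma exists_richMobiusTrace_of_crossRatio_eq {A : Finset K} {x y : K × K × K × K}
    (hx : x ∈ distinctQuadruples A) (hy : y ∈ distinctQuadruples A)
    (h : crossRatio x = crossRatio y) :
    ∃ G ∈ richMobiusTraces A, (x.1, y.1) ∈ G ∧ (x.2.1, y.2.1) ∈ G ∧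
      (x.2.2.1, y.2.2.1) ∈ G ∧ (x.2.2.2, y.2.2.2) ∈ G := by
  obtain ⟨a, b, c, d⟩ := x
  obtain ⟨a', b', c', d'⟩ := y
  simp only [distinctQuadruples, mem_filter, mem_product] at hx hy
  obtain ⟨⟨ha, hb, hc, hd⟩, hab, hac, -, hbc, hbd, -⟩ := hx
  obtain ⟨⟨ha', hb', hc', hd'⟩, hab', hac', -, hbc', hbd', -⟩ := hy
  obtain ⟨C, hC, haC, hbC, hcC, hdC⟩ :=
    exists_isMobiusCurve_of_crossRatio_eq hab hac hbc hbd hab' hac' hbc' hbd' h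
  have hmem : ∀ {s t}, s ∈ A → t ∈ A → (s, t) ∈ C → (s, t) ∈ {p ∈ A ×ˢ A | p ∈ C} :=
    fun hs ht hst => mem_filter.2 ⟨mk_mem_product hs ht, hst⟩
  refine ⟨{p ∈ A ×ˢ A | p ∈ C}, mem_richMobiusTraces.2 ⟨?_, C, hC, rfl⟩, hmem ha ha' haC,
    hmem hb hb' hbC, hmem hc hc' hcC, hmem hd hd' hdC⟩
  exact two_lt_card.2 ⟨_, hmem ha ha' haC, _, hmem hb hb' hbC, _, hmem hc hc' hcC,
    by simp [hab], by simp [hac], by simp [hbc]⟩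

lemma card_crossRatio_collisions_le (A : Finset K) :
    #{z ∈ distinctQuadruples A ×ˢ distinctQuadruples A | crossRatio z.1 = crossRatio z.2} ≤
      ∑ G ∈ richMobiusTraces A, #G ^ 4 := by
  have hinj : #{z ∈ distinctQuadruples A ×ˢ distinctQuadruples A |
        crossRatio z.1 = crossRatio z.2} ≤
      #((richMobiusTraces A).biUnion fun G => G ×ˢ G ×ˢ G ×ˢ G) := by
    refine card_le_card_of_injOn (fun z => ((z.1.1, z.2.1), (z.1.2.1, z.2.2.1),
      (z.1.2.2.1, z.2.2.2.1), (z.1.2.2.2, z.2.2.2.2))) (fun z hz => ?_) (fun z _ z' _ h => ?_)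
    · obtain ⟨hz, hcross⟩ := mem_filter.1 hz
      obtain ⟨hx, hy⟩ := mem_product.1 hz
      simpa only [coe_biUnion, Set.mem_iUnion, mem_coe, mem_product, exists_prop] using
        exists_richMobiusTrace_of_crossRatio_eq hx hy hcross
    · simp only [Prod.mk.injEq] at h
      simp only [Prod.ext_iff]
      tauto
  refine hinj.trans (card_biUnion_le.trans_eq (sum_congr rfl fun G _ => ?_))
  simp only [card_product]
  ring

end CrossRatio

theorem stmt_7_general {K : Type*} [Field K] [LinearOrder K] [IsStrictOrderedRing K]
    (A : Finset K) (hA : 4 ≤ #A) : #A ^ 2 ≤ 2 ^ 41 * #(crossRatios A) := by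
  have hpos : 0 < #A ^ 6 := pow_pos (by lia) 6
  refine Nat.le_of_mul_le_mul_right ?_ hpos
  calc #A ^ 2 * #A ^ 6 = (#A ^ 4) ^ 2 := by ring
    _ ≤ (2 ^ 8 * #(distinctQuadruples A)) ^ 2 := by
        gcongr
        exact card_pow_four_le_card_distinctQuadruples hA
    _ = 2 ^ 16 * #(distinctQuadruples A) ^ 2 := by ring
    _ ≤ 2 ^ 16 * (#(crossRatios A) * (2 ^ 25 * #A ^ 6)) := by
        gcongr
        refine (card_sq_le_card_image_mul_card_collisions crossRatio _).trans ?_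
        exact Nat.mul_le_mul_left _ <|
          (card_crossRatio_collisions_le A).trans (sum_card_pow_four_richMobiusTraces_le A)
    _ = 2 ^ 41 * #(crossRatios A) * #A ^ 6 := by ring

theorem stmt_7 :
    ∃ c : ℝ, 0 < c ∧
      ∀ A : Finset ℝ, 4 ≤ A.card →
        c * (A.card : ℝ) ^ 2 ≤ ((crossRatioSet A).card : ℝ) := by
  refine ⟨1 / 2 ^ 41, by positivity, fun A hA => ?_⟩
  rw [one_div, inv_mul_le_iff₀ (by positivity)]
  exact_mod_cast stmt_7_general A hA
end
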